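/- Ergodicity. Assume (H1)–(H4). For every L ∈ ℝ and p ∈ ℝ^N there exists a unique viscosity solution w ∈ C_b(ℝ⁺×ℝ^N) of ∂_τ w = I_s[w(τ,·)] + L − W'(w + p·y) + σ(τ,y) on ℝ⁺×ℝ^N with w(0,y)=0, and there exists a unique λ ∈ ℝ such that w(τ,y)/τ converges to λ as τ → +∞, locally uniformly in y. Writing λ = H̄(p,L), the function H̄ : ℝ^N×ℝ → ℝ is continuous and nondecreasing in L. -/

import Mathlib

open MeasureTheory Filter Metric Set RealInnerProductSpace

noncomputable section

/-- `ℝ^N` as a Euclidean space. -/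
abbrev EN (N : ℕ) := EuclideanSpace ℝ (Fin N)

/-- The singular kernel `g(z/|z|) |z|^{-N-2s}` of the anisotropic Lévy operator. -/
noncomputable def levyKernel (N : ℕ) (s : ℝ) (g : EN N → ℝ) (z : EN N) : ℝ :=
  g (‖z‖⁻¹ • z) * ‖z‖ ^ (-(N : ℝ) - 2 * s)

/-- `I^{1,r}[φ, x]`: integral over `|z| ≤ r` of the second order increment of `φ`. -/
noncomputable def levyI1 (N : ℕ) (s : ℝ) (g : EN N → ℝ) (φ : EN N → ℝ) (r : ℝ) (x : EN N) : ℝ :=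
  ∫ z in {z : EN N | ‖z‖ ≤ r}, (φ (x + z) - φ x - fderiv ℝ φ x z) * levyKernel N s g z

/-- `I^{2,r}[u, x]`: integral over `|z| > r` of the increment of `u`. -/
noncomputable def levyI2 (N : ℕ) (s : ℝ) (g : EN N → ℝ) (u : EN N → ℝ) (r : ℝ) (x : EN N) : ℝ :=
  ∫ z in {z : EN N | r < ‖z‖}, (u (x + z) - u x) * levyKernel N s g z

/-- The anisotropic Lévy operator `I_s` of order `2s`, defined as a principal value. -/
noncomputable def levyOp (N : ℕ) (s : ℝ) (g : EN N → ℝ) (φ : EN N → ℝ) (x : EN N) : ℝ :=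
  limUnder (nhdsWithin 0 (Ioi (0:ℝ)))
    (fun ρ => ∫ y in {y : EN N | ρ < ‖y‖}, (φ (x + y) - φ x) * levyKernel N s g y)

/-- (H1): `g` is continuous, positive on the sphere and even. -/
def H1 (N : ℕ) (g : EN N → ℝ) : Prop :=
  Continuous g ∧ (∀ z : EN N, ‖z‖ = 1 → 0 < g z) ∧ (∀ z : EN N, g (-z) = g z)

/-- (H2): `W ∈ C^{1,1}(ℝ)` and `W(v+1) = W(v)`. -/
def H2 (W : ℝ → ℝ) : Prop :=
  ContDiff ℝ 1 W ∧ (∃ K : NNReal, LipschitzWith K (deriv W)) ∧ ∀ v, W (v + 1) = W v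

/-- (H3): `σ ∈ C^{0,1}(ℝ⁺ × ℝ^N)`, 1-periodic in `t` and ℤ^N-periodic in `x`. -/
def H3 (N : ℕ) (σ : ℝ → EN N → ℝ) : Prop :=
  (∃ K : NNReal, LipschitzWith K (fun q : ℝ × EN N => σ q.1 q.2)) ∧
  (∀ t x, σ (t + 1) x = σ t x) ∧
  (∀ (k : Fin N → ℤ) (t : ℝ) (x : EN N), σ t (x + (WithLp.equiv 2 (Fin N → ℝ)).symm (fun j => (k j : ℝ))) = σ t x)

/-- (H4): `u₀ ∈ W^{2,∞}(ℝ^N)`. -/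
def H4 (N : ℕ) (u₀ : EN N → ℝ) : Prop :=
  ContDiff ℝ 2 u₀ ∧
  ∃ M, ∀ x, |u₀ x| ≤ M ∧ ‖fderiv ℝ u₀ x‖ ≤ M ∧ ‖fderiv ℝ (fderiv ℝ u₀) x‖ ≤ M

/-- Boundedness on `(0,T) × ℝ^N` for every `T > 0`. -/
def LocBddPos (N : ℕ) (u : ℝ → EN N → ℝ) : Prop :=
  ∀ T > 0, ∃ M, ∀ t ∈ Ioc (0:ℝ) T, ∀ x, |u t x| ≤ M

/-- Viscosity subsolution of `∂_t u = F(t, x, u, ∇_x u, I_s[u(t,·)])` with initial datum `u₀`. -/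
def IsSubsol (N : ℕ) (s : ℝ) (g : EN N → ℝ)
    (F : ℝ → EN N → ℝ → (EN N →L[ℝ] ℝ) → ℝ → ℝ)
    (u₀ : EN N → ℝ) (u : ℝ → EN N → ℝ) : Prop :=
  UpperSemicontinuousOn (fun q : ℝ × EN N => u q.1 q.2) (Ici 0 ×ˢ univ) ∧
  LocBddPos N u ∧
  (∀ x, u 0 x ≤ u₀ x) ∧
  ∀ (t₀ : ℝ) (x₀ : EN N), 0 < t₀ →
    ∀ (φ : ℝ → EN N → ℝ), ContDiff ℝ 2 (fun q : ℝ × EN N => φ q.1 q.2) →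
    ∀ τ r : ℝ, 0 < τ → τ < t₀ → 0 < r →
    (∀ t x, t ∈ Ioo (t₀ - τ) (t₀ + τ) → x ∈ ball x₀ r →
      u t x - φ t x ≤ u t₀ x₀ - φ t₀ x₀) →
    deriv (fun t => φ t x₀) t₀ -
      F t₀ x₀ (u t₀ x₀) (fderiv ℝ (fun x => φ t₀ x) x₀)
        (levyI1 N s g (fun x => φ t₀ x) r x₀ + levyI2 N s g (fun x => u t₀ x) r x₀) ≤ 0

/-- Viscosity supersolution of `∂_t u = F(t, x, u, ∇_x u, I_s[u(t,·)])` with initial datum `u₀`. -/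
def IsSupersol (N : ℕ) (s : ℝ) (g : EN N → ℝ)
    (F : ℝ → EN N → ℝ → (EN N →L[ℝ] ℝ) → ℝ → ℝ)
    (u₀ : EN N → ℝ) (u : ℝ → EN N → ℝ) : Prop :=
  LowerSemicontinuousOn (fun q : ℝ × EN N => u q.1 q.2) (Ici 0 ×ˢ univ) ∧
  LocBddPos N u ∧
  (∀ x, u₀ x ≤ u 0 x) ∧
  ∀ (t₀ : ℝ) (x₀ : EN N), 0 < t₀ →
    ∀ (φ : ℝ → EN N → ℝ), ContDiff ℝ 2 (fun q : ℝ × EN N => φ q.1 q.2) →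
    ∀ τ r : ℝ, 0 < τ → τ < t₀ → 0 < r →
    (∀ t x, t ∈ Ioo (t₀ - τ) (t₀ + τ) → x ∈ ball x₀ r →
      u t₀ x₀ - φ t₀ x₀ ≤ u t x - φ t x) →
    0 ≤ deriv (fun t => φ t x₀) t₀ -
      F t₀ x₀ (u t₀ x₀) (fderiv ℝ (fun x => φ t₀ x) x₀)
        (levyI1 N s g (fun x => φ t₀ x) r x₀ + levyI2 N s g (fun x => u t₀ x) r x₀)

/-- Viscosity solution in `C_b(ℝ⁺ × ℝ^N)`. -/
def IsSol (N : ℕ) (s : ℝ) (g : EN N → ℝ)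
    (F : ℝ → EN N → ℝ → (EN N →L[ℝ] ℝ) → ℝ → ℝ)
    (u₀ : EN N → ℝ) (u : ℝ → EN N → ℝ) : Prop :=
  ContinuousOn (fun q : ℝ × EN N => u q.1 q.2) (Ici 0 ×ˢ univ) ∧
  IsSubsol N s g F u₀ u ∧ IsSupersol N s g F u₀ u

/-- The right-hand side of the cell problem
`∂_τ w = I_s[w(τ,·)] + L − W'(w + p·y) + σ(τ,y)`. -/
def cellF (N : ℕ) (W : ℝ → ℝ) (σ : ℝ → EN N → ℝ) (p : EN N) (L : ℝ) :
    ℝ → EN N → ℝ → (EN N →L[ℝ] ℝ) → ℝ → ℝ :=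
  fun τ y v _ I => I + L - deriv W (v + ⟪p, y⟫) + σ τ y

/-- `w(τ,y)/τ → lam` as `τ → +∞`, locally uniformly in `y`. -/
def SlopeLim (N : ℕ) (w : ℝ → EN N → ℝ) (lam : ℝ) : Prop :=
  ∀ ε > 0, ∀ R > 0, ∃ T : ℝ, ∀ τ, T ≤ τ → ∀ y : EN N, ‖y‖ ≤ R → |w τ y / τ - lam| ≤ ε

end

/-!
The kernel being even, `I_s` is the integral of the symmetric second increments against the Lévy
measure `μ`, so no principal value is needed, and the cell problem reads
`∂ₜ u = I_s[u] + f(t, x, u)` with a bounded Lipschitz reaction `f`.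

*Existence.* Removing the jumps smaller than `1/(j+1)` leaves a finite measure, for which the
explicit Euler scheme is monotone for small time steps; it therefore obeys a discrete comparison
principle, with uniform bounds and Lipschitz estimates. Mollified in time and space, the schemes
become bounded smooth functions which solve the equation up to an arbitrarily small error. By
comparison, two such functions are close to each other and to the schemes, so the schemes converge
locally uniformly in time; stability makes the limit a viscosity solution.

*Uniqueness.* A viscosity subsolution lies below every smooth approximate solution up to a small
error: the approximate solution is itself a test function, so no doubling of variables is needed.
As the solution just built is a limit of such functions, every viscosity solution equals it.

*Slope.* Translating `x` by an integer vector `k` changes the equation only through the shift of `u`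
by `p · k`, and the equation is invariant under integer shifts of `u`; by comparison, integer
translations therefore change `u` by at most `1`, and the oscillation of `u` needs to be controlled
only over bounded distances. There, large jumps started from two points can be coupled with positive
intensity, which pulls the oscillation back and bounds it uniformly in time. Together with the
periodicity in time and in `u`, comparison makes `n ↦ u(n, 0)` additive up to a bounded error, and
Fekete's argument gives the slope, at a rate which is uniform for `(p, L)` in a bounded set. Hence
the slope is a locally uniform limit of continuous functions of `(p, L)`. It is nondecreasing in `L`
by comparison.
-/

open scoped Topology

/-! ### Lévy measures -/

section LevyMeasures

variable {E : Type*} [NormedAddCommGroup E] [MeasurableSpace E]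

/-- A Lévy measure on `E`, symmetric under `z ↦ -z`. -/
structure IsSymmLevyMeasure (μ : Measure E) : Prop where
  integrable_min_one_sq : Integrable (fun z : E ↦ min 1 (‖z‖ ^ 2)) μ
  isNegInvariant : μ.IsNegInvariant

/-- `μ` dominates a multiple of the Lebesgue measure on every annulus `1 < ‖z‖ ≤ R`. This is the
nondegeneracy which allows to couple the large jumps started from two points. -/
def ChargesAnnuli {E : Type*} [NormedAddCommGroup E] [MeasureSpace E] (μ : Measure E) : Prop :=
  ∀ R : ℝ, ∃ c : ℝ, 0 < c ∧
    ENNReal.ofReal c • volume.restrict {z : E | 1 < ‖z‖ ∧ ‖z‖ ≤ R} ≤ μ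

/-- Doeblin's condition for the jumps of size larger than `1` started from two points at distance
at most `R`: a mass `κ` of these jumps can be coupled. It is stated in dual form, as a contraction
of the oscillation `D` of functions. -/
def CouplesLargeJumps (μ : Measure E) (R κ : ℝ) : Prop :=
  ∀ x y : E, ‖x - y‖ ≤ R → ∀ (u : E → ℝ) (D : ℝ), Continuous u → (∀ a b, u a - u b ≤ D) →
    (∫ z in {z | 1 < ‖z‖}, u (x + z) ∂μ) - ∫ z in {z | 1 < ‖z‖}, u (y + z) ∂μ ≤
      (μ.real {z | 1 < ‖z‖} - κ) * D

variable {μ : Measure E}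

namespace IsSymmLevyMeasure

lemma measure_norm_gt_lt_top (hμ : IsSymmLevyMeasure μ) {r : ℝ} (hr : 0 < r) :
    μ {z : E | r < ‖z‖} < ⊤ := by
  have hε : 0 < min 1 (r ^ 2) := by positivity
  refine (measure_mono fun z (hz : r < ‖z‖) ↦ ?_).trans_lt
    (hμ.integrable_min_one_sq.measure_norm_ge_lt_top hε)
  have : r ^ 2 ≤ ‖z‖ ^ 2 := pow_le_pow_left₀ hr.le hz.le 2
  exact (min_le_min_left 1 this).trans (Real.le_norm_self _)

variable [OpensMeasurableSpace E]

lemma integrable_norm_sq_of_le (hμ : IsSymmLevyMeasure μ) (r : ℝ) :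
    IntegrableOn (fun z : E ↦ ‖z‖ ^ 2) {z | ‖z‖ ≤ r} μ := by
  refine (hμ.integrable_min_one_sq.const_mul (1 + r ^ 2)).integrableOn.mono'
    (measurable_norm.pow_const 2).aestronglyMeasurable ?_
  refine (ae_restrict_iff' (measurableSet_le measurable_norm measurable_const)).2 <|
    .of_forall fun z (hz : ‖z‖ ≤ r) ↦ ?_
  have hr : ‖z‖ ^ 2 ≤ r ^ 2 := pow_le_pow_left₀ (norm_nonneg z) hz 2
  rw [Real.norm_of_nonneg (by positivity)]
  rcases min_cases 1 (‖z‖ ^ 2) with h | h <;> rw [h.1] <;> nlinarith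

end IsSymmLevyMeasure

end LevyMeasures

section Coupling

variable {E : Type*} [NormedAddCommGroup E] [InnerProductSpace ℝ E] [FiniteDimensional ℝ E]
  [MeasurableSpace E] [BorelSpace E] {μ : Measure E}

lemma mul_setIntegral_ball_le_of_smul_volume_le {c R : ℝ} (hc : 0 ≤ c)
    (hμ : ENNReal.ofReal c • volume.restrict {z : E | 1 < ‖z‖ ∧ ‖z‖ ≤ R} ≤ μ) {x b : E}
    (hb : ∀ y ∈ ball b 1, 1 < ‖y - x‖ ∧ ‖y - x‖ ≤ R) {F : E → ℝ} (hF : ∀ y, 0 ≤ F y)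
    (hint : IntegrableOn (fun z ↦ F (x + z)) {z | 1 < ‖z‖} μ) :
    c * ∫ y in ball b 1, F y ≤ ∫ z in {z | 1 < ‖z‖}, F (x + z) ∂μ := by
  have hpre : (x + ·) ⁻¹' ball b 1 ⊆ {z : E | 1 < ‖z‖ ∧ ‖z‖ ≤ R} := fun z hz ↦ by
    simpa using hb (x + z) hz
  have hle : ENNReal.ofReal c • volume.restrict ((x + ·) ⁻¹' ball b 1) ≤
      μ.restrict {z : E | 1 < ‖z‖} := by
    calc ENNReal.ofReal c • volume.restrict ((x + ·) ⁻¹' ball b 1)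
        = (ENNReal.ofReal c • volume.restrict {z : E | 1 < ‖z‖ ∧ ‖z‖ ≤ R}).restrict
            ((x + ·) ⁻¹' ball b 1) := by
          rw [Measure.restrict_smul, Measure.restrict_restrict_of_subset hpre]
      _ ≤ μ.restrict {z : E | 1 < ‖z‖} :=
          Measure.restrict_mono (fun z hz ↦ (hpre hz).1) hμ
  calc c * ∫ y in ball b 1, F y
      = c * ∫ z in (x + ·) ⁻¹' ball b 1, F (x + z) := by
        rw [(measurePreserving_add_left volume x).setIntegral_preimage_emb
          (MeasurableEquiv.addLeft x).measurableEmbedding]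
    _ = ∫ z, F (x + z) ∂(ENNReal.ofReal c • volume.restrict ((x + ·) ⁻¹' ball b 1)) := by
        rw [integral_smul_measure, ENNReal.toReal_ofReal hc, smul_eq_mul]
    _ ≤ _ := integral_mono_measure hle (.of_forall fun z ↦ hF _) hint

lemma one_lt_norm_sub_and_norm_sub_le_of_mem_ball_add {E : Type*} [SeminormedAddCommGroup E]
    {x y e z : E} {R : ℝ} (hxy : ‖x - y‖ ≤ R)
    (he : ‖e‖ = R + 3) (hz : z ∈ ball (x + e) 1) : 1 < ‖z - y‖ ∧ ‖z - y‖ ≤ 2 * R + 4 := by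
  rw [mem_ball_iff_norm] at hz
  have h₁ : e = (z - y) - (z - (x + e)) - (x - y) := by abel
  have h₂ : z - y = e + (z - (x + e)) + (x - y) := by abel
  constructor
  · have := norm_sub_le ((z - y) - (z - (x + e))) (x - y)
    rw [← h₁] at this
    linarith [norm_sub_le (z - y) (z - (x + e))]
  · rw [h₂]
    linarith [norm_add₃_le (a := e) (b := z - (x + e)) (c := x - y)]

-- The jumps of both points into a common ball, at distance of order `R`, are charged.
lemma ChargesAnnuli.exists_mul_le_setIntegral_add_setIntegral [Nontrivial E]
    (hμ : ChargesAnnuli μ) (hfin : μ {z : E | 1 < ‖z‖} < ⊤) (R : ℝ) :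
    ∃ κ > 0, ∀ x y : E, ‖x - y‖ ≤ R → ∀ (F G : E → ℝ) (c : ℝ), Continuous F → Continuous G →
      (∀ z, 0 ≤ F z) → (∀ z, 0 ≤ G z) → (∀ z, F z + G z = c) →
      κ * c ≤ (∫ z in {z | 1 < ‖z‖}, F (x + z) ∂μ) + ∫ z in {z | 1 < ‖z‖}, G (y + z) ∂μ := by
  obtain ⟨P, hP, hPμ⟩ := hμ (2 * max R 0 + 4)
  obtain ⟨e, he⟩ : ∃ e : E, ‖e‖ = max R 0 + 3 := exists_norm_eq E (by positivity)
  have hv : 0 < volume.real (ball (0 : E) 1) :=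
    ENNReal.toReal_pos (measure_ball_pos _ _ one_pos).ne' measure_ball_lt_top.ne
  refine ⟨P * volume.real (ball (0 : E) 1), by positivity, ?_⟩
  intro x y hxy F G c hF hG hF₀ hG₀ hFG
  have hint {H : E → ℝ} (hH : Continuous H) (hH₀ : ∀ z, 0 ≤ H z) (hHc : ∀ z, H z ≤ c) (x : E) :
      IntegrableOn (fun z ↦ H (x + z)) {z | 1 < ‖z‖} μ := by
    refine Measure.integrableOn_of_bounded (M := c) hfin.ne
      (hH.comp (continuous_const_add x)).aestronglyMeasurable (.of_forall fun z ↦ ?_)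
    rw [Real.norm_of_nonneg (hH₀ _)]
    exact hHc _
  have hball {H : E → ℝ} (hH : Continuous H) : IntegrableOn H (ball (x + e) 1) :=
    (hH.continuousOn.integrableOn_compact (isCompact_closedBall (x + e) 1)).mono_set
      ball_subset_closedBall
  have hxF := mul_setIntegral_ball_le_of_smul_volume_le hP.le hPμ
    (fun z hz ↦ one_lt_norm_sub_and_norm_sub_le_of_mem_ball_add
      (by simp : ‖x - x‖ ≤ max R 0) he hz) hF₀ (hint hF hF₀ (fun z ↦ by linarith [hFG z, hG₀ z]) x)
  have hyG := mul_setIntegral_ball_le_of_smul_volume_le hP.le hPμ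
    (fun z hz ↦ one_lt_norm_sub_and_norm_sub_le_of_mem_ball_add (hxy.trans (le_max_left R 0)) he hz)
    hG₀ (hint hG hG₀ (fun z ↦ by linarith [hFG z, hF₀ z]) y)
  have hsum : (∫ z in ball (x + e) 1, F z) + ∫ z in ball (x + e) 1, G z =
      volume.real (ball (0 : E) 1) * c := by
    rw [← integral_add (hball hF) (hball hG)]
    simp only [hFG]
    rw [setIntegral_const, smul_eq_mul, Measure.real, Measure.addHaar_ball_center, Measure.real]
  calc P * volume.real (ball (0 : E) 1) * c
      = P * (∫ z in ball (x + e) 1, F z) + P * ∫ z in ball (x + e) 1, G z := by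
        rw [← mul_add, hsum, mul_assoc]
    _ ≤ _ := add_le_add hxF hyG

lemma ChargesAnnuli.exists_couplesLargeJumps [Nontrivial E] (hμ : ChargesAnnuli μ)
    (hfin : μ {z : E | 1 < ‖z‖} < ⊤) (R : ℝ) : ∃ κ > 0, CouplesLargeJumps μ R κ := by
  obtain ⟨κ, hκ, hcouple⟩ := hμ.exists_mul_le_setIntegral_add_setIntegral hfin R
  refine ⟨κ, hκ, fun x y hxy u D hu hD ↦ ?_⟩
  have hbdd : BddAbove (range u) := ⟨u 0 + D, by rintro _ ⟨a, rfl⟩; linarith [hD a 0]⟩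
  have hint (x : E) : IntegrableOn (fun z ↦ u (x + z)) {z | 1 < ‖z‖} μ := by
    refine Measure.integrableOn_of_bounded (M := |u 0| + D) hfin.ne
      (hu.comp (continuous_const_add x)).aestronglyMeasurable (.of_forall fun z ↦ ?_)
    rw [Real.norm_eq_abs]
    have := abs_le.2 ⟨by linarith [hD 0 (x + z)], hD (x + z) 0⟩
    linarith [abs_sub_abs_le_abs_sub (u (x + z)) (u 0)]
  have hconst (c : ℝ) : IntegrableOn (fun _ ↦ c) {z : E | 1 < ‖z‖} μ :=
    integrableOn_const hfin.ne
  have := hcouple x y hxy (fun a ↦ (⨆ b, u b) - u a) (fun a ↦ u a - ((⨆ b, u b) - D)) D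
    (continuous_const.sub hu) (hu.sub continuous_const)
    (fun a ↦ sub_nonneg.2 (le_ciSup hbdd a))
    (fun a ↦ by linarith [ciSup_le fun b ↦ sub_le_iff_le_add'.1 (hD b a)]) (fun a ↦ by ring)
  rw [integral_sub (hconst _) (hint x), integral_sub (hint y) (hconst _), setIntegral_const,
    setIntegral_const, smul_eq_mul, smul_eq_mul] at this
  linarith

end Coupling

/-! ### A monotone explicit scheme -/

section JumpOperator

variable {E : Type*} [NormedAddCommGroup E]

/-- Half of the symmetric second difference of `u` at `x` in the direction `z`. -/
noncomputable def secondDiff (u : E → ℝ) (x z : E) : ℝ := (u (x + z) + u (x - z)) / 2 - u x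

/-- The jump operator of `μ`, with increments replaced by symmetric second differences. For a
symmetric Lévy measure and a bounded `C²` function this is the principal value integral of the
increments. -/
noncomputable def jumpOp [MeasurableSpace E] (μ : Measure E) (u : E → ℝ) (x : E) : ℝ :=
  ∫ z, secondDiff u x z ∂μ

/-- Bounded continuous functions, as a predicate. -/
structure BddCont (u : E → ℝ) : Prop where
  cont : Continuous u
  bdd : ∃ B, ∀ x, |u x| ≤ B

lemma bddCont_const (c : ℝ) : BddCont fun _ : E ↦ c := ⟨continuous_const, |c|, fun _ ↦ le_rfl⟩

namespace BddCont

variable {u : E → ℝ}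

lemma add_const (hu : BddCont u) (c : ℝ) : BddCont fun x ↦ u x + c := by
  obtain ⟨B, hB⟩ := hu.bdd
  exact ⟨hu.cont.add continuous_const, B + |c|, fun x ↦
    (abs_add_le _ _).trans (by linarith [hB x])⟩

lemma translate (hu : BddCont u) (k : E) : BddCont fun x ↦ u (x + k) :=
  ⟨hu.cont.comp (continuous_add_const k), hu.bdd.imp fun _ hB _ ↦ hB _⟩

end BddCont

lemma abs_secondDiff_le {u : E → ℝ} {B : ℝ} (hu : ∀ x, |u x| ≤ B) (x z : E) :
    |secondDiff u x z| ≤ 2 * B := by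
  have h₁ := abs_le.1 (hu (x + z))
  have h₂ := abs_le.1 (hu (x - z))
  have h₃ := abs_le.1 (hu x)
  rw [secondDiff, abs_le]
  constructor <;> linarith [h₁.1, h₁.2, h₂.1, h₂.2, h₃.1, h₃.2]

variable [MeasurableSpace E] {μ : Measure E}

@[simp]
lemma jumpOp_const (c : ℝ) (x : E) : jumpOp μ (fun _ ↦ c) x = 0 := by
  simp [jumpOp, secondDiff]

lemma jumpOp_add_const (u : E → ℝ) (c : ℝ) (x : E) :
    jumpOp μ (fun y ↦ u y + c) x = jumpOp μ u x :=
  integral_congr_ae <| .of_forall fun z ↦ by simp only [secondDiff]; ring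

lemma jumpOp_translate (u : E → ℝ) (k x : E) :
    jumpOp μ (fun y ↦ u (y + k)) x = jumpOp μ u (x + k) := by
  simp only [jumpOp, secondDiff, add_right_comm, sub_add_eq_add_sub]

section FiniteMeasure

variable [IsFiniteMeasure μ]

lemma abs_jumpOp_le {u : E → ℝ} {B : ℝ} (hu : ∀ x, |u x| ≤ B) (x : E) :
    |jumpOp μ u x| ≤ 2 * B * μ.real univ :=
  norm_integral_le_of_norm_le_const (f := secondDiff u x) (.of_forall (abs_secondDiff_le hu x))

variable [OpensMeasurableSpace E]

lemma BddCont.integrable_avg {u : E → ℝ} (hu : BddCont u) (x : E) :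
    Integrable (fun z ↦ (u (x + z) + u (x - z)) / 2) μ := by
  obtain ⟨B, hB⟩ := hu.bdd
  have hc := hu.cont
  refine Integrable.of_bound (by fun_prop) B (.of_forall fun z ↦ abs_le.2 ?_)
  have h₁ := abs_le.1 (hB (x + z))
  have h₂ := abs_le.1 (hB (x - z))
  constructor <;> linarith [h₁.1, h₁.2, h₂.1, h₂.2]

lemma BddCont.jumpOp_eq {u : E → ℝ} (hu : BddCont u) (x : E) :
    jumpOp μ u x = (∫ z, (u (x + z) + u (x - z)) / 2 ∂μ) - μ.real univ * u x := by
  unfold jumpOp secondDiff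
  rw [integral_sub (hu.integrable_avg x) (integrable_const _), integral_const, smul_eq_mul]

lemma continuous_jumpOp_of_param {P : Type*} [TopologicalSpace P] [FirstCountableTopology P]
    {u : P → E → ℝ} (hu : Continuous fun q : P × E ↦ u q.1 q.2) {B : P → ℝ} (hB : Continuous B)
    (huB : ∀ p x, |u p x| ≤ B p) : Continuous fun q : P × E ↦ jumpOp μ (u q.1) q.2 := by
  have hsd : Continuous fun q : (P × E) × E ↦ secondDiff (u q.1.1) q.1.2 q.2 := by
    have h₁ : Continuous fun q : (P × E) × E ↦ u q.1.1 (q.1.2 + q.2) :=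
      hu.comp (by fun_prop : Continuous fun q : (P × E) × E ↦ (q.1.1, q.1.2 + q.2))
    have h₂ : Continuous fun q : (P × E) × E ↦ u q.1.1 (q.1.2 - q.2) :=
      hu.comp (by fun_prop : Continuous fun q : (P × E) × E ↦ (q.1.1, q.1.2 - q.2))
    exact ((h₁.add h₂).div_const 2).sub (hu.comp continuous_fst)
  refine continuous_iff_continuousAt.2 fun q₀ ↦ continuousAt_of_dominated
    (bound := fun _ ↦ 2 * B q₀.1 + 1)
    (.of_forall fun q ↦ (hsd.comp (Continuous.prodMk_right q)).aestronglyMeasurable) ?_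
    (integrable_const _)
    (.of_forall fun z ↦ (hsd.comp (Continuous.prodMk_left z)).continuousAt)
  have hB' : Continuous fun q : P × E ↦ 2 * B q.1 := by fun_prop
  filter_upwards [(hB'.tendsto q₀).eventually (gt_mem_nhds (lt_add_one _))] with q hq
  exact .of_forall fun z ↦ (abs_secondDiff_le (huB q.1) q.2 z).trans hq.le

end FiniteMeasure

end JumpOperator

section Comparison

variable {E : Type*} [NormedAddCommGroup E] [MeasurableSpace E]

/-- `u` is an orbit of the explicit Euler scheme with time step `h` for
`∂ₜ u = jumpOp μ u + a`. -/
def IsEulerSeq (μ : Measure E) (h : ℝ) (a u : ℕ → E → ℝ) : Prop :=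
  ∀ n x, u (n + 1) x = u n x + h * (jumpOp μ (u n) x + a n x)

variable [OpensMeasurableSpace E] {μ : Measure E} [IsFiniteMeasure μ]

-- The CFL condition `h (μ(E) + K) ≤ 1` makes the scheme monotone.
lemma eulerStep_le {h K c e a b : ℝ} (hh : 0 ≤ h) (hK : 0 ≤ K)
    (hcfl : h * (μ.real univ + K) ≤ 1) {u v : E → ℝ} (hu : BddCont u) (hv : BddCont v)
    (hc : 0 ≤ c) (huv : ∀ x, u x ≤ v x + c) (x : E) (hab : a ≤ b + K * |u x - v x| + e) :
    u x + h * (jumpOp μ u x + a) ≤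
      v x + h * (jumpOp μ v x + b) + (1 + h * K) * c + h * e := by
  rw [hu.jumpOp_eq, hv.jumpOp_eq]
  have havg : (∫ z, (u (x + z) + u (x - z)) / 2 ∂μ) ≤
      (∫ z, (v (x + z) + v (x - z)) / 2 ∂μ) + μ.real univ * c := by
    calc _ ≤ ∫ z, ((v (x + z) + v (x - z)) / 2 + c) ∂μ :=
          integral_mono (hu.integrable_avg x) ((hv.integrable_avg x).add (integrable_const _))
            fun z ↦ by dsimp only; linarith [huv (x + z), huv (x - z)]
      _ = _ := by
          rw [integral_add (hv.integrable_avg x) (integrable_const _), integral_const, smul_eq_mul]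
  have hm : 0 ≤ μ.real univ := measureReal_nonneg
  set m := μ.real univ
  obtain ⟨d, hd⟩ : ∃ d, u x = v x + d := ⟨u x - v x, by ring⟩
  have hdc : d ≤ c := by linarith [huv x]
  have hdiag : (1 - h * m) * d + h * K * |d| ≤ (1 - h * m + h * K) * c := by
    have hhK : 0 ≤ h * K := by positivity
    rcases le_total 0 d with h0 | h0
    · rw [abs_of_nonneg h0]; nlinarith
    · rw [abs_of_nonpos h0]; nlinarith
  rw [hd, add_sub_cancel_left] at hab
  have h₁ := mul_le_mul_of_nonneg_left havg hh
  have h₂ := mul_le_mul_of_nonneg_left hab hh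
  rw [hd]
  nlinarith

namespace IsEulerSeq

variable {h K c e : ℝ} {a b u v : ℕ → E → ℝ}

lemma le_add (hu : IsEulerSeq μ h a u) (hv : IsEulerSeq μ h b v) (huc : ∀ n, BddCont (u n))
    (hvc : ∀ n, BddCont (v n)) (hh : 0 ≤ h) (hK : 0 ≤ K) (hcfl : h * (μ.real univ + K) ≤ 1)
    (hc : 0 ≤ c) (he : 0 ≤ e) {M : ℕ} (h0 : ∀ x, u 0 x ≤ v 0 x + c)
    (hab : ∀ n < M, ∀ x, a n x ≤ b n x + K * |u n x - v n x| + e) (x : E) :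
    u M x ≤ v M x + (1 + h * K) ^ M * (c + M * h * e) := by
  induction M generalizing x with
  | zero => simpa using h0 x
  | succ n ih =>
    have hpow : (1 : ℝ) ≤ (1 + h * K) ^ (n + 1) := one_le_pow₀ (by nlinarith [mul_nonneg hh hK])
    have hstep := eulerStep_le hh hK hcfl (huc n) (hvc n) (by positivity)
      (ih fun m hm ↦ hab m (hm.trans n.lt_succ_self)) x (hab n n.lt_succ_self x)
    have herr : h * e ≤ (1 + h * K) ^ (n + 1) * (h * e) :=
      le_mul_of_one_le_left (by positivity) hpow
    rw [hu n x, hv n x]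
    push_cast
    rw [pow_succ] at herr ⊢
    nlinarith

lemma le_of_le (hu : IsEulerSeq μ h a u) (hv : IsEulerSeq μ h b v) (huc : ∀ n, BddCont (u n))
    (hvc : ∀ n, BddCont (v n)) (hh : 0 ≤ h) (hK : 0 ≤ K) (hcfl : h * (μ.real univ + K) ≤ 1)
    (h0 : ∀ x, u 0 x ≤ v 0 x) (hab : ∀ n x, a n x ≤ b n x + K * |u n x - v n x|) (n : ℕ) (x : E) :
    u n x ≤ v n x := by
  simpa using hu.le_add hv huc hvc hh hK hcfl le_rfl le_rfl (M := n) (by simpa using h0)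
    (fun m _ y ↦ by simpa using hab m y) x

lemma one_add_mul_pow_le_exp {T : ℝ} (hh : 0 ≤ h) (hK : 0 ≤ K) {n : ℕ} (hn : n * h ≤ T) :
    (1 + h * K) ^ n ≤ Real.exp (K * T) :=
  calc (1 + h * K) ^ n ≤ Real.exp (h * K) ^ n :=
        pow_le_pow_left₀ (by positivity) (by linarith [Real.add_one_le_exp (h * K)]) n
    _ = Real.exp (n * (h * K)) := (Real.exp_nat_mul _ _).symm
    _ ≤ _ := Real.exp_le_exp.2 (by nlinarith)

lemma abs_sub_le_exp_mul (hu : IsEulerSeq μ h a u) (hv : IsEulerSeq μ h b v)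
    (huc : ∀ n, BddCont (u n)) (hvc : ∀ n, BddCont (v n)) (hh : 0 ≤ h) (hK : 0 ≤ K)
    (hcfl : h * (μ.real univ + K) ≤ 1) (hc : 0 ≤ c) (he : 0 ≤ e) {M : ℕ} {T : ℝ} (hM : M * h ≤ T)
    (h0 : ∀ x, |u 0 x - v 0 x| ≤ c)
    (hab : ∀ n < M, ∀ x, |a n x - b n x| ≤ K * |u n x - v n x| + e) (x : E) :
    |u M x - v M x| ≤ Real.exp (K * T) * (c + T * e) := by
  have hle : (1 + h * K) ^ M * (c + M * h * e) ≤ Real.exp (K * T) * (c + T * e) := by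
    gcongr
    exact one_add_mul_pow_le_exp hh hK hM
  have huv := hu.le_add hv huc hvc hh hK hcfl hc he (fun y ↦ by linarith [(abs_le.1 (h0 y)).2])
    (fun n hn y ↦ by linarith [(abs_le.1 (hab n hn y)).2]) x
  have hvu := hv.le_add hu hvc huc hh hK hcfl hc he (fun y ↦ by linarith [(abs_le.1 (h0 y)).1])
    (fun n hn y ↦ by
      rw [abs_sub_comm]
      linarith [(abs_le.1 (hab n hn y)).1]) x
  exact abs_le.2 ⟨by linarith, by linarith⟩

end IsEulerSeq

end Comparison

section EulerScheme

variable {E : Type*} [NormedAddCommGroup E]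

/-- Reaction terms `f(t, x, v)` bounded by `C`, `K`-Lipschitz in the value `v` and `L`-Lipschitz
in the base point `(t, x)`. -/
structure IsReaction (f : ℝ → E → ℝ → ℝ) (C K L : ℝ) : Prop where
  bound : ∀ t x v, |f t x v| ≤ C
  lip_value : ∀ t x v v', |f t x v - f t x v'| ≤ K * |v - v'|
  lip_base : ∀ t₁ t₂ x₁ x₂ v, |f t₁ x₁ v - f t₂ x₂ v| ≤ L * (|t₁ - t₂| + ‖x₁ - x₂‖)

namespace IsReaction

variable {f : ℝ → E → ℝ → ℝ} {C K L : ℝ}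

lemma bound_nonneg (hf : IsReaction f C K L) : 0 ≤ C := (abs_nonneg _).trans (hf.bound 0 0 0)

lemma lip_value_nonneg (hf : IsReaction f C K L) : 0 ≤ K := by
  simpa using (abs_nonneg _).trans (hf.lip_value 0 0 1 0)

lemma lip_base_nonneg (hf : IsReaction f C K L) : 0 ≤ L := by
  simpa using (abs_nonneg _).trans (hf.lip_base 1 0 0 0 0)

lemma abs_sub_le (hf : IsReaction f C K L) (t₁ t₂ : ℝ) (x₁ x₂ : E) (v₁ v₂ : ℝ) :
    |f t₁ x₁ v₁ - f t₂ x₂ v₂| ≤ K * |v₁ - v₂| + L * (|t₁ - t₂| + ‖x₁ - x₂‖) := by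
  refine (_root_.abs_sub_le _ (f t₂ x₂ v₁) _).trans ?_
  linarith [hf.lip_base t₁ t₂ x₁ x₂ v₁, hf.lip_value t₂ x₂ v₁ v₂]

lemma le_add_mul_abs_sub (hf : IsReaction f C K L) (t : ℝ) (x : E) (v v' : ℝ) :
    f t x v ≤ f t x v' + K * |v - v'| := by
  linarith [(abs_le.1 (hf.lip_value t x v v')).2]

lemma mono (hf : IsReaction f C K L) {C' L' : ℝ} (hC : C ≤ C') (hL : L ≤ L') :
    IsReaction f C' K L' where
  bound t x v := (hf.bound t x v).trans hC
  lip_value := hf.lip_value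
  lip_base t₁ t₂ x₁ x₂ v := (hf.lip_base t₁ t₂ x₁ x₂ v).trans (by gcongr)

lemma continuous (hf : IsReaction f C K L) :
    Continuous fun q : ℝ × E × ℝ ↦ f q.1 q.2.1 q.2.2 := by
  refine continuous_iff_continuousAt.2 fun ⟨t, x, v⟩ ↦ tendsto_iff_norm_sub_tendsto_zero.2 <|
    squeeze_zero (fun _ ↦ norm_nonneg _) (fun q ↦ hf.abs_sub_le q.1 t q.2.1 x q.2.2 v) ?_
  have : Continuous fun q : ℝ × E × ℝ ↦ K * |q.2.2 - v| + L * (|q.1 - t| + ‖q.2.1 - x‖) := by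
    fun_prop
  simpa using this.tendsto (t, x, v)

end IsReaction

variable [MeasurableSpace E]

/-- Explicit Euler scheme with time step `h` for `∂ₜ u = jumpOp μ u + f(t, x, u)`, started
from `0`. -/
noncomputable def eulerScheme (μ : Measure E) (h : ℝ) (f : ℝ → E → ℝ → ℝ) : ℕ → E → ℝ
  | 0 => fun _ ↦ 0
  | n + 1 => fun x ↦ eulerScheme μ h f n x +
      h * (jumpOp μ (eulerScheme μ h f n) x + f (n * h) x (eulerScheme μ h f n x))

@[simp]
lemma eulerScheme_zero (μ : Measure E) (h : ℝ) (f : ℝ → E → ℝ → ℝ) (x : E) :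
    eulerScheme μ h f 0 x = 0 := rfl

lemma isEulerSeq_eulerScheme (μ : Measure E) (h : ℝ) (f : ℝ → E → ℝ → ℝ) :
    IsEulerSeq μ h (fun n x ↦ f (n * h) x (eulerScheme μ h f n x)) (eulerScheme μ h f) :=
  fun _ _ ↦ rfl

variable {μ : Measure E} [IsFiniteMeasure μ]

lemma exists_abs_eulerScheme_le {h : ℝ} (hh : 0 ≤ h) (n : ℕ) :
    ∃ c : ℝ, ∀ (f : ℝ → E → ℝ → ℝ) (C : ℝ), (∀ t x v, |f t x v| ≤ C) →
      ∀ x, |eulerScheme μ h f n x| ≤ c * C := by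
  induction n with
  | zero => exact ⟨0, by simp⟩
  | succ n ih =>
    obtain ⟨c, hc⟩ := ih
    refine ⟨c + h * (2 * c * μ.real univ + 1), fun f C hf x ↦ ?_⟩
    have hu := hc f C hf
    set u := eulerScheme μ h f n
    calc |eulerScheme μ h f (n + 1) x| = |u x + h * (jumpOp μ u x + f (n * h) x (u x))| := rfl
      _ ≤ |u x| + h * (|jumpOp μ u x| + |f (n * h) x (u x)|) := by
        refine (abs_add_le _ _).trans (add_le_add le_rfl ?_)
        rw [abs_mul, abs_of_nonneg hh]
        exact mul_le_mul_of_nonneg_left (abs_add_le _ _) hh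
      _ ≤ c * C + h * (2 * (c * C) * μ.real univ + C) := by
        gcongr
        exacts [hu x, abs_jumpOp_le hu x, hf _ _ _]
      _ = _ := by ring

variable [OpensMeasurableSpace E]

lemma continuous_eulerScheme_of_param {P : Type*} [TopologicalSpace P] [FirstCountableTopology P]
    {h : ℝ} (hh : 0 ≤ h) {f : P → ℝ → E → ℝ → ℝ} {C : P → ℝ} (hC : Continuous C)
    (hfC : ∀ p t x v, |f p t x v| ≤ C p)
    (hf : ∀ t, Continuous fun q : P × E × ℝ ↦ f q.1 t q.2.1 q.2.2) (n : ℕ) :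
    Continuous fun q : P × E ↦ eulerScheme μ h (f q.1) n q.2 := by
  induction n with
  | zero => exact continuous_const
  | succ n ih =>
    obtain ⟨c, hc⟩ := exists_abs_eulerScheme_le (μ := μ) hh n
    have hjump := continuous_jumpOp_of_param (μ := μ) ih (hC.const_mul c) fun p ↦ hc _ _ (hfC p)
    exact ih.add (continuous_const.mul (hjump.add
      ((hf (n * h)).comp (continuous_fst.prodMk (continuous_snd.prodMk ih)))))

namespace IsReaction

variable {f : ℝ → E → ℝ → ℝ} {C K L h : ℝ}

lemma bddCont_eulerScheme (hf : IsReaction f C K L) (hh : 0 ≤ h) (n : ℕ) :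
    BddCont (eulerScheme μ h f n) := by
  have hfc := hf.continuous
  have hcont := continuous_eulerScheme_of_param (μ := μ) (P := Unit) hh continuous_const
    (fun _ ↦ hf.bound) (fun t ↦ hfc.comp
      (by fun_prop : Continuous fun q : Unit × E × ℝ ↦ (t, q.2.1, q.2.2))) n
  obtain ⟨c, hc⟩ := exists_abs_eulerScheme_le (μ := μ) hh n
  exact ⟨hcont.comp (Continuous.prodMk_right ()), c * C, hc f C hf.bound⟩

lemma abs_eulerScheme_le (hf : IsReaction f C K L) (hh : 0 ≤ h)
    (hcfl : h * (μ.real univ + K) ≤ 1) (n : ℕ) (x : E) :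
    |eulerScheme μ h f n x| ≤ n * h * C := by
  have hcfl' : h * (μ.real univ + 0) ≤ 1 :=
    (mul_le_mul_of_nonneg_left (add_le_add_right hf.lip_value_nonneg _) hh).trans hcfl
  have hzero : IsEulerSeq μ h (fun _ _ ↦ (0 : ℝ)) fun _ _ ↦ (0 : ℝ) := fun _ _ ↦ by simp
  simpa using (isEulerSeq_eulerScheme μ h f).abs_sub_le_exp_mul hzero
    (hf.bddCont_eulerScheme hh) (fun _ ↦ bddCont_const 0) hh le_rfl hcfl' le_rfl hf.bound_nonneg
    le_rfl (by simp) (fun m _ y ↦ by simpa using hf.bound _ _ _) x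

lemma abs_eulerScheme_sub_le (hf : IsReaction f C K L) {T : ℝ} (hh : 0 ≤ h)
    (hcfl : h * (μ.real univ + K) ≤ 1) {n : ℕ} (hn : n * h ≤ T) (x y : E) :
    |eulerScheme μ h f n x - eulerScheme μ h f n y| ≤ Real.exp (K * T) * (T * L) * ‖x - y‖ := by
  have hL := hf.lip_base_nonneg
  have htrans : IsEulerSeq μ h
      (fun n z ↦ f (n * h) (z + (x - y)) (eulerScheme μ h f n (z + (x - y))))
      fun n z ↦ eulerScheme μ h f n (z + (x - y)) := fun n z ↦ by
    rw [jumpOp_translate, ← isEulerSeq_eulerScheme]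
  have := htrans.abs_sub_le_exp_mul (isEulerSeq_eulerScheme μ h f)
    (fun n ↦ (hf.bddCont_eulerScheme hh n).translate _) (hf.bddCont_eulerScheme hh) hh
    hf.lip_value_nonneg hcfl le_rfl (e := L * ‖x - y‖) (by positivity) hn (by simp)
    (fun m _ z ↦ (hf.abs_sub_le _ _ _ _ _ _).trans_eq (by simp)) y
  rw [add_sub_cancel] at this
  exact this.trans_eq (by ring)

lemma abs_eulerScheme_succ_sub_le (hf : IsReaction f C K L) {T : ℝ} (hh : 0 ≤ h)
    (hcfl : h * (μ.real univ + K) ≤ 1) {n : ℕ} (hn : n * h ≤ T) (x : E) :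
    |eulerScheme μ h f (n + 1) x - eulerScheme μ h f n x| ≤
      Real.exp (K * T) * (C + T * L) * h := by
  have hC := hf.bound_nonneg
  have hL := hf.lip_base_nonneg
  have hshift : IsEulerSeq μ h
      (fun n z ↦ f ((n + 1 : ℕ) * h) z (eulerScheme μ h f (n + 1) z))
      fun n ↦ eulerScheme μ h f (n + 1) := fun n z ↦ isEulerSeq_eulerScheme μ h f (n + 1) z
  have := hshift.abs_sub_le_exp_mul (isEulerSeq_eulerScheme μ h f)
    (fun n ↦ hf.bddCont_eulerScheme hh (n + 1)) (hf.bddCont_eulerScheme hh) hh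
    hf.lip_value_nonneg hcfl (c := h * C) (by positivity) (e := L * h) (by positivity) hn
    (fun z ↦ by simpa using hf.abs_eulerScheme_le hh hcfl 1 z)
    (fun m _ z ↦ (hf.abs_sub_le _ _ _ _ _ _).trans_eq <| by
      have : ((m + 1 : ℕ) : ℝ) * h - m * h = h := by push_cast; ring
      rw [this, abs_of_nonneg hh, sub_self, norm_zero, add_zero]) x
  exact this.trans_eq (by ring)

end IsReaction

end EulerScheme

/-! ### Mollification in time and space -/

section Taylor

variable {F : Type*} [NormedAddCommGroup F] [NormedSpace ℝ F]

lemma abs_sub_sub_fderiv_le {S : Set F} (hS : Convex ℝ S) {V : F → ℝ} (hV : ContDiff ℝ 2 V)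
    {C : ℝ} (hC : ∀ a ∈ S, ‖fderiv ℝ (fderiv ℝ V) a‖ ≤ C) {a z : F} (ha : a ∈ S)
    (haz : a + z ∈ S) : |V (a + z) - V a - fderiv ℝ V a z| ≤ C * ‖z‖ ^ 2 := by
  have hseg : segment ℝ a (a + z) ⊆ S := hS.segment_subset ha haz
  have hV' : Differentiable ℝ (fderiv ℝ V) :=
    (hV.fderiv_right (m := 1) (by norm_num)).differentiable (by norm_num)
  have hC0 : 0 ≤ C := (norm_nonneg (fderiv ℝ (fderiv ℝ V) a)).trans (hC a ha)
  have hlip : ∀ x ∈ segment ℝ a (a + z), ‖fderiv ℝ V x - fderiv ℝ V a‖ ≤ C * ‖z‖ := fun x hx ↦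
    calc _ ≤ C * ‖x - a‖ := hS.norm_image_sub_le_of_norm_fderiv_le (fun y _ ↦ hV' y) hC ha (hseg hx)
      _ ≤ C * ‖z‖ := by
        gcongr
        simpa using norm_sub_le_of_mem_segment hx
  have := (convex_segment a (a + z)).norm_image_sub_le_of_norm_hasFDerivWithin_le'
    (fun x _ ↦ (hV.differentiable (by norm_num) x).hasFDerivAt.hasFDerivWithinAt) hlip
    (left_mem_segment ℝ a (a + z)) (right_mem_segment ℝ a (a + z))
  rw [add_sub_cancel_left, Real.norm_eq_abs] at this
  exact this.trans_eq (by ring)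

lemma abs_secondDiff_le_of_norm_fderiv_fderiv_le {S : Set F} (hS : Convex ℝ S) {V : F → ℝ}
    (hV : ContDiff ℝ 2 V) {C : ℝ} (hC : ∀ a ∈ S, ‖fderiv ℝ (fderiv ℝ V) a‖ ≤ C) {a z : F}
    (ha : a ∈ S) (haz : a + z ∈ S) (haz' : a - z ∈ S) : |secondDiff V a z| ≤ C * ‖z‖ ^ 2 := by
  have h₁ := abs_le.1 (abs_sub_sub_fderiv_le hS hV hC ha haz)
  have h₂ := abs_le.1 (abs_sub_sub_fderiv_le hS hV hC ha (z := -z) (by rwa [← sub_eq_add_neg]))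
  rw [map_neg, norm_neg, ← sub_eq_add_neg] at h₂
  rw [secondDiff, abs_le]
  constructor <;> linarith [h₁.1, h₁.2, h₂.1, h₂.2]

end Taylor

section Convolution

variable {G : Type*} [NormedAddCommGroup G] [NormedSpace ℝ G] [FiniteDimensional ℝ G]
  [MeasurableSpace G] [BorelSpace G] {m : Measure G} [m.IsAddHaarMeasure] {ω ψ : G → ℝ} {M : ℝ}

lemma fderiv_convolution_lsmul {F : Type*} [NormedAddCommGroup F] [NormedSpace ℝ F] {Φ : G → F}
    (hω : LocallyIntegrable ω m) (hΦ : ContDiff ℝ 1 Φ) (hΦc : HasCompactSupport Φ) :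
    fderiv ℝ (convolution ω Φ (.lsmul ℝ ℝ) m) = convolution ω (fderiv ℝ Φ) (.lsmul ℝ ℝ) m := by
  have hL : (ContinuousLinearMap.lsmul ℝ ℝ : ℝ →L[ℝ] F →L[ℝ] F).precompR G = .lsmul ℝ ℝ := rfl
  funext q
  rw [(hΦc.hasFDerivAt_convolution_right _ hω hΦ q).fderiv, hL]

lemma norm_convolution_lsmul_le {F : Type*} [NormedAddCommGroup F] [NormedSpace ℝ F] {Φ : G → F}
    (hM : ∀ q, |ω q| ≤ M) (hΦ : Integrable Φ m) (q : G) :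
    ‖convolution ω Φ (.lsmul ℝ ℝ) m q‖ ≤ (∫ y, ‖Φ y‖ ∂m) * M :=
  calc ‖convolution ω Φ (.lsmul ℝ ℝ) m q‖ ≤ ∫ y, M * ‖Φ (q - y)‖ ∂m := by
        refine norm_integral_le_of_norm_le ((hΦ.norm.comp_sub_left q).const_mul M)
          (.of_forall fun y ↦ ?_)
        rw [ContinuousLinearMap.lsmul_apply, norm_smul]
        exact mul_le_mul_of_nonneg_right (hM y) (norm_nonneg _)
    _ = (∫ y, ‖Φ y‖ ∂m) * M := by
        rw [integral_const_mul, integral_sub_left_eq_self (fun y ↦ ‖Φ y‖) m q, mul_comm]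

lemma norm_fderiv_fderiv_convolution_le (hω : Measurable ω) (hM : ∀ q, |ω q| ≤ M)
    (hψ : ContDiff ℝ 2 ψ) (hψc : HasCompactSupport ψ) (q : G) :
    ‖fderiv ℝ (fderiv ℝ (convolution ω ψ (.lsmul ℝ ℝ) m)) q‖ ≤
      (∫ y, ‖fderiv ℝ (fderiv ℝ ψ) y‖ ∂m) * M := by
  have hloc : LocallyIntegrable ω m := (locallyIntegrable_const M).mono hω.aestronglyMeasurable
    (.of_forall fun q ↦ (hM q).trans (le_abs_self M))
  have hψ' : ContDiff ℝ 1 (fderiv ℝ ψ) := hψ.fderiv_right (by norm_num)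
  rw [fderiv_convolution_lsmul hloc (hψ.of_le (by norm_num)) hψc,
    fderiv_convolution_lsmul hloc hψ' (hψc.fderiv (𝕜 := ℝ))]
  exact norm_convolution_lsmul_le hM ((hψ'.continuous_fderiv
    (by norm_num)).integrable_of_hasCompactSupport ((hψc.fderiv (𝕜 := ℝ)).fderiv (𝕜 := ℝ))) q

end Convolution

/-- The average of the translates of `ω` under `ν`. -/
noncomputable def mollify {G : Type*} [AddGroup G] [MeasurableSpace G] (ν : Measure G)
    (ω : G → ℝ) (q : G) : ℝ :=
  ∫ y, ω (q - y) ∂ν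

/-- A smooth mollifier at scale `δ`, as a measure. It charges nonpositive times only, so that
`mollify ν ω` looks forward in time; `B` measures the second derivatives it produces. -/
structure IsForwardMollifier {E : Type*} [NormedAddCommGroup E] [NormedSpace ℝ E]
    [MeasurableSpace E] (ν : Measure (ℝ × E)) (δ B : ℝ) : Prop where
  isProbabilityMeasure : IsProbabilityMeasure ν
  ae_mem : ∀ᵐ y ∂ν, y.1 ∈ Icc (-(2 * δ)) 0 ∧ ‖y.2‖ ≤ δ
  contDiff : ∀ (ω : ℝ × E → ℝ) (M : ℝ), Measurable ω → (∀ q, |ω q| ≤ M) →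
    ContDiff ℝ 2 (mollify ν ω)
  norm_fderiv_fderiv_le : ∀ (ω : ℝ × E → ℝ) (M : ℝ), Measurable ω → (∀ q, |ω q| ≤ M) →
    ∀ q, ‖fderiv ℝ (fderiv ℝ (mollify ν ω)) q‖ ≤ B * M

lemma mollify_withDensity {G : Type*} [NormedAddCommGroup G] [MeasurableSpace G] [BorelSpace G]
    {m : Measure G} [m.IsAddLeftInvariant] [m.IsNegInvariant] {ψ : G → ℝ} (hψ : Measurable ψ)
    (hψ0 : ∀ y, 0 ≤ ψ y) (ω : G → ℝ) :
    mollify (m.withDensity fun y ↦ ENNReal.ofReal (ψ y)) ω = convolution ω ψ (.lsmul ℝ ℝ) m := by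
  funext q
  rw [mollify, integral_withDensity_eq_integral_toReal_smul hψ.ennreal_ofReal (by simp),
    ← integral_sub_left_eq_self _ m q]
  simp [convolution_def, ENNReal.toReal_ofReal (hψ0 _), mul_comm]

lemma exists_isForwardMollifier (E : Type*) [NormedAddCommGroup E] [NormedSpace ℝ E]
    [FiniteDimensional ℝ E] [MeasurableSpace E] [BorelSpace E] {δ : ℝ} (hδ : 0 < δ) :
    ∃ (ν : Measure (ℝ × E)) (B : ℝ), 0 ≤ B ∧ IsForwardMollifier ν δ B := by
  let m : Measure (ℝ × E) := Measure.addHaar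
  let b : ContDiffBump ((-δ, 0) : ℝ × E) := ⟨δ / 2, δ, by positivity, by linarith⟩
  have hψ : ContDiff ℝ 2 (b.normed m) := b.contDiff_normed
  have hψc : HasCompactSupport (b.normed m) := b.hasCompactSupport_normed
  have hψm : Measurable (b.normed m) := hψ.continuous.measurable
  have hψ0 : ∀ y, 0 ≤ b.normed m y := b.nonneg_normed
  refine ⟨m.withDensity fun y ↦ ENNReal.ofReal (b.normed m y),
    ∫ y, ‖fderiv ℝ (fderiv ℝ (b.normed m)) y‖ ∂m, integral_nonneg fun _ ↦ by positivity, ⟨?_⟩,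
    ?_, fun ω M hω hM ↦ ?_, fun ω M hω hM ↦ ?_⟩
  · rw [withDensity_apply _ .univ, setLIntegral_univ, ← ofReal_integral_eq_lintegral_ofReal
      (hψ.continuous.integrable_of_hasCompactSupport hψc) (.of_forall hψ0), b.integral_normed,
      ENNReal.ofReal_one]
  · rw [ae_withDensity_iff hψm.ennreal_ofReal]
    refine .of_forall fun y hy ↦ ?_
    have hy' : y ∈ Function.support (b.normed m) := fun h0 ↦ hy (by rw [h0, ENNReal.ofReal_zero])
    rw [b.support_normed_eq, mem_ball, dist_eq_norm, Prod.norm_def, max_lt_iff] at hy'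
    obtain ⟨hy₁, hy₂⟩ : |y.1 + δ| < δ ∧ ‖y.2‖ < δ := by simpa using hy'
    exact ⟨⟨by linarith [(abs_lt.1 hy₁).1], by linarith [(abs_lt.1 hy₁).2]⟩, hy₂.le⟩
  · rw [mollify_withDensity hψm hψ0]
    exact hψc.contDiff_convolution_right _ ((locallyIntegrable_const M).mono
      hω.aestronglyMeasurable (.of_forall fun q ↦ (hM q).trans (le_abs_self M))) hψ
  · rw [mollify_withDensity hψm hψ0]
    exact norm_fderiv_fderiv_convolution_le hω hM hψ hψc

section Averages

variable {G : Type*} [NormedAddCommGroup G] [MeasurableSpace G] [BorelSpace G]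
  {ν : Measure G} {ω : G → ℝ} {M : ℝ}

lemma integrable_translate [IsFiniteMeasure ν] (hω : Measurable ω) (hM : ∀ q, |ω q| ≤ M) (q : G) :
    Integrable (fun y ↦ ω (q - y)) ν :=
  .of_bound (hω.comp (by fun_prop)).aestronglyMeasurable M (.of_forall fun _ ↦ hM _)

lemma abs_integral_sub_le {α : Type*} [MeasurableSpace α] {ν : Measure α}
    [IsProbabilityMeasure ν] {F : α → ℝ} (hF : Integrable F ν) {c e : ℝ}
    (h : ∀ᵐ y ∂ν, |F y - c| ≤ e) : |(∫ y, F y ∂ν) - c| ≤ e := by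
  have hsub : (∫ y, F y ∂ν) - c = ∫ y, (F y - c) ∂ν := by
    rw [integral_sub hF (integrable_const _), integral_const]; simp
  simpa [hsub] using norm_integral_le_of_norm_le_const (f := fun y ↦ F y - c) h

lemma secondDiff_mollify [IsFiniteMeasure ν] (hω : Measurable ω) (hM : ∀ q, |ω q| ≤ M) (q z : G) :
    secondDiff (mollify ν ω) q z = ∫ y, secondDiff ω (q - y) z ∂ν := by
  have hi := integrable_translate (ν := ν) hω hM
  have h₁ : Integrable (fun y ↦ ω (q - y + z)) ν := by simpa [sub_add_eq_add_sub] using hi (q + z)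
  have h₂ : Integrable (fun y ↦ ω (q - y - z)) ν := by simpa [sub_right_comm] using hi (q - z)
  simp only [secondDiff, mollify]
  rw [integral_sub (by exact (h₁.add h₂).div_const 2) (hi q), integral_div, integral_add h₁ h₂]
  simp only [sub_add_eq_add_sub, sub_right_comm]

variable {E : Type*} [NormedAddCommGroup E] [MeasurableSpace E] [BorelSpace E]
  [SecondCountableTopology E] {μ : Measure E} [IsFiniteMeasure μ] {ν : Measure (ℝ × E)}
  [IsFiniteMeasure ν] {ω : ℝ × E → ℝ} {M : ℝ}

-- The pair `(y, z)` is integrated against the finite measure `ν ⊗ μ`, so Fubini applies.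
lemma integrable_secondDiff_prod (hω : Measurable ω) (hM : ∀ q, |ω q| ≤ M) (t : ℝ) (x : E) :
    Integrable (Function.uncurry fun (y : ℝ × E) (z : E) ↦
      secondDiff (fun x ↦ ω (t - y.1, x)) (x - y.2) z) (ν.prod μ) := by
  refine .of_bound (Measurable.aestronglyMeasurable ?_) (2 * M)
    (.of_forall fun q ↦ abs_secondDiff_le (fun _ ↦ hM _) _ _)
  unfold Function.uncurry secondDiff
  exact (((hω.comp (by fun_prop)).add (hω.comp (by fun_prop))).div_const 2).sub
    (hω.comp (by fun_prop))

lemma jumpOp_mollify (hω : Measurable ω) (hM : ∀ q, |ω q| ≤ M) (t : ℝ) (x : E) :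
    jumpOp μ (fun x ↦ mollify ν ω (t, x)) x =
      ∫ y, jumpOp μ (fun x ↦ ω (t - y.1, x)) (x - y.2) ∂ν := by
  have hsd (z : E) : secondDiff (fun x ↦ mollify ν ω (t, x)) x z =
      ∫ y, secondDiff (fun x ↦ ω (t - y.1, x)) (x - y.2) z ∂ν := by
    simpa [secondDiff, Prod.add_def, Prod.sub_def] using
      secondDiff_mollify (ν := ν) hω hM (t, x) (0, z)
  simp only [jumpOp, hsd]
  exact (integral_integral_swap (integrable_secondDiff_prod hω hM t x)).symm

lemma integrable_jumpOp_translate (hω : Measurable ω) (hM : ∀ q, |ω q| ≤ M) (t : ℝ) (x : E) :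
    Integrable (fun y : ℝ × E ↦ jumpOp μ (fun x ↦ ω (t - y.1, x)) (x - y.2)) ν :=
  (integrable_secondDiff_prod hω hM t x).integral_prod_left

end Averages

/-! ### Smooth approximate solutions -/

section EulerApprox

lemma floor_div_mul_le {h t S : ℝ} (hh : 0 < h) (ht : t ≤ S) (hS : 0 ≤ S) : ⌊t / h⌋₊ * h ≤ S :=
  (le_div_iff₀ hh).1 <| (Nat.cast_le.2 (Nat.floor_mono (by gcongr))).trans
    (Nat.floor_le (by positivity : 0 ≤ S / h))

lemma sub_le_floor_div_mul {h : ℝ} (hh : 0 < h) (t : ℝ) : t - h ≤ ⌊t / h⌋₊ * h := by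
  have := mul_lt_mul_of_pos_right (Nat.lt_floor_add_one (t / h)) hh
  rw [div_mul_cancel₀ _ hh.ne'] at this
  linarith

lemma abs_floor_div_mul_sub_le {h t : ℝ} (hh : 0 < h) (ht : 0 ≤ t) : |⌊t / h⌋₊ * h - t| ≤ h :=
  abs_le.2 ⟨by linarith [sub_le_floor_div_mul hh t], by linarith [floor_div_mul_le hh le_rfl ht]⟩

/-- A bound on `[0, T]` for the Lipschitz constants of Euler schemes whose reaction term satisfies
`IsReaction f C K L`. -/
noncomputable def lipBound (C K L T : ℝ) : ℝ := Real.exp (K * T) * (C + T * L)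

lemma IsReaction.lipBound_nonneg {E : Type*} [NormedAddCommGroup E] {f : ℝ → E → ℝ → ℝ}
    {C K L T : ℝ} (hf : IsReaction f C K L) (hT : 0 ≤ T) :
    0 ≤ lipBound C K L T := by
  have hC := hf.bound_nonneg
  have hL := hf.lip_base_nonneg
  unfold lipBound
  positivity

variable {E : Type*} [NormedAddCommGroup E] [MeasurableSpace E]

/-- The explicit Euler scheme, as a function of continuous time which is constant on time steps. -/
noncomputable def eulerApprox (μ : Measure E) (h : ℝ) (f : ℝ → E → ℝ → ℝ) (t : ℝ) (x : E) : ℝ :=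
  eulerScheme μ h f ⌊t / h⌋₊ x

variable {μ : Measure E} {f : ℝ → E → ℝ → ℝ} {h : ℝ}

lemma eulerApprox_zero (x : E) : eulerApprox μ h f 0 x = 0 := by simp [eulerApprox]

lemma eulerApprox_add_step (hh : 0 < h) {t : ℝ} (ht : 0 ≤ t) (x : E) :
    eulerApprox μ h f (t + h) x = eulerApprox μ h f t x +
      h * (jumpOp μ (eulerApprox μ h f t) x + f (⌊t / h⌋₊ * h) x (eulerApprox μ h f t x)) := by
  have hfloor : ⌊(t + h) / h⌋₊ = ⌊t / h⌋₊ + 1 := by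
    rw [add_div, div_self hh.ne', Nat.floor_add_one (by positivity)]
  rw [eulerApprox, hfloor]
  rfl

variable [OpensMeasurableSpace E] [IsFiniteMeasure μ] {C K L : ℝ}

namespace IsReaction

lemma measurable_eulerApprox (hf : IsReaction f C K L) (hh : 0 ≤ h) :
    Measurable fun q : ℝ × E ↦ eulerApprox μ h f q.1 q.2 := by
  have hscheme : Measurable fun q : ℕ × E ↦ eulerScheme μ h f q.1 q.2 :=
    measurable_from_prod_countable_right fun n ↦ (hf.bddCont_eulerScheme hh n).cont.measurable
  have hfloor : Measurable fun q : ℝ × E ↦ ⌊q.1 / h⌋₊ :=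
    Nat.measurable_floor.comp (measurable_fst.div_const h)
  exact hscheme.comp (hfloor.prodMk measurable_snd)

lemma abs_eulerApprox_le (hf : IsReaction f C K L) (hh : 0 < h)
    (hcfl : h * (μ.real univ + K) ≤ 1) {t S : ℝ} (ht : t ≤ S) (hS : 0 ≤ S) (x : E) :
    |eulerApprox μ h f t x| ≤ S * C :=
  (hf.abs_eulerScheme_le hh.le hcfl _ x).trans
    (mul_le_mul_of_nonneg_right (floor_div_mul_le hh ht hS) hf.bound_nonneg)

lemma abs_eulerScheme_sub_eulerScheme_le (hf : IsReaction f C K L) (hh : 0 ≤ h)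
    (hcfl : h * (μ.real univ + K) ≤ 1) {S : ℝ} {a b : ℕ} (ha : a * h ≤ S) (hb : b * h ≤ S)
    (x : E) :
    |eulerScheme μ h f a x - eulerScheme μ h f b x| ≤ lipBound C K L S * |a * h - b * h| := by
  wlog hab : a ≤ b generalizing a b
  · rw [abs_sub_comm, abs_sub_comm (a * h)]
    exact this hb ha (le_of_not_ge hab)
  have hsum := dist_le_Ico_sum_of_dist_le (f := fun n ↦ eulerScheme μ h f n x) hab
    (d := fun _ ↦ lipBound C K L S * h) fun {k} _ hk ↦ by
      have hkS : k * h ≤ S := (mul_le_mul_of_nonneg_right (Nat.cast_le.2 hk.le) hh).trans hb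
      rw [dist_comm]
      exact hf.abs_eulerScheme_succ_sub_le hh hcfl hkS x
  refine hsum.trans_eq ?_
  have hle : (a : ℝ) * h ≤ b * h := by gcongr
  rw [Finset.sum_const, Nat.card_Ico, nsmul_eq_mul, Nat.cast_sub hab, abs_of_nonpos (by linarith)]
  ring

lemma abs_eulerApprox_sub_le (hf : IsReaction f C K L) (hh : 0 < h)
    (hcfl : h * (μ.real univ + K) ≤ 1) {S t t' : ℝ} (ht : t ∈ Icc 0 S) (ht' : t' ∈ Icc 0 S)
    (x x' : E) :
    |eulerApprox μ h f t x - eulerApprox μ h f t' x'| ≤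
      lipBound C K L S * (|t - t'| + h + ‖x - x'‖) := by
  have hS : 0 ≤ S := ht.1.trans ht.2
  have hΛ := hf.lipBound_nonneg hS
  have hfloor : |⌊t / h⌋₊ * h - ⌊t' / h⌋₊ * h| ≤ |t - t'| + h := by
    have h₁ := sub_le_floor_div_mul hh t
    have h₂ := sub_le_floor_div_mul hh t'
    have h₃ := floor_div_mul_le hh le_rfl ht.1
    have h₄ := floor_div_mul_le hh le_rfl ht'.1
    exact abs_le.2 ⟨by linarith [neg_le_abs (t - t')], by linarith [le_abs_self (t - t')]⟩
  have htime := hf.abs_eulerScheme_sub_eulerScheme_le hh.le hcfl (floor_div_mul_le hh ht.2 hS)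
    (floor_div_mul_le hh ht'.2 hS) x
  have hspace : |eulerScheme μ h f ⌊t' / h⌋₊ x - eulerScheme μ h f ⌊t' / h⌋₊ x'| ≤
      lipBound C K L S * ‖x - x'‖ :=
    (hf.abs_eulerScheme_sub_le hh.le hcfl (floor_div_mul_le hh ht'.2 hS) x x').trans <| by
      unfold lipBound
      gcongr
      linarith [hf.bound_nonneg]
  calc _ ≤ _ := _root_.abs_sub_le _ (eulerScheme μ h f ⌊t' / h⌋₊ x) _
    _ ≤ lipBound C K L S * (|t - t'| + h) + lipBound C K L S * ‖x - x'‖ :=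
        add_le_add (htime.trans (by gcongr)) hspace
    _ = _ := by ring

lemma measurable_eulerApprox_min (hf : IsReaction f C K L) (hh : 0 ≤ h) (S : ℝ) :
    Measurable fun q : ℝ × E ↦ eulerApprox μ h f (min q.1 S) q.2 :=
  (hf.measurable_eulerApprox hh).comp
    ((measurable_fst.min measurable_const).prodMk measurable_snd)

lemma abs_eulerApprox_min_le (hf : IsReaction f C K L) (hh : 0 < h)
    (hcfl : h * (μ.real univ + K) ≤ 1) {S : ℝ} (hS : 0 ≤ S) (q : ℝ × E) :
    |eulerApprox μ h f (min q.1 S) q.2| ≤ S * C :=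
  hf.abs_eulerApprox_le hh hcfl (min_le_right _ _) hS q.2

end IsReaction

end EulerApprox

section ApproxSol

variable {E : Type*} [NormedAddCommGroup E] [NormedSpace ℝ E]

/-- `V(t, x)` is of class `C²`, bounded by `M`, and its second derivative is bounded by `B`. -/
structure C2Bound (V : ℝ → E → ℝ) (M B : ℝ) : Prop where
  contDiff : ContDiff ℝ 2 fun q : ℝ × E ↦ V q.1 q.2
  abs_le : ∀ t x, |V t x| ≤ M
  norm_fderiv_fderiv_le : ∀ q, ‖fderiv ℝ (fderiv ℝ fun q : ℝ × E ↦ V q.1 q.2) q‖ ≤ B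

lemma hasDerivAt_of_contDiff_uncurry {V : ℝ → E → ℝ}
    (hV : ContDiff ℝ 2 fun q : ℝ × E ↦ V q.1 q.2) (t : ℝ) (x : E) :
    HasDerivAt (fun s ↦ V s x) (fderiv ℝ (fun q : ℝ × E ↦ V q.1 q.2) (t, x) (1, 0)) t :=
  HasFDerivAt.comp_hasDerivAt (f := fun s ↦ (s, x)) t
    (hV.differentiable (by norm_num) (t, x)).hasFDerivAt
    ((hasDerivAt_id t).prodMk (hasDerivAt_const t x))

namespace C2Bound

variable {V : ℝ → E → ℝ} {M B : ℝ}

lemma bound_nonneg (hV : C2Bound V M B) : 0 ≤ M := (abs_nonneg _).trans (hV.abs_le 0 0)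

lemma fderiv_bound_nonneg (hV : C2Bound V M B) : 0 ≤ B :=
  (by positivity : (0 : ℝ) ≤ _).trans (hV.norm_fderiv_fderiv_le 0)

lemma continuous (hV : C2Bound V M B) : Continuous fun q : ℝ × E ↦ V q.1 q.2 :=
  hV.contDiff.continuous

lemma bddCont (hV : C2Bound V M B) (t : ℝ) : BddCont (V t) :=
  ⟨hV.continuous.comp (Continuous.prodMk_right t), M, hV.abs_le t⟩

lemma abs_add_sub_sub_deriv_le (hV : C2Bound V M B) (t h : ℝ) (x : E) :
    |V (t + h) x - V t x - h * deriv (fun s ↦ V s x) t| ≤ B * h ^ 2 := by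
  have htaylor := abs_sub_sub_fderiv_le convex_univ hV.contDiff
    (fun q _ ↦ hV.norm_fderiv_fderiv_le q) (mem_univ (t, x)) (mem_univ ((t, x) + h • (1, 0)))
  rw [map_smul, ← (hasDerivAt_of_contDiff_uncurry hV.contDiff t x).deriv] at htaylor
  simpa [Prod.norm_def] using htaylor

lemma abs_add_sub_le (hV : C2Bound V M B) (t : ℝ) (x : E) {s : ℝ} (hs : s ∈ Icc 0 1) :
    |V (t + s) x - V t x| ≤ s * (2 * M + 2 * B) := by
  have hB := hV.fderiv_bound_nonneg
  have htaylor := _root_.abs_le.1 (hV.abs_add_sub_sub_deriv_le t s x)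
  have hderiv : |deriv (fun s ↦ V s x) t| ≤ 2 * M + B := by
    have h₁ := _root_.abs_le.1 (hV.abs_add_sub_sub_deriv_le t 1 x)
    have h₂ := _root_.abs_le.1 (hV.abs_le (t + 1) x)
    have h₃ := _root_.abs_le.1 (hV.abs_le t x)
    exact _root_.abs_le.2 ⟨by linarith [h₁.2], by linarith [h₁.1]⟩
  have hlin : |s * deriv (fun s ↦ V s x) t| ≤ s * (2 * M + B) := by
    rw [abs_mul, abs_of_nonneg hs.1]
    exact mul_le_mul_of_nonneg_left hderiv hs.1
  have hquad : B * s ^ 2 ≤ s * B := by nlinarith [mul_nonneg hB hs.1, hs.2]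
  have hlin' := _root_.abs_le.1 hlin
  exact _root_.abs_le.2 ⟨by linarith [htaylor.1, hlin'.1], by linarith [htaylor.2, hlin'.2]⟩

lemma abs_secondDiff_le (hV : C2Bound V M B) (t : ℝ) (x z : E) :
    |secondDiff (V t) x z| ≤ (2 * M + B) * min 1 (‖z‖ ^ 2) := by
  have hM := hV.bound_nonneg
  have hB := hV.fderiv_bound_nonneg
  have hlarge : |secondDiff (V t) x z| ≤ 2 * M := _root_.abs_secondDiff_le (hV.abs_le t) x z
  have hsmall : |secondDiff (V t) x z| ≤ B * ‖z‖ ^ 2 := by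
    simpa [secondDiff, Prod.norm_def] using abs_secondDiff_le_of_norm_fderiv_fderiv_le convex_univ
      hV.contDiff (fun q _ ↦ hV.norm_fderiv_fderiv_le q) (mem_univ (t, x))
      (mem_univ ((t, x) + (0, z))) (mem_univ _)
  rcases min_cases 1 (‖z‖ ^ 2) with ⟨h, -⟩ | ⟨h, -⟩ <;> rw [h]
  · linarith
  · nlinarith [sq_nonneg ‖z‖]

variable [MeasurableSpace E] [BorelSpace E] {μ : Measure E}

lemma integrable_secondDiff (hV : C2Bound V M B) (hμ : IsSymmLevyMeasure μ) (t : ℝ) (x : E) :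
    Integrable (secondDiff (V t) x) μ := by
  have hc := (hV.bddCont t).cont
  refine (hμ.integrable_min_one_sq.const_mul (2 * M + B)).mono' ?_
    (.of_forall (hV.abs_secondDiff_le t x))
  have : Continuous (secondDiff (V t) x) := by unfold secondDiff; fun_prop
  exact this.aestronglyMeasurable

end C2Bound

/-- `V` is bounded in `C²` by `M` and `B`, and solves `∂ₜ V = jumpOp μ V + f(t, x, V)`,
`V(0, ·) = 0` on `[0, T]` up to an error `η`. -/
structure IsApproxSol [MeasurableSpace E] (μ : Measure E) (f : ℝ → E → ℝ → ℝ) (T η M B : ℝ)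
    (V : ℝ → E → ℝ) : Prop extends C2Bound V M B where
  abs_error_le : ∀ t x, 0 ≤ t → t ≤ T →
    |deriv (fun s ↦ V s x) t - jumpOp μ (V t) x - f t x (V t x)| ≤ η
  abs_zero_le : ∀ x, |V 0 x| ≤ η

variable [MeasurableSpace E] {μ : Measure E} {f : ℝ → E → ℝ → ℝ} {T η M B : ℝ} {V : ℝ → E → ℝ}

lemma IsApproxSol.of_abs_jumpOp_sub_le (hV : IsApproxSol μ f T η M B V) {μ' : Measure E} {d : ℝ}
    (hd0 : 0 ≤ d) (hd : ∀ t x, |jumpOp μ' (V t) x - jumpOp μ (V t) x| ≤ d) :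
    IsApproxSol μ' f T (η + d) M B V where
  toC2Bound := hV.toC2Bound
  abs_error_le t x ht htT := by
    have h₁ := abs_le.1 (hV.abs_error_le t x ht htT)
    have h₂ := abs_le.1 (hd t x)
    exact abs_le.2 ⟨by linarith [h₁.1, h₂.2], by linarith [h₁.2, h₂.1]⟩
  abs_zero_le x := by linarith [hV.abs_zero_le x]

lemma IsApproxSol.mono (hV : IsApproxSol μ f T η M B V) {η' : ℝ} (hη : η ≤ η') :
    IsApproxSol μ f T η' M B V where
  toC2Bound := hV.toC2Bound
  abs_error_le t x ht htT := (hV.abs_error_le t x ht htT).trans hη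
  abs_zero_le x := (hV.abs_zero_le x).trans hη

end ApproxSol

section Existence

variable {E : Type*} [NormedAddCommGroup E] [NormedSpace ℝ E] [MeasurableSpace E]
  {μ : Measure E} {f : ℝ → E → ℝ → ℝ} {C K L h δ B T : ℝ} {ν : Measure (ℝ × E)}

/-- The explicit Euler scheme, frozen after time `S` to make it bounded, and mollified by `ν`. -/
noncomputable def smoothApprox (μ : Measure E) (ν : Measure (ℝ × E)) (h : ℝ) (f : ℝ → E → ℝ → ℝ)
    (S t : ℝ) (x : E) : ℝ :=
  mollify ν (fun q ↦ eulerApprox μ h f (min q.1 S) q.2) (t, x)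

namespace IsForwardMollifier

variable [OpensMeasurableSpace E] [IsFiniteMeasure μ]

lemma ae_abs_eulerApprox_sub_le (hν : IsForwardMollifier ν δ B) (hδ : δ ≤ 1)
    (hf : IsReaction f C K L) (hh : 0 < h) (hcfl : h * (μ.real univ + K) ≤ 1) {t : ℝ}
    (ht : t ∈ Icc 0 T) (x : E) :
    ∀ᵐ y ∂ν, |eulerApprox μ h f (t - y.1) (x - y.2) - eulerApprox μ h f t x| ≤
      lipBound C K L (T + 3) * (3 * δ + h) := by
  filter_upwards [hν.ae_mem] with y ⟨⟨hy₁, hy₂⟩, hy⟩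
  refine (hf.abs_eulerApprox_sub_le (S := T + 3) hh hcfl
    ⟨by linarith [ht.1], by linarith [ht.2]⟩ ⟨ht.1, by linarith [ht.2]⟩ _ _).trans ?_
  have hΛ := hf.lipBound_nonneg (T := T + 3) (by linarith [ht.1, ht.2])
  refine mul_le_mul_of_nonneg_left ?_ hΛ
  rw [sub_sub_cancel_left, sub_sub_cancel_left, norm_neg, abs_of_nonneg (by linarith)]
  linarith

variable [BorelSpace E] [SecondCountableTopology E]

lemma abs_smoothApprox_sub_le (hν : IsForwardMollifier ν δ B) (hδ : δ ≤ 1)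
    (hf : IsReaction f C K L) (hh : 0 < h) (hcfl : h * (μ.real univ + K) ≤ 1) {t : ℝ}
    (ht : t ∈ Icc 0 T) (x : E) :
    |smoothApprox μ ν h f (T + 3) t x - eulerApprox μ h f t x| ≤
      lipBound C K L (T + 3) * (3 * δ + h) := by
  have := hν.isProbabilityMeasure
  have hS : 0 ≤ T + 3 := by linarith [ht.1, ht.2]
  refine abs_integral_sub_le (integrable_translate (hf.measurable_eulerApprox_min hh.le _)
    (hf.abs_eulerApprox_min_le hh hcfl hS) _) ?_
  filter_upwards [hν.ae_mem, hν.ae_abs_eulerApprox_sub_le hδ hf hh hcfl ht x] with y hy hxy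
  have hmin : min (t - y.1) (T + 3) = t - y.1 := min_eq_left (by linarith [hy.1.1, ht.2])
  simpa [hmin] using hxy

lemma c2Bound_smoothApprox (hν : IsForwardMollifier ν δ B) (hf : IsReaction f C K L) (hh : 0 < h)
    (hcfl : h * (μ.real univ + K) ≤ 1) {S : ℝ} (hS : 0 ≤ S) :
    C2Bound (smoothApprox μ ν h f S) (S * C) (B * (S * C)) := by
  have := hν.isProbabilityMeasure
  have hm := hf.measurable_eulerApprox_min (μ := μ) hh.le S
  have hb := hf.abs_eulerApprox_min_le hh hcfl hS
  refine ⟨hν.contDiff _ _ hm hb, fun t x ↦ ?_, hν.norm_fderiv_fderiv_le _ _ hm hb⟩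
  simpa [smoothApprox, mollify] using abs_integral_sub_le (c := 0)
    (integrable_translate (ν := ν) hm hb (t, x))
    (.of_forall fun y ↦ by simpa using hb ((t, x) - y))

lemma abs_reaction_sub_le (hν : IsForwardMollifier ν δ B) (hδ : δ ≤ 1) (hf : IsReaction f C K L)
    (hh : 0 < h) (hcfl : h * (μ.real univ + K) ≤ 1) {t : ℝ} (ht : t ∈ Icc 0 T) (x : E) :
    ∀ᵐ y ∂ν, |f (⌊(t - y.1) / h⌋₊ * h) (x - y.2) (eulerApprox μ h f (t - y.1) (x - y.2)) -
      f t x (smoothApprox μ ν h f (T + 3) t x)| ≤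
        (L + 2 * K * lipBound C K L (T + 3)) * (3 * δ + h) := by
  filter_upwards [hν.ae_mem, hν.ae_abs_eulerApprox_sub_le hδ hf hh hcfl ht x]
    with y ⟨⟨hy₁, hy₂⟩, hy⟩ hxy
  have hsmooth := hν.abs_smoothApprox_sub_le hδ hf hh hcfl ht x
  have hbase : |⌊(t - y.1) / h⌋₊ * h - t| + ‖x - y.2 - x‖ ≤ 3 * δ + h := by
    have hfloor := abs_le.1 (abs_floor_div_mul_sub_le hh (by linarith [ht.1] : 0 ≤ t - y.1))
    have : |⌊(t - y.1) / h⌋₊ * h - t| ≤ 2 * δ + h :=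
      abs_le.2 ⟨by linarith [hfloor.1], by linarith [hfloor.2]⟩
    rw [sub_sub_cancel_left, norm_neg]
    linarith
  have hvalue : |eulerApprox μ h f (t - y.1) (x - y.2) - smoothApprox μ ν h f (T + 3) t x| ≤
      2 * (lipBound C K L (T + 3) * (3 * δ + h)) := by
    refine (abs_sub_le _ (eulerApprox μ h f t x) _).trans ?_
    rw [abs_sub_comm] at hsmooth
    linarith
  refine (hf.abs_sub_le _ _ _ _ _ _).trans ?_
  have h₁ := mul_le_mul_of_nonneg_left hvalue hf.lip_value_nonneg
  have h₂ := mul_le_mul_of_nonneg_left hbase hf.lip_base_nonneg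
  linarith

-- Averaging the recursion of the scheme over `ν` gives a discrete equation for the mollified
-- scheme: the jump operator commutes with `mollify`, the reaction term is only Lipschitz.
lemma abs_smoothApprox_step_le (hν : IsForwardMollifier ν δ B) (hδ : δ ≤ 1)
    (hf : IsReaction f C K L) (hh : 0 < h) (hh1 : h ≤ 1) (hcfl : h * (μ.real univ + K) ≤ 1)
    {t : ℝ} (ht : t ∈ Icc 0 T) (x : E) :
    |smoothApprox μ ν h f (T + 3) (t + h) x - smoothApprox μ ν h f (T + 3) t x -
      h * jumpOp μ (smoothApprox μ ν h f (T + 3) t) x -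
        h * f t x (smoothApprox μ ν h f (T + 3) t x)| ≤
      h * ((L + 2 * K * lipBound C K L (T + 3)) * (3 * δ + h)) := by
  have := hν.isProbabilityMeasure
  have hm := hf.measurable_eulerApprox_min (μ := μ) hh.le (T + 3)
  have hb := hf.abs_eulerApprox_min_le (μ := μ) hh hcfl (S := T + 3) (by linarith [ht.1, ht.2])
  have hi := integrable_translate (ν := ν) hm hb
  have hJ := (integrable_jumpOp_translate (μ := μ) (ν := ν) hm hb t x).const_mul h
  have hjump : jumpOp μ (smoothApprox μ ν h f (T + 3) t) x = _ := jumpOp_mollify hm hb t x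
  rw [hjump, ← integral_const_mul]
  set v := smoothApprox μ ν h f (T + 3) t x with hv
  have hV : ∀ s, smoothApprox μ ν h f (T + 3) s x =
      ∫ y, eulerApprox μ h f (min ((s, x) - y).1 (T + 3)) ((s, x) - y).2 ∂ν := fun _ ↦ rfl
  rw [hV]
  conv_lhs => enter [1, 1, 1, 2]; rw [hv, hV]
  rw [← integral_sub (hi _) (hi _), ← integral_sub (by exact (hi _).sub (hi _)) hJ]
  refine abs_integral_sub_le (((hi _).sub (hi _)).sub hJ) ?_
  filter_upwards [hν.ae_mem, hν.abs_reaction_sub_le hδ hf hh hcfl ht x] with y hy hreact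
  have hmin : min (t - y.1) (T + 3) = t - y.1 := min_eq_left (by linarith [hy.1.1, ht.2])
  have hmin' : min (t + h - y.1) (T + 3) = t - y.1 + h := by
    rw [min_eq_left (by linarith [hy.1.1, ht.2])]; ring
  have hstep := eulerApprox_add_step (μ := μ) (f := f) hh
    (by linarith [hy.1.2, ht.1] : 0 ≤ t - y.1) (x - y.2)
  simp only [Pi.sub_apply, Prod.fst_sub, Prod.snd_sub, hmin, hmin', hstep]
  rw [add_sub_cancel_left, mul_add, add_sub_cancel_left, ← mul_sub, abs_mul, abs_of_pos hh]
  exact mul_le_mul_of_nonneg_left hreact hh.le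

lemma isApproxSol_smoothApprox (hν : IsForwardMollifier ν δ B) (hδ : δ ≤ 1)
    (hf : IsReaction f C K L) (hh : 0 < h) (hh1 : h ≤ 1) (hcfl : h * (μ.real univ + K) ≤ 1)
    (hT : 0 ≤ T) {η : ℝ} (hη₀ : lipBound C K L (T + 3) * (3 * δ + h) ≤ η)
    (hη : (L + 2 * K * lipBound C K L (T + 3)) * (3 * δ + h) + B * ((T + 3) * C) * h ≤ η) :
    IsApproxSol μ f T η ((T + 3) * C) (B * ((T + 3) * C)) (smoothApprox μ ν h f (T + 3)) := by
  have hV := hν.c2Bound_smoothApprox hf hh hcfl (S := T + 3) (by linarith)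
  refine ⟨hV, fun t x ht htT ↦ ?_, fun x ↦ ?_⟩
  · have htaylor := abs_le.1 (hV.abs_add_sub_sub_deriv_le t h x)
    have hstep := abs_le.1 (hν.abs_smoothApprox_step_le hδ hf hh hh1 hcfl ⟨ht, htT⟩ x)
    have hη' := mul_le_mul_of_nonneg_left hη hh.le
    refine le_of_mul_le_mul_left ?_ hh
    rw [← abs_of_pos hh, ← abs_mul, abs_of_pos hh, abs_le]
    constructor <;> linarith [htaylor.1, htaylor.2, hstep.1, hstep.2]
  · simpa [eulerApprox_zero] using
      (hν.abs_smoothApprox_sub_le hδ hf hh hcfl ⟨le_rfl, hT⟩ x).trans hη₀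

end IsForwardMollifier

end Existence

section Truncation

variable {E : Type*} [NormedAddCommGroup E] [MeasurableSpace E]

/-- The jumps of size larger than `1 / (j + 1)`. -/
noncomputable def truncatedMeasure (μ : Measure E) (j : ℕ) : Measure E :=
  μ.restrict {z | 1 / ((j : ℝ) + 1) < ‖z‖}

/-- The number of time steps of the `j`-th scheme on a unit interval of time. It is an integer, so
that the scheme keeps the period `1` in time of the equation. -/
noncomputable def stepsPerUnit (μ : Measure E) (K : ℝ) (j : ℕ) : ℕ :=
  ⌈(truncatedMeasure μ j).real univ + K⌉₊ + j + 1

/-- The time step of the `j`-th scheme; `K` is the Lipschitz constant of the reaction term in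
the CFL condition. -/
noncomputable def timeStep (μ : Measure E) (K : ℝ) (j : ℕ) : ℝ := 1 / stepsPerUnit μ K j

/-- The part of the Lévy integral `∫ min 1 |z|²` which is lost in the `j`-th truncation. -/
noncomputable def smallJumpMoment (μ : Measure E) (j : ℕ) : ℝ :=
  ∫ z in {z | 1 / ((j : ℝ) + 1) < ‖z‖}ᶜ, min 1 (‖z‖ ^ 2) ∂μ

variable {μ : Measure E} {K : ℝ}

lemma stepsPerUnit_pos (j : ℕ) : 0 < stepsPerUnit μ K j := Nat.succ_pos _

lemma timeStep_pos (j : ℕ) : 0 < timeStep μ K j :=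
  one_div_pos.2 (Nat.cast_pos.2 (stepsPerUnit_pos j))

lemma stepsPerUnit_mul_timeStep (j : ℕ) : stepsPerUnit μ K j * timeStep μ K j = 1 :=
  mul_one_div_cancel (Nat.cast_pos.2 (stepsPerUnit_pos j)).ne'

lemma floor_add_natCast_div_timeStep {t : ℝ} (ht : 0 ≤ t) (j l : ℕ) :
    ⌊(t + l) / timeStep μ K j⌋₊ = ⌊t / timeStep μ K j⌋₊ + l * stepsPerUnit μ K j := by
  have hh := timeStep_pos (μ := μ) (K := K) j
  rw [← Nat.floor_add_natCast (div_nonneg ht hh.le), add_div, Nat.cast_mul,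
    eq_div_of_mul_eq hh.ne' (stepsPerUnit_mul_timeStep j), mul_one_div]

lemma timeStep_le (j : ℕ) : timeStep μ K j ≤ 1 / ((j : ℝ) + 1) := by
  refine one_div_le_one_div_of_le (by positivity) ?_
  have : j + 1 ≤ stepsPerUnit μ K j := by unfold stepsPerUnit; omega
  exact_mod_cast this

lemma timeStep_le_one (j : ℕ) : timeStep μ K j ≤ 1 :=
  (timeStep_le j).trans <| (div_le_one (by positivity)).2 (by linarith [j.cast_nonneg (α := ℝ)])

lemma tendsto_timeStep : Tendsto (timeStep μ K) atTop (𝓝 0) :=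
  squeeze_zero (fun j ↦ (timeStep_pos j).le) timeStep_le tendsto_one_div_add_atTop_nhds_zero_nat

lemma timeStep_mul_le_one (j : ℕ) :
    timeStep μ K j * ((truncatedMeasure μ j).real univ + K) ≤ 1 := by
  have hpos : (0 : ℝ) < stepsPerUnit μ K j := Nat.cast_pos.2 (stepsPerUnit_pos j)
  have hceil : (⌈(truncatedMeasure μ j).real univ + K⌉₊ : ℝ) ≤ stepsPerUnit μ K j := by
    exact_mod_cast (by unfold stepsPerUnit; omega)
  rw [timeStep, one_div_mul_eq_div, div_le_one hpos]
  exact (Nat.le_ceil _).trans hceil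

lemma exists_mem_Ioo_zero_one_mul_lt (Q : ℝ) {η : ℝ} (hη : 0 < η) :
    ∃ δ : ℝ, 0 < δ ∧ δ < 1 ∧ Q * δ < η := by
  have hlim : Tendsto (fun δ : ℝ ↦ Q * δ) (𝓝[>] 0) (𝓝 0) :=
    ((continuous_const_mul Q).tendsto' 0 0 (mul_zero Q)).mono_left nhdsWithin_le_nhds
  have hlt : ∀ᶠ δ : ℝ in 𝓝[>] 0, δ < 1 := nhdsWithin_le_nhds (gt_mem_nhds one_pos)
  have hpos : ∀ᶠ δ : ℝ in 𝓝[>] 0, 0 < δ := eventually_mem_nhdsWithin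
  exact (hpos.and (hlt.and (hlim.eventually_lt_const hη))).exists

lemma smallJumpMoment_nonneg (j : ℕ) : 0 ≤ smallJumpMoment μ j :=
  integral_nonneg fun _ ↦ by positivity

namespace IsSymmLevyMeasure

lemma isFiniteMeasure_truncatedMeasure (hμ : IsSymmLevyMeasure μ) (j : ℕ) :
    IsFiniteMeasure (truncatedMeasure μ j) :=
  ⟨by
    rw [truncatedMeasure, Measure.restrict_apply_univ]
    exact hμ.measure_norm_gt_lt_top (by positivity)⟩

variable [OpensMeasurableSpace E]

lemma tendsto_smallJumpMoment (hμ : IsSymmLevyMeasure μ) :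
    Tendsto (smallJumpMoment μ) atTop (𝓝 0) := by
  have hanti : Antitone fun j : ℕ ↦ {z : E | 1 / ((j : ℝ) + 1) < ‖z‖}ᶜ := fun i j hij ↦
    compl_subset_compl.2 fun z (hz : 1 / ((i : ℝ) + 1) < ‖z‖) ↦
      (one_div_le_one_div_of_le (by positivity) (by gcongr)).trans_lt hz
  have hlim := tendsto_setIntegral_of_antitone (μ := μ) (f := fun z : E ↦ min 1 (‖z‖ ^ 2))
    (fun j ↦ (measurableSet_lt measurable_const measurable_norm).compl) hanti
    ⟨0, hμ.integrable_min_one_sq.integrableOn⟩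
  rwa [setIntegral_eq_zero_of_forall_eq_zero fun z hz ↦ ?_] at hlim
  have hz0 : ‖z‖ ≤ 0 := ge_of_tendsto' tendsto_one_div_add_atTop_nhds_zero_nat fun j ↦
    not_lt.1 (mem_iInter.1 hz j)
  simp [le_antisymm hz0 (norm_nonneg z)]

variable [NormedSpace ℝ E] [BorelSpace E] {V : ℝ → E → ℝ} {M B : ℝ}

lemma abs_jumpOp_truncatedMeasure_sub_le (hμ : IsSymmLevyMeasure μ) (hV : C2Bound V M B) (j : ℕ)
    (t : ℝ) (x : E) :
    |jumpOp (truncatedMeasure μ j) (V t) x - jumpOp μ (V t) x| ≤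
      (2 * M + B) * smallJumpMoment μ j := by
  have hsplit : jumpOp (truncatedMeasure μ j) (V t) x - jumpOp μ (V t) x =
      -∫ z in {z | 1 / ((j : ℝ) + 1) < ‖z‖}ᶜ, secondDiff (V t) x z ∂μ := by
    unfold jumpOp truncatedMeasure
    rw [← integral_add_compl (measurableSet_lt measurable_const measurable_norm)
      (hV.integrable_secondDiff hμ t x)]
    ring
  rw [hsplit, abs_neg, smallJumpMoment, ← integral_const_mul]
  exact norm_integral_le_of_norm_le (f := secondDiff (V t) x)
    (hμ.integrable_min_one_sq.const_mul _).integrableOn (.of_forall (hV.abs_secondDiff_le t x))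

variable [FiniteDimensional ℝ E]

-- The radius `δ` of the mollifier is chosen before the level `j`, since the second derivatives
-- of the mollified scheme, hence the consistency error of level `j`, depend on `δ`.
lemma exists_isApproxSol (hμ : IsSymmLevyMeasure μ) (C K L : ℝ) {T η : ℝ} (hT : 0 ≤ T)
    (hη : 0 < η) :
    ∃ B, ∀ f : ℝ → E → ℝ → ℝ, IsReaction f C K L →
      ∃ V, IsApproxSol μ f T η ((T + 3) * C) B V := by
  set Λ := lipBound C K L (T + 3)
  set M := (T + 3) * C
  set Q := L + 2 * K * Λ + Λ
  obtain ⟨δ, hδ, hδ1, hδη⟩ := exists_mem_Ioo_zero_one_mul_lt (3 * Q) hη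
  obtain ⟨ν, B, hB, hν⟩ := exists_isForwardMollifier E hδ
  have hlim : Tendsto (fun j ↦ Q * (3 * δ + timeStep μ K j) + B * M * timeStep μ K j +
      (2 * M + B * M) * smallJumpMoment μ j) atTop (𝓝 (3 * Q * δ)) := by
    rw [show 3 * Q * δ = Q * (3 * δ) by ring]
    have hstep := tendsto_timeStep (μ := μ) (K := K)
    simpa using (((hstep.const_add (3 * δ)).const_mul Q).add (hstep.const_mul (B * M))).add
      (hμ.tendsto_smallJumpMoment.const_mul (2 * M + B * M))
  obtain ⟨j, hj⟩ := (hlim.eventually_lt_const hδη).exists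
  refine ⟨B * M, fun f hf ↦ ?_⟩
  have := hμ.isFiniteMeasure_truncatedMeasure j
  set h := timeStep μ K j
  set d := (2 * M + B * M) * smallJumpMoment μ j
  have hh : 0 < h := timeStep_pos j
  have hΛ : 0 ≤ Λ := hf.lipBound_nonneg (by linarith)
  have hM : 0 ≤ M := mul_nonneg (by linarith) hf.bound_nonneg
  have hd : 0 ≤ d := mul_nonneg (by positivity) (smallJumpMoment_nonneg j)
  have hBMh : 0 ≤ B * M * h := by positivity
  have hreact : 0 ≤ (L + 2 * K * Λ) * (3 * δ + h) := by
    have := hf.lip_base_nonneg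
    have := hf.lip_value_nonneg
    positivity
  have hlip : 0 ≤ Λ * (3 * δ + h) := by positivity
  have hj' : (L + 2 * K * Λ) * (3 * δ + h) + Λ * (3 * δ + h) + B * M * h + d ≤ η := by
    rw [← add_mul]; exact hj.le
  have hcfl := timeStep_mul_le_one (μ := μ) (K := K) j
  have hV := hν.isApproxSol_smoothApprox hδ1.le hf hh (timeStep_le_one j) hcfl hT (η := η - d)
    (by linarith [hj']) (by linarith [hj'])
  refine ⟨smoothApprox (truncatedMeasure μ j) ν h f (T + 3), ?_⟩
  simpa using hV.of_abs_jumpOp_sub_le hd fun t x ↦ by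
    rw [abs_sub_comm]
    exact hμ.abs_jumpOp_truncatedMeasure_sub_le hV.toC2Bound j t x

end IsSymmLevyMeasure

end Truncation

/-! ### Convergence of the scheme -/

section Convergence

variable {E : Type*} [NormedAddCommGroup E] [NormedSpace ℝ E] {f : ℝ → E → ℝ → ℝ}
  {C K L T η M B h : ℝ} {V : ℝ → E → ℝ}

variable [MeasurableSpace E]

/-- The `j`-th explicit scheme for `∂ₜ u = jumpOp μ u + f(t, x, u)`, as a function of continuous
time. -/
noncomputable def levelApprox (μ : Measure E) (K : ℝ) (f : ℝ → E → ℝ → ℝ) (j : ℕ) (t : ℝ) (x : E) :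
    ℝ :=
  eulerApprox (truncatedMeasure μ j) (timeStep μ K j) f t x

/-- The limit of the explicit schemes, which is the solution of `∂ₜ u = jumpOp μ u + f(t, x, u)`,
`u(0, ·) = 0`, when `f` is Lipschitz with constant `K` in its last argument. -/
noncomputable def limitSol (μ : Measure E) (K : ℝ) (f : ℝ → E → ℝ → ℝ) (t : ℝ) (x : E) : ℝ :=
  limUnder atTop fun j ↦ levelApprox μ K f j t x

variable [OpensMeasurableSpace E] {μ : Measure E}

namespace IsApproxSol

lemma abs_sub_eulerScheme_le [IsFiniteMeasure μ] (hV : IsApproxSol μ f T η M B V)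
    (hf : IsReaction f C K L) (hh : 0 < h) (hcfl : h * (μ.real univ + K) ≤ 1) {n : ℕ}
    (hn : n * h ≤ T) (x : E) :
    |V (n * h) x - eulerScheme μ h f n x| ≤ Real.exp (K * T) * (η + T * (η + B * h)) := by
  have hη : 0 ≤ η := (abs_nonneg _).trans (hV.abs_zero_le 0)
  have hB := hV.fderiv_bound_nonneg
  have hseq : IsEulerSeq μ h (fun n x ↦
      (V ((n + 1 : ℕ) * h) x - V (n * h) x) / h - jumpOp μ (V (n * h)) x) fun n ↦ V (n * h) :=
    fun n x ↦ by field_simp; ring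
  refine hseq.abs_sub_le_exp_mul (isEulerSeq_eulerScheme μ h f) (fun n ↦ hV.bddCont _)
    (hf.bddCont_eulerScheme hh.le) hh.le hf.lip_value_nonneg hcfl hη (by positivity) hn
    (fun x ↦ by simpa using hV.abs_zero_le x) (fun k hk x ↦ ?_) x
  have hkT : k * h ≤ T := (mul_le_mul_of_nonneg_right (Nat.cast_le.2 hk.le) hh.le).trans hn
  have hquot : |(V ((k + 1 : ℕ) * h) x - V (k * h) x) / h - deriv (fun s ↦ V s x) (k * h)| ≤
      B * h := by
    have htaylor := hV.abs_add_sub_sub_deriv_le (k * h) h x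
    rw [show ((k + 1 : ℕ) : ℝ) * h = k * h + h by push_cast; ring, div_sub' hh.ne', abs_div,
      abs_of_pos hh, div_le_iff₀ hh]
    linarith
  have h₁ := abs_le.1 hquot
  have h₂ := abs_le.1 (hV.abs_error_le (k * h) x (by positivity) hkT)
  have h₃ := abs_le.1 (hf.lip_value (k * h) x (V (k * h) x) (eulerScheme μ h f k x))
  exact abs_le.2 ⟨by linarith [h₁.1, h₂.1, h₃.1], by linarith [h₁.2, h₂.2, h₃.2]⟩

lemma abs_sub_eulerApprox_le [IsFiniteMeasure μ] (hV : IsApproxSol μ f T η M B V)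
    (hf : IsReaction f C K L) (hh : 0 < h) (hh1 : h ≤ 1) (hcfl : h * (μ.real univ + K) ≤ 1) {t : ℝ}
    (ht : t ∈ Icc 0 T) (x : E) :
    |V t x - eulerApprox μ h f t x| ≤
      Real.exp (K * T) * (η + T * (η + B * h)) + h * (2 * M + 2 * B) := by
  have hfloor := floor_div_mul_le hh le_rfl ht.1
  have hfloor' := sub_le_floor_div_mul hh t
  have hgrid := hV.abs_sub_eulerScheme_le hf hh hcfl (hfloor.trans ht.2) x
  have htime := hV.abs_add_sub_le (⌊t / h⌋₊ * h) x (s := t - ⌊t / h⌋₊ * h)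
    ⟨by linarith, by linarith⟩
  rw [add_sub_cancel] at htime
  have hMB : 0 ≤ 2 * M + 2 * B := by linarith [hV.bound_nonneg, hV.fderiv_bound_nonneg]
  have hle : (t - ⌊t / h⌋₊ * h) * (2 * M + 2 * B) ≤ h * (2 * M + 2 * B) := by
    gcongr
    linarith
  exact (abs_sub_le _ (V (⌊t / h⌋₊ * h) x) _).trans (by rw [eulerApprox]; linarith)

end IsApproxSol

namespace IsSymmLevyMeasure

variable [BorelSpace E] [FiniteDimensional ℝ E]

lemma exists_abs_sub_levelApprox_le (hμ : IsSymmLevyMeasure μ) (C K L : ℝ) {T ε : ℝ} (hT : 0 ≤ T)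
    (hε : 0 < ε) :
    ∃ (B : ℝ) (J : ℕ), ∀ f : ℝ → E → ℝ → ℝ, IsReaction f C K L →
      ∃ V, IsApproxSol μ f T ε ((T + 3) * C) B V ∧
        ∀ j ≥ J, ∀ t ∈ Icc 0 T, ∀ x, |V t x - levelApprox μ K f j t x| ≤ ε := by
  obtain ⟨η, hη, -, hηε⟩ := exists_mem_Ioo_zero_one_mul_lt (Real.exp (K * T) * (1 + T) + 1) hε
  have hexp : 0 ≤ Real.exp (K * T) * (1 + T) := by positivity
  have hlt : Real.exp (K * T) * (η + T * η) < ε := by linarith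
  obtain ⟨B, hB⟩ := hμ.exists_isApproxSol C K L hT hη
  set M := (T + 3) * C
  have hlim : Tendsto (fun j ↦ Real.exp (K * T) * (η + (2 * M + B) * smallJumpMoment μ j +
      T * (η + (2 * M + B) * smallJumpMoment μ j + B * timeStep μ K j)) +
        timeStep μ K j * (2 * M + 2 * B)) atTop (𝓝 (Real.exp (K * T) * (η + T * η))) := by
    have hstep := tendsto_timeStep (μ := μ) (K := K)
    have hcons := (hμ.tendsto_smallJumpMoment.const_mul (2 * M + B)).const_add η
    simpa using ((hcons.add ((hcons.add (hstep.const_mul B)).const_mul T)).const_mul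
      (Real.exp (K * T))).add (hstep.mul_const (2 * M + 2 * B))
  obtain ⟨J, hJ⟩ := eventually_atTop.1 (hlim.eventually_le_const hlt)
  refine ⟨B, J, fun f hf ↦ ?_⟩
  obtain ⟨V, hV⟩ := hB f hf
  refine ⟨V, hV.mono (by nlinarith), fun j hj t ht x ↦ le_trans ?_ (hJ j hj)⟩
  have := hμ.isFiniteMeasure_truncatedMeasure j
  exact (hV.of_abs_jumpOp_sub_le ((abs_nonneg _).trans
    (hμ.abs_jumpOp_truncatedMeasure_sub_le hV.toC2Bound j 0 0))
    (hμ.abs_jumpOp_truncatedMeasure_sub_le hV.toC2Bound j)).abs_sub_eulerApprox_le hf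
      (timeStep_pos j) (timeStep_le_one j) (timeStep_mul_le_one j) ht x

lemma tendsto_levelApprox (hμ : IsSymmLevyMeasure μ) (hf : IsReaction f C K L) {t : ℝ}
    (ht : 0 ≤ t) (x : E) :
    Tendsto (fun j ↦ levelApprox μ K f j t x) atTop (𝓝 (limitSol μ K f t x)) := by
  refine (Metric.cauchySeq_iff'.2 fun ε hε ↦ ?_).tendsto_limUnder
  obtain ⟨B, J, h⟩ := hμ.exists_abs_sub_levelApprox_le C K L ht (by positivity : 0 < ε / 3)
  obtain ⟨V, -, hV⟩ := h f hf
  refine ⟨J, fun j hj ↦ ?_⟩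
  have hj := hV j hj t ⟨ht, le_rfl⟩ x
  have hJ := hV J le_rfl t ⟨ht, le_rfl⟩ x
  rw [abs_sub_comm] at hj
  exact (abs_sub_le _ (V t x) _).trans_lt (by linarith)

lemma exists_isApproxSol_abs_sub_limitSol_le (hμ : IsSymmLevyMeasure μ) (C K L : ℝ) {T ε : ℝ}
    (hT : 0 ≤ T) (hε : 0 < ε) :
    ∃ (B : ℝ) (J : ℕ), ∀ f : ℝ → E → ℝ → ℝ, IsReaction f C K L →
      (∃ V, IsApproxSol μ f T ε ((T + 3) * C) B V ∧
        ∀ t ∈ Icc 0 T, ∀ x, |V t x - limitSol μ K f t x| ≤ ε) ∧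
      ∀ j ≥ J, ∀ t ∈ Icc 0 T, ∀ x, |levelApprox μ K f j t x - limitSol μ K f t x| ≤ ε := by
  obtain ⟨B, J, h⟩ := hμ.exists_abs_sub_levelApprox_le C K L hT (half_pos hε)
  refine ⟨B, J, fun f hf ↦ ?_⟩
  obtain ⟨V, hV, hVJ⟩ := h f hf
  have hVlim (t) (ht : t ∈ Icc 0 T) (x) : |V t x - limitSol μ K f t x| ≤ ε / 2 :=
    le_of_tendsto ((tendsto_const_nhds.sub (hμ.tendsto_levelApprox hf ht.1 x)).abs)
      (eventually_atTop.2 ⟨J, fun j hj ↦ hVJ j hj t ht x⟩)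
  refine ⟨⟨V, hV.mono (by linarith), fun t ht x ↦ (hVlim t ht x).trans (by linarith)⟩,
    fun j hj t ht x ↦ ?_⟩
  have hj := hVJ j hj t ht x
  rw [abs_sub_comm] at hj
  exact (abs_sub_le _ (V t x) _).trans (by linarith [hVlim t ht x])

lemma abs_limitSol_le (hμ : IsSymmLevyMeasure μ) (hf : IsReaction f C K L) {t : ℝ} (ht : 0 ≤ t)
    (x : E) : |limitSol μ K f t x| ≤ t * C := by
  refine le_of_tendsto (hμ.tendsto_levelApprox hf ht x).abs (.of_forall fun j ↦ ?_)
  have := hμ.isFiniteMeasure_truncatedMeasure j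
  exact hf.abs_eulerApprox_le (timeStep_pos j) (timeStep_mul_le_one j) le_rfl ht x

end IsSymmLevyMeasure

end Convergence

/-! ### Limits of approximate solutions -/

lemma continuous_slice_of_continuousOn {X Y Z : Type*} [TopologicalSpace X] [TopologicalSpace Y]
    [TopologicalSpace Z] {S : Set X} {u : X → Y → Z}
    (hu : ContinuousOn (fun q : X × Y ↦ u q.1 q.2) (S ×ˢ univ)) {t : X} (ht : t ∈ S) :
    Continuous (u t) :=
  continuousOn_univ.1 <| hu.comp (Continuous.prodMk_right t).continuousOn fun _ _ ↦ ⟨ht, trivial⟩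

lemma secondDiff_neg {E : Type*} [NormedAddCommGroup E] (u : E → ℝ) (x z : E) :
    secondDiff (fun y ↦ -u y) x z = -secondDiff u x z := by
  unfold secondDiff; ring

/-- The reaction term of the equation solved by `-u` when `u` solves the one with reaction `f`. -/
def reflectedReaction {E : Type*} (f : ℝ → E → ℝ → ℝ) (t : ℝ) (x : E) (v : ℝ) : ℝ := -f t x (-v)

section ApproxLimit

variable {E : Type*} [NormedAddCommGroup E] [NormedSpace ℝ E] [MeasurableSpace E] {μ : Measure E}
  {f : ℝ → E → ℝ → ℝ} {u : ℝ → E → ℝ}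

/-- `u` is, uniformly on every `[0, T] × E`, a limit of `C²` functions solving
`∂ₜ V = jumpOp μ V + f(t, x, V)`, `V(0, ·) = 0` up to arbitrarily small errors. -/
def IsApproxLimit (μ : Measure E) (f : ℝ → E → ℝ → ℝ) (u : ℝ → E → ℝ) : Prop :=
  ∀ T ≥ 0, ∃ M, ∀ ε > 0, ∃ B V, IsApproxSol μ f T ε M B V ∧ ∀ t ∈ Icc 0 T, ∀ x, |V t x - u t x| ≤ ε

lemma IsApproxSol.neg {T η M B : ℝ} {V : ℝ → E → ℝ} (hV : IsApproxSol μ f T η M B V) :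
    IsApproxSol μ (reflectedReaction f) T η M B fun t x ↦ -V t x where
  contDiff := hV.contDiff.neg
  abs_le t x := by simpa using hV.abs_le t x
  norm_fderiv_fderiv_le q := by
    have hderiv : fderiv ℝ (fun q : ℝ × E ↦ -V q.1 q.2) =
        fun q ↦ -fderiv ℝ (fun q : ℝ × E ↦ V q.1 q.2) q := funext fun _ ↦ fderiv_fun_neg
    rw [hderiv, fderiv_fun_neg]
    exact (ContinuousLinearMap.opNorm_neg _).trans_le (hV.norm_fderiv_fderiv_le q)
  abs_error_le t x h₀ h₁ := by
    have hjump : jumpOp μ (fun x ↦ -V t x) x = -jumpOp μ (V t) x := by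
      simp only [jumpOp, secondDiff_neg, integral_neg]
    rw [hjump, deriv.fun_neg, reflectedReaction, neg_neg, ← abs_neg]
    convert hV.abs_error_le t x h₀ h₁ using 2
    ring
  abs_zero_le x := by simpa using hV.abs_zero_le x

namespace IsApproxLimit

lemma neg (hu : IsApproxLimit μ f u) : IsApproxLimit μ (reflectedReaction f) fun t x ↦ -u t x := by
  intro T hT
  obtain ⟨M, hM⟩ := hu T hT
  refine ⟨M, fun ε hε ↦ ?_⟩
  obtain ⟨B, V, hV, hVu⟩ := hM ε hε
  refine ⟨B, _, hV.neg, fun t ht x ↦ ?_⟩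
  rw [← abs_neg]
  convert hVu t ht x using 2
  ring

lemma continuousOn (hu : IsApproxLimit μ f u) :
    ContinuousOn (fun q : ℝ × E ↦ u q.1 q.2) (Ici 0 ×ˢ univ) := by
  rintro ⟨t₀, x₀⟩ ⟨ht₀ : 0 ≤ t₀, -⟩
  obtain ⟨M, hM⟩ := hu (t₀ + 1) (by linarith)
  have happrox : ContinuousOn (fun q : ℝ × E ↦ u q.1 q.2) (Icc 0 (t₀ + 1) ×ˢ univ) := by
    refine continuousOn_of_uniform_approx_of_continuousOn fun W hW ↦ ?_
    obtain ⟨ε, hε, hεW⟩ := Metric.mem_uniformity_dist.1 hW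
    obtain ⟨B, V, hV, hVu⟩ := hM (ε / 2) (half_pos hε)
    refine ⟨_, hV.contDiff.continuous.continuousOn, fun q hq ↦ hεW ?_⟩
    rw [dist_comm, Real.dist_eq]
    exact (hVu q.1 hq.1 q.2).trans_lt (half_lt_self hε)
  refine (happrox (t₀, x₀) ⟨⟨ht₀, by simp⟩, trivial⟩).mono_of_mem_nhdsWithin ?_
  filter_upwards [self_mem_nhdsWithin, mem_nhdsWithin_of_mem_nhds
    (continuous_fst.tendsto (t₀, x₀) (Iio_mem_nhds (lt_add_one t₀)))] with q hq hq'
  exact ⟨⟨hq.1, hq'.le⟩, trivial⟩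

lemma exists_abs_le (hu : IsApproxLimit μ f u) (T : ℝ) : ∃ M, ∀ t ∈ Icc 0 T, ∀ x, |u t x| ≤ M := by
  obtain ⟨M, hM⟩ := hu (max T 0) (le_max_right _ _)
  obtain ⟨B, V, hV, hVu⟩ := hM 1 one_pos
  refine ⟨M + 1, fun t ht x ↦ ?_⟩
  have h₁ := abs_le.1 (hVu t ⟨ht.1, ht.2.trans (le_max_left _ _)⟩ x)
  have h₂ := abs_le.1 (hV.abs_le t x)
  exact abs_le.2 ⟨by linarith [h₁.2, h₂.1], by linarith [h₁.1, h₂.2]⟩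

lemma initial_eq_zero (hu : IsApproxLimit μ f u) (x : E) : u 0 x = 0 := by
  obtain ⟨M, hM⟩ := hu 0 le_rfl
  refine abs_nonpos_iff.1 (le_of_forall_pos_le_add fun ε hε ↦ ?_)
  obtain ⟨B, V, hV, hVu⟩ := hM (ε / 2) (half_pos hε)
  have h₁ := abs_le.1 (hVu 0 ⟨le_rfl, le_rfl⟩ x)
  have h₂ := abs_le.1 (hV.abs_zero_le x)
  exact abs_le.2 ⟨by linarith [h₁.2, h₂.1], by linarith [h₁.1, h₂.2]⟩

end IsApproxLimit

lemma IsSymmLevyMeasure.isApproxLimit_limitSol [BorelSpace E] [FiniteDimensional ℝ E]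
    (hμ : IsSymmLevyMeasure μ) {C K L : ℝ} (hf : IsReaction f C K L) :
    IsApproxLimit μ f (limitSol μ K f) := by
  refine fun T hT ↦ ⟨(T + 3) * C, fun ε hε ↦ ?_⟩
  obtain ⟨B, J, h⟩ := hμ.exists_isApproxSol_abs_sub_limitSol_le C K L hT hε
  exact ⟨B, (h f hf).1⟩

end ApproxLimit

/-! ### Splitting the jump operator into small and large jumps -/

section SplitJumpOp

lemma setIntegral_add_setIntegral_compl_le {α : Type*} [MeasurableSpace α] {μ : Measure α}
    {S S' : Set α} (hS : MeasurableSet S) (hS' : MeasurableSet S') (hSS' : S ⊆ S') {f g : α → ℝ}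
    (hg : IntegrableOn g S' μ) (hf : IntegrableOn f Sᶜ μ) (hfg : ∀ z ∈ S' \ S, f z ≤ g z) :
    (∫ z in S, g z ∂μ) + ∫ z in Sᶜ, f z ∂μ ≤ (∫ z in S', g z ∂μ) + ∫ z in S'ᶜ, f z ∂μ := by
  have hmono : ∫ z in S' \ S, f z ∂μ ≤ ∫ z in S' \ S, g z ∂μ :=
    setIntegral_mono_on (hf.mono_set fun _ hz ↦ hz.2) (hg.mono_set sdiff_subset) (hS'.diff hS) hfg
  have hg' := integral_inter_add_sdiff hS hg
  have hf' := integral_inter_add_sdiff hS' hf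
  rw [inter_eq_self_of_subset_right hSS'] at hg'
  rw [← sdiff_eq_compl_inter, sdiff_eq (s := Sᶜ), inter_eq_self_of_subset_right
    (compl_subset_compl.2 hSS')] at hf'
  linarith

variable {E : Type*} [NormedAddCommGroup E]

/-- The jump operator applied to `φ` for the jumps of size at most `r` and to `u` for the larger
ones, as in the definition of viscosity solutions. -/
noncomputable def splitJumpOp [MeasurableSpace E] (μ : Measure E) (r : ℝ) (φ u : E → ℝ) (x : E) :
    ℝ :=
  (∫ z in {z | ‖z‖ ≤ r}, secondDiff φ x z ∂μ) + ∫ z in {z | r < ‖z‖}, secondDiff u x z ∂μ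

lemma continuous_secondDiff {u : E → ℝ} (hu : Continuous u) (x : E) :
    Continuous (secondDiff u x) := by
  unfold secondDiff; fun_prop

lemma compl_norm_le (r : ℝ) : {z : E | ‖z‖ ≤ r}ᶜ = {z : E | r < ‖z‖} := by
  ext; simp

lemma tendsto_secondDiff {ι : Type*} {l : Filter ι} {Φ : ι → E → ℝ} {y : ι → E} {φ : E → ℝ} {x : E}
    (h : ∀ z, Tendsto (fun n ↦ Φ n (y n + z)) l (𝓝 (φ (x + z)))) (z : E) :
    Tendsto (fun n ↦ secondDiff (Φ n) (y n) z) l (𝓝 (secondDiff φ x z)) := by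
  have h₀ := h 0
  have h₁ := h (-z)
  simp only [add_zero, ← sub_eq_add_neg] at h₀ h₁
  exact (((h z).add h₁).div_const 2).sub h₀

lemma secondDiff_le_of_sub_le {S : Set E} {u φ : E → ℝ} {x z : E}
    (h : ∀ y ∈ S, u y - φ y ≤ u x - φ x) (hz : x + z ∈ S) (hz' : x - z ∈ S) :
    secondDiff u x z ≤ secondDiff φ x z := by
  unfold secondDiff
  linarith [h _ hz, h _ hz']

lemma exists_abs_secondDiff_le {F : Type*} [NormedAddCommGroup F] [NormedSpace ℝ F]
    [ProperSpace F] {φ : F → ℝ} (hφ : ContDiff ℝ 2 φ) (q₀ : F) (R : ℝ) :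
    ∃ C, ∀ q z, ‖q - q₀‖ ≤ R → ‖z‖ ≤ R → |secondDiff φ q z| ≤ C * ‖z‖ ^ 2 := by
  obtain ⟨C, hC⟩ := (isCompact_closedBall q₀ (R + R)).exists_bound_of_continuousOn
    ((hφ.fderiv_right (m := 1) (by norm_num)).continuous_fderiv (by norm_num)).continuousOn
  refine ⟨C, fun q z hq hz ↦ abs_secondDiff_le_of_norm_fderiv_fderiv_le
    (convex_closedBall q₀ (R + R)) hφ hC ?_ ?_ ?_⟩ <;> rw [mem_closedBall, dist_eq_norm]
  · linarith [norm_nonneg z]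
  · rw [add_sub_right_comm]
    exact (norm_add_le _ _).trans (add_le_add hq hz)
  · rw [sub_right_comm]
    exact (norm_sub_le _ _).trans (add_le_add hq hz)

lemma exists_abs_secondDiff_slice_le [NormedSpace ℝ E] [ProperSpace E] {φ : ℝ → E → ℝ}
    (hφ : ContDiff ℝ 2 fun q : ℝ × E ↦ φ q.1 q.2) (t₀ : ℝ) (x₀ : E) (R : ℝ) :
    ∃ C, ∀ t x z, |t - t₀| ≤ R → ‖x - x₀‖ ≤ R → ‖z‖ ≤ R →
      |secondDiff (φ t) x z| ≤ C * ‖z‖ ^ 2 := by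
  obtain ⟨C, hC⟩ := exists_abs_secondDiff_le hφ (t₀, x₀) R
  refine ⟨C, fun t x z ht hx hz ↦ ?_⟩
  simpa [secondDiff, Prod.norm_def] using hC (t, x) (0, z) (by simp [Prod.norm_def, ht, hx])
    (by simpa [Prod.norm_def] using hz)

section Integrability

variable [MeasurableSpace E] {μ : Measure E}

lemma IsSymmLevyMeasure.isFiniteMeasure_restrict_norm_gt (hμ : IsSymmLevyMeasure μ) {r : ℝ}
    (hr : 0 < r) : IsFiniteMeasure (μ.restrict {z | r < ‖z‖}) :=
  isFiniteMeasure_restrict.2 (hμ.measure_norm_gt_lt_top hr).ne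

variable [OpensMeasurableSpace E]

lemma measurableSet_norm_le (r : ℝ) : MeasurableSet {z : E | ‖z‖ ≤ r} :=
  measurableSet_le measurable_norm measurable_const

namespace IsSymmLevyMeasure

lemma integrableOn_secondDiff_norm_gt (hμ : IsSymmLevyMeasure μ) {u : E → ℝ}
    (hu : BddCont u) (x : E) {r : ℝ} (hr : 0 < r) :
    IntegrableOn (secondDiff u x) {z | r < ‖z‖} μ := by
  obtain ⟨B, hB⟩ := hu.bdd
  have := hμ.isFiniteMeasure_restrict_norm_gt hr
  exact Integrable.of_bound (continuous_secondDiff hu.cont x).aestronglyMeasurable (2 * B)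
    (.of_forall fun z ↦ abs_secondDiff_le hB x z)

lemma integrableOn_secondDiff_norm_le [NormedSpace ℝ E] [ProperSpace E]
    (hμ : IsSymmLevyMeasure μ) {φ : E → ℝ} (hφ : ContDiff ℝ 2 φ) (x : E) (r : ℝ) :
    IntegrableOn (secondDiff φ x) {z | ‖z‖ ≤ r} μ := by
  obtain ⟨C, hC⟩ := exists_abs_secondDiff_le hφ x (max r 0)
  refine ((hμ.integrable_norm_sq_of_le r).const_mul C).mono'
    (continuous_secondDiff hφ.continuous x).aestronglyMeasurable ?_
  filter_upwards [ae_restrict_mem (measurableSet_norm_le r)] with z hz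
  exact hC x z (by simp) (le_max_of_le_left hz)

end IsSymmLevyMeasure

lemma tendsto_splitJumpOp (hμ : IsSymmLevyMeasure μ) {r : ℝ} (hr : 0 < r) {ι : Type*}
    {l : Filter ι} [l.IsCountablyGenerated] {Φ U : ι → E → ℝ} {y : ι → E} {φ u : E → ℝ} {x : E}
    {C M : ℝ} (hΦ : ∀ n, Continuous (Φ n)) (hU : ∀ n, Continuous (U n))
    (hC : ∀ n z, ‖z‖ ≤ r → |secondDiff (Φ n) (y n) z| ≤ C * ‖z‖ ^ 2) (hM : ∀ n x, |U n x| ≤ M)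
    (hφ : ∀ z, Tendsto (fun n ↦ Φ n (y n + z)) l (𝓝 (φ (x + z))))
    (hu : ∀ z, Tendsto (fun n ↦ U n (y n + z)) l (𝓝 (u (x + z)))) :
    Tendsto (fun n ↦ splitJumpOp μ r (Φ n) (U n) (y n)) l (𝓝 (splitJumpOp μ r φ u x)) := by
  have := hμ.isFiniteMeasure_restrict_norm_gt hr
  refine (tendsto_integral_filter_of_dominated_convergence (fun z ↦ C * ‖z‖ ^ 2)
    (.of_forall fun n ↦ (continuous_secondDiff (hΦ n) _).aestronglyMeasurable)
    (.of_forall fun n ↦ (ae_restrict_mem (measurableSet_norm_le r)).mono (hC n))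
    ((hμ.integrable_norm_sq_of_le r).const_mul C) (.of_forall (tendsto_secondDiff hφ))).add
    (tendsto_integral_filter_of_dominated_convergence (fun _ ↦ 2 * M)
    (.of_forall fun n ↦ (continuous_secondDiff (hU n) _).aestronglyMeasurable)
    (.of_forall fun n ↦ .of_forall fun z ↦ abs_secondDiff_le (hM n) (y n) z)
    (integrable_const _) (.of_forall (tendsto_secondDiff hu)))

lemma jumpOp_le_splitJumpOp {u φ : E → ℝ} {x : E} {r : ℝ} (hu : Integrable (secondDiff u x) μ)
    (hφ : IntegrableOn (secondDiff φ x) {z | ‖z‖ ≤ r} μ)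
    (h : ∀ z, ‖z‖ ≤ r → secondDiff u x z ≤ secondDiff φ x z) :
    jumpOp μ u x ≤ splitJumpOp μ r φ u x := by
  simpa [jumpOp, splitJumpOp, compl_norm_le] using setIntegral_add_setIntegral_compl_le
    MeasurableSet.empty (measurableSet_norm_le r) (empty_subset _) hφ hu.integrableOn
    fun z hz ↦ h z hz.1

lemma splitJumpOp_le_splitJumpOp {u φ : E → ℝ} {x : E} {r r' : ℝ} (hr : r ≤ r')
    (hu : IntegrableOn (secondDiff u x) {z | r < ‖z‖} μ)
    (hφ : IntegrableOn (secondDiff φ x) {z | ‖z‖ ≤ r'} μ)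
    (h : ∀ z, ‖z‖ ≤ r' → secondDiff u x z ≤ secondDiff φ x z) :
    splitJumpOp μ r φ u x ≤ splitJumpOp μ r' φ u x := by
  simpa only [splitJumpOp, compl_norm_le] using setIntegral_add_setIntegral_compl_le
    (measurableSet_norm_le r) (measurableSet_norm_le r') (fun z hz ↦ hz.trans hr) hφ
    (by rwa [compl_norm_le]) fun z hz ↦ h z hz.1

end Integrability

end SplitJumpOp

/-! ### Stability of viscosity subsolutions -/

section ViscositySubsolutions

variable {E : Type*} [NormedAddCommGroup E]

/-- Viscosity subsolutions of `∂ₜ w = jumpOp μ w + f(t, x, w)` with a nonpositive initial datum.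
Supersolutions `w` are described by the subsolutions `-w` of the equation with the reflected
reaction term. -/
structure IsViscSubsol [NormedSpace ℝ E] [MeasurableSpace E] (μ : Measure E)
    (f : ℝ → E → ℝ → ℝ) (w : ℝ → E → ℝ) : Prop where
  continuousOn : ContinuousOn (fun q : ℝ × E ↦ w q.1 q.2) (Ici 0 ×ˢ univ)
  exists_abs_le (T : ℝ) : ∃ M, ∀ t ∈ Icc 0 T, ∀ x, |w t x| ≤ M
  initial_le (x : E) : w 0 x ≤ 0
  deriv_le (t₀ : ℝ) (x₀ : E) (φ : ℝ → E → ℝ) (hφ : ContDiff ℝ 2 fun q : ℝ × E ↦ φ q.1 q.2)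
    (τ r : ℝ) (hτ : 0 < τ) (hτt₀ : τ < t₀) (hr : 0 < r)
    (hmax : ∀ t x, t ∈ Ioo (t₀ - τ) (t₀ + τ) → x ∈ ball x₀ r → w t x - φ t x ≤ w t₀ x₀ - φ t₀ x₀) :
    deriv (fun t ↦ φ t x₀) t₀ ≤ splitJumpOp μ r (φ t₀) (w t₀) x₀ + f t₀ x₀ (w t₀ x₀)

lemma contDiff_slice [NormedSpace ℝ E] {φ : ℝ → E → ℝ}
    (hφ : ContDiff ℝ 2 fun q : ℝ × E ↦ φ q.1 q.2) (t : ℝ) : ContDiff ℝ 2 (φ t) :=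
  hφ.comp (contDiff_prodMk_right t)

lemma continuous_deriv_time [NormedSpace ℝ E] {φ : ℝ → E → ℝ}
    (hφ : ContDiff ℝ 2 fun q : ℝ × E ↦ φ q.1 q.2) :
    Continuous fun q : ℝ × E ↦ deriv (fun t ↦ φ t q.2) q.1 := by
  simp_rw [(hasDerivAt_of_contDiff_uncurry hφ _ _).deriv]
  exact (hφ.continuous_fderiv (by norm_num)).clm_apply continuous_const

lemma tendsto_of_abs_sub_le_of_continuousOn {u : ℝ → E → ℝ}
    {V : ℕ → ℝ → E → ℝ} {s ε : ℕ → ℝ} {y : ℕ → E} {t₀ : ℝ}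
    {x₀ : E} (hu : ContinuousOn (fun q : ℝ × E ↦ u q.1 q.2) (Ici 0 ×ˢ univ)) (ht₀ : 0 ≤ t₀)
    (hs : ∀ n, 0 ≤ s n) (hsy : Tendsto (fun n ↦ (s n, y n)) atTop (𝓝 (t₀, x₀)))
    (hV : ∀ n x, |V n (s n) x - u (s n) x| ≤ ε n) (hε : Tendsto ε atTop (𝓝 0)) (z : E) :
    Tendsto (fun n ↦ V n (s n) (y n + z)) atTop (𝓝 (u t₀ (x₀ + z))) := by
  have hu' : Tendsto (fun n ↦ u (s n) (y n + z)) atTop (𝓝 (u t₀ (x₀ + z))) :=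
    (hu (t₀, x₀ + z) ⟨ht₀, trivial⟩).tendsto.comp <| tendsto_nhdsWithin_iff.2
      ⟨hsy.fst_nhds.prodMk_nhds (hsy.snd_nhds.add_const z), .of_forall fun n ↦ ⟨hs n, trivial⟩⟩
  simpa using (squeeze_zero_norm (fun n ↦ hV n (y n + z)) hε).add hu'

section Penalization

/-- The test function `φ` made strict at `(t₀, x₀)`. -/
noncomputable def penalized (φ : ℝ → E → ℝ) (κ t₀ : ℝ) (x₀ : E) (t : ℝ) (x : E) : ℝ :=
  φ t x + κ * ((t - t₀) ^ 2 + ‖x - x₀‖ ^ 2)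

lemma secondDiff_penalized (φ : ℝ → E → ℝ) (κ t₀ : ℝ) (x₀ z : E) :
    secondDiff (penalized φ κ t₀ x₀ t₀) x₀ z = secondDiff (φ t₀) x₀ z + κ * ‖z‖ ^ 2 := by
  simp only [secondDiff, penalized, add_sub_cancel_left, sub_sub_cancel_left, norm_neg, sub_self,
    norm_zero]
  ring

lemma deriv_penalized [NormedSpace ℝ E] {φ : ℝ → E → ℝ}
    (hφ : ContDiff ℝ 2 fun q : ℝ × E ↦ φ q.1 q.2) (κ t₀ : ℝ) (x₀ : E) :
    deriv (fun t ↦ penalized φ κ t₀ x₀ t x₀) t₀ = deriv (fun t ↦ φ t x₀) t₀ := by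
  have hpenalty : HasDerivAt (fun t : ℝ ↦ κ * ((t - t₀) ^ 2 + ‖x₀ - x₀‖ ^ 2)) 0 t₀ :=
    (((((hasDerivAt_id t₀).sub_const t₀).pow 2).add_const _).const_mul κ).congr_deriv (by simp)
  have hderiv := hasDerivAt_of_contDiff_uncurry hφ t₀ x₀
  rw [hderiv.deriv]
  exact ((hderiv.fun_add hpenalty).congr_deriv (add_zero _)).deriv

lemma splitJumpOp_penalized [MeasurableSpace E] {μ : Measure E} {φ : ℝ → E → ℝ} {t₀ r : ℝ} {x₀ : E}
    (hφ : IntegrableOn (secondDiff (φ t₀) x₀) {z | ‖z‖ ≤ r} μ)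
    (hsq : IntegrableOn (fun z ↦ ‖z‖ ^ 2) {z : E | ‖z‖ ≤ r} μ) (κ : ℝ) (u : E → ℝ) :
    splitJumpOp μ r (penalized φ κ t₀ x₀ t₀) u x₀ =
      splitJumpOp μ r (φ t₀) u x₀ + κ * ∫ z in {z | ‖z‖ ≤ r}, ‖z‖ ^ 2 ∂μ := by
  simp only [splitJumpOp, secondDiff_penalized]
  rw [integral_add hφ (hsq.const_mul κ), integral_const_mul, add_right_comm]

lemma tendsto_of_penalty_le {ι : Type*} {l : Filter ι} {κ t₀ : ℝ} (hκ : 0 < κ) {x₀ : E}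
    {s ε : ι → ℝ} {y : ι → E} (hε : Tendsto ε l (𝓝 0))
    (h : ∀ n, κ * ((s n - t₀) ^ 2 + ‖y n - x₀‖ ^ 2) ≤ 2 * ε n) :
    Tendsto (fun n ↦ (s n, y n)) l (𝓝 (t₀, x₀)) := by
  have hsqrt : Tendsto (fun n ↦ √(2 * ε n / κ)) l (𝓝 0) := by
    simpa using ((hε.const_mul 2).div_const κ).sqrt
  have hle (n) : (s n - t₀) ^ 2 + ‖y n - x₀‖ ^ 2 ≤ 2 * ε n / κ := by
    rw [le_div_iff₀' hκ]
    exact h n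
  refine (tendsto_iff_norm_sub_tendsto_zero.2 (squeeze_zero (fun _ ↦ norm_nonneg _)
    (fun n ↦ ?_) hsqrt)).prodMk_nhds (tendsto_iff_norm_sub_tendsto_zero.2
    (squeeze_zero (fun _ ↦ norm_nonneg _) (fun n ↦ ?_) hsqrt)) <;>
  refine Real.le_sqrt_of_sq_le (le_trans ?_ (hle n))
  · simp
  · simp [sq_nonneg]

lemma exists_max_sub_penalized [ProperSpace E] {V φ u : ℝ → E → ℝ} {t₀ τ r κ ε : ℝ} {x₀ : E}
    (hV : Continuous fun q : ℝ × E ↦ V q.1 q.2)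
    (hψ : Continuous fun q : ℝ × E ↦ penalized φ κ t₀ x₀ q.1 q.2) (hτ : 0 ≤ τ) (hr : 0 ≤ r)
    (hVu : ∀ t ∈ Icc (t₀ - τ) (t₀ + τ), ∀ x, |V t x - u t x| ≤ ε)
    (hmax : ∀ t ∈ Icc (t₀ - τ) (t₀ + τ), ∀ x ∈ closedBall x₀ r, u t x - φ t x ≤ u t₀ x₀ - φ t₀ x₀) :
    ∃ s ∈ Icc (t₀ - τ) (t₀ + τ), ∃ y ∈ closedBall x₀ r,
      (∀ t ∈ Icc (t₀ - τ) (t₀ + τ), ∀ x ∈ closedBall x₀ r,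
        V t x - penalized φ κ t₀ x₀ t x ≤ V s y - penalized φ κ t₀ x₀ s y) ∧
      κ * ((s - t₀) ^ 2 + ‖y - x₀‖ ^ 2) ≤ 2 * ε := by
  have ht₀ : t₀ ∈ Icc (t₀ - τ) (t₀ + τ) := by constructor <;> linarith
  have hx₀ : x₀ ∈ closedBall x₀ r := mem_closedBall_self hr
  obtain ⟨⟨s, y⟩, ⟨hs, hy⟩, hsy⟩ := (isCompact_Icc.prod (isCompact_closedBall x₀ r)).exists_isMaxOn
    ⟨(t₀, x₀), ht₀, hx₀⟩ (hV.sub hψ).continuousOn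
  have hsy' : ∀ t ∈ Icc (t₀ - τ) (t₀ + τ), ∀ x ∈ closedBall x₀ r,
      V t x - penalized φ κ t₀ x₀ t x ≤ V s y - penalized φ κ t₀ x₀ s y :=
    fun t ht x hx ↦ hsy (a := (t, x)) ⟨ht, hx⟩
  refine ⟨s, hs, y, hy, hsy', ?_⟩
  have h₀ := hsy' t₀ ht₀ x₀ hx₀
  simp only [penalized, sub_self, norm_zero] at h₀
  linarith [hmax s hs y hy, (abs_le.1 (hVu t₀ ht₀ x₀)).1, (abs_le.1 (hVu s hs y)).2]

end Penalization

section Stability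

variable [InnerProductSpace ℝ E]

lemma contDiff_penalized {φ : ℝ → E → ℝ} (hφ : ContDiff ℝ 2 fun q : ℝ × E ↦ φ q.1 q.2) (κ t₀ : ℝ)
    (x₀ : E) : ContDiff ℝ 2 fun q : ℝ × E ↦ penalized φ κ t₀ x₀ q.1 q.2 :=
  hφ.add (contDiff_const.mul
    (((contDiff_fst.sub contDiff_const).pow 2).add ((contDiff_snd.sub contDiff_const).norm_sq ℝ)))

variable [FiniteDimensional ℝ E] [MeasurableSpace E] [BorelSpace E] {μ : Measure E}
  {f : ℝ → E → ℝ → ℝ} {u : ℝ → E → ℝ}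

lemma IsApproxSol.deriv_le_splitJumpOp (hμ : IsSymmLevyMeasure μ) {T η M B : ℝ} {V ψ : ℝ → E → ℝ}
    (hV : IsApproxSol μ f T η M B V) (hψ : ContDiff ℝ 2 fun q : ℝ × E ↦ ψ q.1 q.2) {s ρ : ℝ} {y : E}
    (hs : s ∈ Icc 0 T) (htime : IsLocalMax (fun t ↦ V t y - ψ t y) s)
    (hspace : ∀ x ∈ closedBall y ρ, V s x - ψ s x ≤ V s y - ψ s y) :
    deriv (fun t ↦ ψ t y) s ≤ splitJumpOp μ ρ (ψ s) (V s) y + f s y (V s y) + η := by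
  have hderiv : deriv (fun t ↦ V t y) s = deriv (fun t ↦ ψ t y) s := by
    have := htime.deriv_eq_zero
    rw [deriv_fun_sub (hasDerivAt_of_contDiff_uncurry hV.contDiff s y).differentiableAt
      (hasDerivAt_of_contDiff_uncurry hψ s y).differentiableAt] at this
    linarith
  have hjump : jumpOp μ (V s) y ≤ splitJumpOp μ ρ (ψ s) (V s) y :=
    jumpOp_le_splitJumpOp (hV.integrable_secondDiff hμ s y)
      (hμ.integrableOn_secondDiff_norm_le (contDiff_slice hψ s) y ρ)
      fun z hz ↦ secondDiff_le_of_sub_le hspace (by simpa [dist_eq_norm] using hz)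
        (by simpa [dist_eq_norm] using hz)
  linarith [(abs_le.1 (hV.abs_error_le s y hs.1 hs.2)).2]

lemma IsApproxLimit.deriv_le_splitJumpOp_penalized (hμ : IsSymmLevyMeasure μ)
    (hf : Continuous fun q : ℝ × E × ℝ ↦ f q.1 q.2.1 q.2.2) (hu : IsApproxLimit μ f u)
    {φ : ℝ → E → ℝ} (hφ : ContDiff ℝ 2 fun q : ℝ × E ↦ φ q.1 q.2) {t₀ τ r κ : ℝ} {x₀ : E}
    (hτ : 0 < τ) (hτt₀ : τ ≤ t₀) (hr : 0 < r) (hκ : 0 < κ)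
    (hmax : ∀ t ∈ Icc (t₀ - τ) (t₀ + τ), ∀ x ∈ closedBall x₀ r, u t x - φ t x ≤ u t₀ x₀ - φ t₀ x₀) :
    deriv (fun t ↦ φ t x₀) t₀ ≤
      splitJumpOp μ (r / 2) (penalized φ κ t₀ x₀ t₀) (u t₀) x₀ + f t₀ x₀ (u t₀ x₀) := by
  have hψ := contDiff_penalized hφ κ t₀ x₀
  obtain ⟨M, hM⟩ := hu (t₀ + τ) (by linarith)
  choose B V hV hVu using fun k : ℕ ↦ hM (1 / ((k : ℝ) + 1)) (by positivity)
  have hIcc {t : ℝ} (ht : t ∈ Icc (t₀ - τ) (t₀ + τ)) : t ∈ Icc 0 (t₀ + τ) :=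
    ⟨by linarith [ht.1], ht.2⟩
  choose s hs y hy hsy hpenalty using fun k ↦ exists_max_sub_penalized (hV k).continuous
    hψ.continuous hτ.le hr.le (fun t ht ↦ hVu k t (hIcc ht)) hmax
  have hε := tendsto_one_div_add_atTop_nhds_zero_nat (𝕜 := ℝ)
  have hlim := tendsto_of_penalty_le hκ hε hpenalty
  have happrox : ∀ᶠ k in atTop, deriv (fun t ↦ penalized φ κ t₀ x₀ t (y k)) (s k) ≤
      splitJumpOp μ (r / 2) (penalized φ κ t₀ x₀ (s k)) (V k (s k)) (y k) +
        f (s k) (y k) (V k (s k) (y k)) + 1 / ((k : ℝ) + 1) := by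
    filter_upwards [hlim.fst_nhds (Ioo_mem_nhds (sub_lt_self t₀ hτ) (lt_add_of_pos_right t₀ hτ)),
      hlim.snd_nhds (ball_mem_nhds x₀ (half_pos hr))] with k hsk hyk
    refine (hV k).deriv_le_splitJumpOp hμ hψ (hIcc (hs k)) ?_ fun x hx ↦ hsy k _ (hs k) x ?_
    · filter_upwards [Icc_mem_nhds hsk.1 hsk.2] with t ht using hsy k t ht _ (hy k)
    · exact closedBall_subset_closedBall' (by linarith [mem_ball.1 hyk]) hx
  have hV' := tendsto_of_abs_sub_le_of_continuousOn hu.continuousOn (hτ.le.trans hτt₀)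
    (fun k ↦ (hIcc (hs k)).1) hlim (fun k ↦ hVu k _ (hIcc (hs k))) hε
  have hψ' (z : E) : Tendsto (fun k ↦ penalized φ κ t₀ x₀ (s k) (y k + z)) atTop
      (𝓝 (penalized φ κ t₀ x₀ t₀ (x₀ + z))) :=
    (hψ.continuous.tendsto (t₀, x₀ + z)).comp
      (hlim.fst_nhds.prodMk_nhds (hlim.snd_nhds.add_const z))
  obtain ⟨C, hC⟩ := exists_abs_secondDiff_slice_le hψ t₀ x₀ (max τ r)
  have hjump := tendsto_splitJumpOp hμ (half_pos hr)
    (fun k ↦ (contDiff_slice hψ (s k)).continuous) (fun k ↦ ((hV k).bddCont (s k)).cont)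
    (fun k z hz ↦ hC (s k) (y k) z
      (le_max_of_le_left (abs_le.2 ⟨by linarith [(hs k).1], by linarith [(hs k).2]⟩))
      (le_max_of_le_right (mem_closedBall_iff_norm.1 (hy k)))
      (le_max_of_le_right (by linarith)))
    (fun k ↦ (hV k).abs_le (s k)) hψ' hV'
  have hVy : Tendsto (fun k ↦ V k (s k) (y k)) atTop (𝓝 (u t₀ x₀)) := by simpa using hV' 0
  have hreaction := (hf.tendsto (t₀, x₀, u t₀ x₀)).comp
    (hlim.fst_nhds.prodMk_nhds (hlim.snd_nhds.prodMk_nhds hVy))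
  rw [← deriv_penalized hφ κ t₀ x₀, ← add_zero (_ + f _ _ _)]
  exact le_of_tendsto_of_tendsto (((continuous_deriv_time hψ).tendsto (t₀, x₀)).comp hlim)
    ((hjump.add hreaction).add hε) happrox

lemma IsApproxLimit.deriv_le_splitJumpOp (hμ : IsSymmLevyMeasure μ)
    (hf : Continuous fun q : ℝ × E × ℝ ↦ f q.1 q.2.1 q.2.2) (hu : IsApproxLimit μ f u)
    {φ : ℝ → E → ℝ} (hφ : ContDiff ℝ 2 fun q : ℝ × E ↦ φ q.1 q.2) {t₀ τ r : ℝ} {x₀ : E}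
    (hτ : 0 < τ) (hτt₀ : τ ≤ t₀) (hr : 0 < r)
    (hmax : ∀ t ∈ Icc (t₀ - τ) (t₀ + τ), ∀ x ∈ closedBall x₀ r, u t x - φ t x ≤ u t₀ x₀ - φ t₀ x₀) :
    deriv (fun t ↦ φ t x₀) t₀ ≤ splitJumpOp μ (r / 2) (φ t₀) (u t₀) x₀ + f t₀ x₀ (u t₀ x₀) := by
  have hφint := hμ.integrableOn_secondDiff_norm_le (contDiff_slice hφ t₀) x₀ (r / 2)
  have hlim : Tendsto (fun κ ↦ splitJumpOp μ (r / 2) (penalized φ κ t₀ x₀ t₀) (u t₀) x₀) (𝓝[>] 0)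
      (𝓝 (splitJumpOp μ (r / 2) (φ t₀) (u t₀) x₀)) := by
    simp only [splitJumpOp_penalized hφint (hμ.integrable_norm_sq_of_le _)]
    exact tendsto_nhdsWithin_of_tendsto_nhds (Continuous.tendsto' (by fun_prop) _ _ (by simp))
  refine ge_of_tendsto (hlim.add_const _) (eventually_mem_nhdsWithin.mono fun κ hκ ↦ ?_)
  exact hu.deriv_le_splitJumpOp_penalized hμ hf hφ hτ hτt₀ hr hκ hmax

lemma IsApproxLimit.isViscSubsol (hμ : IsSymmLevyMeasure μ)
    (hf : Continuous fun q : ℝ × E × ℝ ↦ f q.1 q.2.1 q.2.2) (hu : IsApproxLimit μ f u) :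
    IsViscSubsol μ f u where
  continuousOn := hu.continuousOn
  exists_abs_le := hu.exists_abs_le
  initial_le x := (hu.initial_eq_zero x).le
  deriv_le t₀ x₀ φ hφ τ r hτ hτt₀ hr hmax := by
    have ht₀ : t₀ ∈ Icc 0 t₀ := ⟨by linarith, le_rfl⟩
    have hφ₀ := contDiff_slice hφ t₀
    obtain ⟨M, hM⟩ := hu.exists_abs_le t₀
    have hu₀ : BddCont (u t₀) :=
      ⟨continuous_slice_of_continuousOn hu.continuousOn (mem_Ici.2 ht₀.1), M, hM t₀ ht₀⟩
    have hmax₀ : ∀ x ∈ closedBall x₀ r, u t₀ x - φ t₀ x ≤ u t₀ x₀ - φ t₀ x₀ := by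
      rw [← closure_ball x₀ hr.ne']
      exact fun _ hx ↦ le_on_closure (fun x hx ↦ hmax t₀ x ⟨by linarith, by linarith⟩ hx)
        (hu₀.cont.sub hφ₀.continuous).continuousOn continuousOn_const hx
    have hsmall := hu.deriv_le_splitJumpOp hμ hf hφ (half_pos hτ) (by linarith) (half_pos hr)
      fun t ht x hx ↦ hmax t x ⟨by linarith [ht.1], by linarith [ht.2]⟩
        (closedBall_subset_ball (half_lt_self hr) hx)
    have hsplit := splitJumpOp_le_splitJumpOp (by linarith : r / 2 / 2 ≤ r)
      (hμ.integrableOn_secondDiff_norm_gt hu₀ x₀ (by linarith))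
      (hμ.integrableOn_secondDiff_norm_le hφ₀ x₀ r) fun z hz ↦ secondDiff_le_of_sub_le hmax₀
        (by simpa [dist_eq_norm] using hz) (by simpa [dist_eq_norm] using hz)
    linarith

end Stability

end ViscositySubsolutions

/-! ### Comparison with approximate solutions and uniqueness -/

section CutoffAndTouching

variable {E : Type*} [NormedAddCommGroup E]

lemma min_one_norm_smul_sq_le [NormedSpace ℝ E] {c : ℝ} (hc : |c| ≤ 1) (z : E) :
    min 1 (‖c • z‖ ^ 2) ≤ min 1 (‖z‖ ^ 2) := by
  gcongr
  rw [norm_smul]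
  exact mul_le_of_le_one_left (norm_nonneg z) hc

lemma IsSymmLevyMeasure.tendsto_integral_min_one_norm_smul_sq [NormedSpace ℝ E] [MeasurableSpace E]
    [OpensMeasurableSpace E] {μ : Measure E} (hμ : IsSymmLevyMeasure μ) :
    Tendsto (fun c : ℝ ↦ ∫ z, min 1 (‖c • z‖ ^ 2) ∂μ) (𝓝 0) (𝓝 0) := by
  have hsmall : ∀ᶠ c : ℝ in 𝓝 0, ∀ᵐ z ∂μ, ‖min 1 (‖c • z‖ ^ 2)‖ ≤ min 1 (‖z‖ ^ 2) := by
    filter_upwards [closedBall_mem_nhds (0 : ℝ) one_pos] with c hc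
    refine .of_forall fun z ↦ ?_
    rw [Real.norm_of_nonneg (by positivity)]
    exact min_one_norm_smul_sq_le (by simpa using hc) z
  simpa using tendsto_integral_filter_of_dominated_convergence _
    (.of_forall fun c ↦ (by fun_prop : Continuous _).aestronglyMeasurable) hsmall
    hμ.integrable_min_one_sq (.of_forall fun z ↦ Continuous.tendsto' (by fun_prop) 0 0 (by simp))

lemma IsSymmLevyMeasure.integrable_min_one_norm_smul_sq [NormedSpace ℝ E] [MeasurableSpace E]
    [OpensMeasurableSpace E] {μ : Measure E} (hμ : IsSymmLevyMeasure μ) {c : ℝ}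
    (hc : |c| ≤ 1) : Integrable (fun z ↦ min 1 (‖c • z‖ ^ 2)) μ := by
  refine hμ.integrable_min_one_sq.mono' (by fun_prop : Continuous _).aestronglyMeasurable
    (.of_forall fun z ↦ ?_)
  rw [Real.norm_of_nonneg (by positivity)]
  exact min_one_norm_smul_sq_le hc z

lemma exists_abs_secondDiff_le_mul_min [NormedSpace ℝ E] {φ : E → ℝ} (hφ : ContDiff ℝ 2 φ)
    (hsupp : HasCompactSupport φ) : ∃ C, ∀ x z, |secondDiff φ x z| ≤ C * min 1 (‖z‖ ^ 2) := by
  obtain ⟨B, hB⟩ := hφ.continuous.bounded_above_of_compact_support hsupp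
  obtain ⟨C, hC⟩ := ((hφ.fderiv_right (m := 1) (by norm_num)).continuous_fderiv
    (by norm_num)).bounded_above_of_compact_support ((hsupp.fderiv ℝ).fderiv ℝ)
  have hmax : 0 ≤ max (2 * B) C := le_max_of_le_right ((norm_nonneg _).trans (hC 0))
  refine ⟨max (2 * B) C, fun x z ↦ ?_⟩
  rw [mul_min_of_nonneg _ _ hmax, mul_one]
  refine le_min ((abs_secondDiff_le hB x z).trans (le_max_left _ _)) ?_
  refine (abs_secondDiff_le_of_norm_fderiv_fderiv_le convex_univ hφ (fun a _ ↦ hC a) trivial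
    trivial trivial).trans ?_
  gcongr
  exact le_max_right _ _

lemma secondDiff_one_sub_comp_smul [NormedSpace ℝ E] (b : E → ℝ) (c : ℝ) (x z : E) :
    secondDiff (fun y ↦ 1 - b (c • y)) x z = -secondDiff b (c • x) (c • z) := by
  simp only [secondDiff, smul_add, smul_sub]
  ring

lemma IsSymmLevyMeasure.exists_cutoff [NormedSpace ℝ E] [FiniteDimensional ℝ E] [MeasurableSpace E]
    [BorelSpace E] {μ : Measure E} (hμ : IsSymmLevyMeasure μ) {δ : ℝ} (hδ : 0 < δ) (ρ : ℝ) :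
    ∃ χ : E → ℝ, ContDiff ℝ 2 χ ∧ (∀ x, 0 ≤ χ x) ∧ (∀ x, ‖x‖ ≤ ρ → χ x = 0) ∧
      (∃ R, ∀ x, R ≤ ‖x‖ → χ x = 1) ∧ ∀ x, Integrable (secondDiff χ x) μ ∧ jumpOp μ χ x ≤ δ := by
  let b : ContDiffBump (0 : E) := ⟨1, 2, one_pos, one_lt_two⟩
  obtain ⟨C, hC⟩ := exists_abs_secondDiff_le_mul_min (b.contDiff (n := 2)) b.hasCompactSupport
  have hlim := (hμ.tendsto_integral_min_one_norm_smul_sq.const_mul C).mono_left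
    (nhdsWithin_le_nhds (s := Ioi 0))
  rw [mul_zero] at hlim
  have hρ : Tendsto (fun c : ℝ ↦ c * ρ) (𝓝[>] 0) (𝓝 0) :=
    tendsto_nhdsWithin_of_tendsto_nhds (Continuous.tendsto' (by fun_prop) _ _ (by simp))
  obtain ⟨c, hcδ, hcρ, hc : 0 < c, hc₁⟩ := ((hlim.eventually_lt_const hδ).and
    ((hρ.eventually_lt_const one_pos).and (Ioc_mem_nhdsGT one_pos))).exists
  have hnorm : ∀ x : E, ‖c • x‖ = c * ‖x‖ := fun x ↦ by rw [norm_smul, Real.norm_of_nonneg hc.le]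
  have hint : Integrable (fun z ↦ C * min 1 (‖c • z‖ ^ 2)) μ :=
    (hμ.integrable_min_one_norm_smul_sq (abs_le.2 ⟨by linarith, hc₁⟩)).const_mul C
  have hχ : ContDiff ℝ 2 fun x ↦ 1 - b (c • x) := contDiff_const.sub (b.contDiff.comp (by fun_prop))
  have hbound : ∀ x z, |secondDiff (fun x ↦ 1 - b (c • x)) x z| ≤ C * min 1 (‖c • z‖ ^ 2) :=
    fun x z ↦ by rw [secondDiff_one_sub_comp_smul, abs_neg]; exact hC _ _
  have hχint : ∀ x, Integrable (secondDiff (fun x ↦ 1 - b (c • x)) x) μ := fun x ↦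
    hint.mono' (continuous_secondDiff hχ.continuous x).aestronglyMeasurable (.of_forall (hbound x))
  refine ⟨_, hχ, fun x ↦ sub_nonneg.2 b.le_one, fun x hx ↦ ?_, ⟨2 / c, fun x hx ↦ ?_⟩,
    fun x ↦ ⟨hχint x, ?_⟩⟩
  · rw [b.one_of_mem_closedBall, sub_self]
    rw [mem_closedBall_zero_iff, hnorm]
    exact (mul_le_mul_of_nonneg_left hx hc.le).trans hcρ.le
  · rw [b.zero_of_le_dist, sub_zero]
    rw [dist_zero_right, hnorm, mul_comm]
    exact (div_le_iff₀ hc).1 hx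
  · refine (integral_mono (hχint x) hint fun z ↦ (le_abs_self _).trans (hbound x z)).trans ?_
    rw [integral_const_mul]
    exact hcδ.le

lemma exists_max_of_le_boundary [ProperSpace E] {G : ℝ → E → ℝ} {T R a : ℝ}
    (hG : ContinuousOn (fun q : ℝ × E ↦ G q.1 q.2) (Icc 0 T ×ˢ univ))
    (hinit : ∀ x, G 0 x ≤ a) (hfinal : ∀ x, G T x ≤ a)
    (hfar : ∀ t ∈ Icc 0 T, ∀ x, R ≤ ‖x‖ → G t x ≤ a) {t₁ : ℝ} {x₁ : E} (ht₁ : t₁ ∈ Icc 0 T)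
    (h₁ : a < G t₁ x₁) :
    ∃ t₀ ∈ Ioo 0 T, ∃ x₀, a < G t₀ x₀ ∧ ∀ t ∈ Icc 0 T, ∀ x, G t x ≤ G t₀ x₀ := by
  have hx₁ : ‖x₁‖ ≤ R := by
    by_contra! hx
    exact h₁.not_ge (hfar t₁ ht₁ x₁ hx.le)
  obtain ⟨⟨t₀, x₀⟩, ⟨ht₀, -⟩, hmax⟩ := (isCompact_Icc.prod (isCompact_closedBall (0 : E) R)
    ).exists_isMaxOn ⟨(t₁, x₁), ht₁, by simpa using hx₁⟩ (hG.mono fun q hq ↦ ⟨hq.1, trivial⟩)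
  have h₀ : a < G t₀ x₀ := h₁.trans_le (hmax (a := (t₁, x₁)) ⟨ht₁, by simpa using hx₁⟩)
  refine ⟨t₀, ⟨ht₀.1.lt_of_ne ?_, ht₀.2.lt_of_ne ?_⟩, x₀, h₀, fun t ht x ↦ ?_⟩
  · rintro rfl
    exact h₀.not_ge (hinit x₀)
  · rintro rfl
    exact h₀.not_ge (hfinal x₀)
  · rcases le_total ‖x‖ R with hx | hx
    · exact hmax (a := (t, x)) ⟨ht, by simpa using hx⟩
    · exact (hfar t ht x hx).trans h₀.le

lemma IsViscSubsol.deriv_le_jumpOp [NormedSpace ℝ E] [MeasurableSpace E] [BorelSpace E]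
    {μ : Measure E} (hμ : IsSymmLevyMeasure μ) {f : ℝ → E → ℝ → ℝ}
    {w φ : ℝ → E → ℝ} {T t₀ : ℝ} {x₀ : E} (hw : IsViscSubsol μ f w)
    (hφ : ContDiff ℝ 2 fun q : ℝ × E ↦ φ q.1 q.2) (hint : Integrable (secondDiff (φ t₀) x₀) μ)
    (ht₀ : t₀ ∈ Ioo 0 T) (hle : ∀ t ∈ Icc 0 T, ∀ x, w t x ≤ φ t x) (heq : w t₀ x₀ = φ t₀ x₀) :
    deriv (fun t ↦ φ t x₀) t₀ ≤ jumpOp μ (φ t₀) x₀ + f t₀ x₀ (φ t₀ x₀) := by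
  have ht₀' : t₀ ∈ Icc 0 T := Ioo_subset_Icc_self ht₀
  have hmin := lt_min ht₀.1 (sub_pos.2 ht₀.2)
  have hminl := min_le_left t₀ (T - t₀)
  have hminr := min_le_right t₀ (T - t₀)
  have hvisc := hw.deriv_le t₀ x₀ φ hφ (min t₀ (T - t₀) / 2) 1 (half_pos hmin) (by linarith) one_pos
    fun t x ht _ ↦ by linarith [hle t ⟨by linarith [ht.1], by linarith [ht.2]⟩ x]
  obtain ⟨M, hM⟩ := hw.exists_abs_le T
  have hwint := hμ.integrableOn_secondDiff_norm_gt (u := w t₀)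
    ⟨continuous_slice_of_continuousOn hw.continuousOn ht₀'.1, M, hM t₀ ht₀'⟩ x₀ one_pos
  have hfar : ∫ z in {z | 1 < ‖z‖}, secondDiff (w t₀) x₀ z ∂μ ≤
      ∫ z in {z | 1 < ‖z‖}, secondDiff (φ t₀) x₀ z ∂μ :=
    integral_mono hwint hint.integrableOn fun z ↦ by
      have hplus := hle t₀ ht₀' (x₀ + z)
      have hminus := hle t₀ ht₀' (x₀ - z)
      unfold secondDiff
      linarith
  have hsplit := integral_add_compl (measurableSet_norm_le (E := E) 1) hint
  rw [compl_norm_le] at hsplit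
  rw [← heq, jumpOp, ← hsplit]
  exact hvisc.trans (by unfold splitJumpOp; linarith)

end CutoffAndTouching

section Barrier

variable {E : Type*}

/-- An approximate solution `V` raised to a strict supersolution: `e^{κ t}` absorbs the Lipschitz
reaction, the cut-off `χ` localizes in space, and the smooth step keeps touching points away from
the final time `t₁ + 1`. -/
noncomputable def barrier (V : ℝ → E → ℝ) (χ : E → ℝ) (κ A t₁ c t : ℝ) (x : E) : ℝ :=
  V t x + Real.exp (κ * t) * (c + A * (Real.smoothTransition (t - t₁) + χ x))

/-- The value of `c` for which `barrier V χ κ A t₁ c` passes through `a` at `(t, x)`. -/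
noncomputable def barrierLevel (V : ℝ → E → ℝ) (χ : E → ℝ) (κ A t₁ t : ℝ) (x : E) (a : ℝ) : ℝ :=
  Real.exp (-(κ * t)) * (a - V t x) - A * (Real.smoothTransition (t - t₁) + χ x)

variable {V : ℝ → E → ℝ} {χ : E → ℝ} {κ A t₁ : ℝ}

lemma barrier_barrierLevel (t : ℝ) (x : E) (a : ℝ) :
    barrier V χ κ A t₁ (barrierLevel V χ κ A t₁ t x a) t x = a := by
  rw [barrier, barrierLevel, sub_add_cancel, ← mul_assoc, ← Real.exp_add, add_neg_cancel,
    Real.exp_zero, one_mul, add_sub_cancel]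

lemma le_barrier_iff {c t a : ℝ} {x : E} :
    a ≤ barrier V χ κ A t₁ c t x ↔ barrierLevel V χ κ A t₁ t x a ≤ c := by
  nth_rw 1 [← barrier_barrierLevel (V := V) (χ := χ) (κ := κ) (A := A) (t₁ := t₁) t x a]
  simp only [barrier, add_le_add_iff_left, mul_le_mul_iff_right₀ (Real.exp_pos _),
    add_le_add_iff_right]

variable [NormedAddCommGroup E]

lemma exists_touching_barrier [ProperSpace E] {w : ℝ → E → ℝ} {c₀ R : ℝ} {x₁ : E}
    (hw : ContinuousOn (fun q : ℝ × E ↦ w q.1 q.2) (Icc 0 (t₁ + 1) ×ˢ univ))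
    (hV : Continuous fun q : ℝ × E ↦ V q.1 q.2) (hχ : Continuous χ) (hχ₀ : ∀ x, 0 ≤ χ x)
    (hχR : ∀ x, R ≤ ‖x‖ → χ x = 1) (hA : 0 ≤ A) (ht₁ : 0 ≤ t₁) (hc₀ : 0 ≤ c₀)
    (hinit : ∀ x, w 0 x ≤ V 0 x + c₀)
    (hgap : ∀ t ∈ Icc 0 (t₁ + 1), ∀ x, Real.exp (-(κ * t)) * (w t x - V t x) ≤ A)
    (hlt : barrier V χ κ A t₁ c₀ t₁ x₁ < w t₁ x₁) :
    ∃ c ≥ c₀, (∀ t ∈ Icc 0 (t₁ + 1), ∀ x, w t x ≤ barrier V χ κ A t₁ c t x) ∧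
      ∃ t₀ ∈ Ioo 0 (t₁ + 1), ∃ x₀, w t₀ x₀ = barrier V χ κ A t₁ c t₀ x₀ := by
  have : Continuous Real.smoothTransition := Real.smoothTransition.continuous
  have hstep₀ : ∀ s, 0 ≤ Real.smoothTransition s := Real.smoothTransition.nonneg
  have hcont : ContinuousOn (fun q : ℝ × E ↦ barrierLevel V χ κ A t₁ q.1 q.2 (w q.1 q.2))
      (Icc 0 (t₁ + 1) ×ˢ univ) :=
    ((by fun_prop : Continuous fun q : ℝ × E ↦ Real.exp (-(κ * q.1))).continuousOn.mul
      (hw.sub hV.continuousOn)).sub (by fun_prop)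
  have hlevel : ∀ t ∈ Icc 0 (t₁ + 1), ∀ x, 1 ≤ Real.smoothTransition (t - t₁) + χ x →
      barrierLevel V χ κ A t₁ t x (w t x) ≤ c₀ := fun t ht x h ↦ by
    rw [barrierLevel]
    linarith [hgap t ht x, le_mul_of_one_le_right hA h]
  have hlevel₀ : ∀ x, barrierLevel V χ κ A t₁ 0 x (w 0 x) ≤ c₀ := fun x ↦ by
    simp only [barrierLevel, mul_zero, neg_zero, Real.exp_zero, one_mul]
    linarith [hinit x, mul_nonneg hA (add_nonneg (hstep₀ (0 - t₁)) (hχ₀ x))]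
  obtain ⟨t₀, ht₀, x₀, hpos, hmax⟩ := exists_max_of_le_boundary (R := R) hcont hlevel₀
    (fun x ↦ hlevel _ ⟨by linarith, le_rfl⟩ x (by simpa using hχ₀ x))
    (fun t ht x hx ↦ hlevel t ht x (by simpa [hχR x hx] using hstep₀ (t - t₁)))
    (⟨ht₁, by linarith⟩ : t₁ ∈ Icc 0 (t₁ + 1)) (not_le.1 (mt le_barrier_iff.2 hlt.not_ge))
  exact ⟨_, hpos.le, fun t ht x ↦ le_barrier_iff.2 (hmax t ht x), t₀, ht₀, x₀,
    (barrier_barrierLevel _ _ _).symm⟩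

lemma secondDiff_barrier (κ A t₁ c t : ℝ) (x z : E) :
    secondDiff (barrier V χ κ A t₁ c t) x z =
      secondDiff (V t) x z + Real.exp (κ * t) * A * secondDiff χ x z := by
  simp only [secondDiff, barrier]
  ring

lemma integrable_secondDiff_barrier [MeasurableSpace E] {μ : Measure E} {t : ℝ} {x : E}
    (hV : Integrable (secondDiff (V t) x) μ) (hχ : Integrable (secondDiff χ x) μ) (κ A t₁ c : ℝ) :
    Integrable (secondDiff (barrier V χ κ A t₁ c t) x) μ := by
  rw [funext (secondDiff_barrier κ A t₁ c t x)]
  exact hV.add (hχ.const_mul _)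

lemma jumpOp_barrier [MeasurableSpace E] {μ : Measure E} {t : ℝ} {x : E}
    (hV : Integrable (secondDiff (V t) x) μ) (hχ : Integrable (secondDiff χ x) μ) (κ A t₁ c : ℝ) :
    jumpOp μ (barrier V χ κ A t₁ c t) x =
      jumpOp μ (V t) x + Real.exp (κ * t) * A * jumpOp μ χ x := by
  simp only [jumpOp, secondDiff_barrier, integral_add hV (hχ.const_mul _), integral_const_mul]

variable [NormedSpace ℝ E]

lemma contDiff_barrier (hV : ContDiff ℝ 2 fun q : ℝ × E ↦ V q.1 q.2) (hχ : ContDiff ℝ 2 χ)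
    (κ A t₁ c : ℝ) : ContDiff ℝ 2 fun q : ℝ × E ↦ barrier V χ κ A t₁ c q.1 q.2 := by
  have : ContDiff ℝ 2 Real.smoothTransition := Real.smoothTransition.contDiff (n := 2)
  unfold barrier
  fun_prop

lemma deriv_add_le_deriv_barrier (hV : ContDiff ℝ 2 fun q : ℝ × E ↦ V q.1 q.2) {A : ℝ}
    (hA : 0 ≤ A) (κ t₁ c t : ℝ) (x : E) :
    deriv (fun s ↦ V s x) t + κ * (barrier V χ κ A t₁ c t x - V t x) ≤
      deriv (fun s ↦ barrier V χ κ A t₁ c s x) t := by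
  have hexp : HasDerivAt (fun s : ℝ ↦ Real.exp (κ * s)) (Real.exp (κ * t) * (κ * 1)) t :=
    ((hasDerivAt_id t).const_mul κ).exp
  have hstep := (((Real.smoothTransition.contDiff (n := 1)).differentiable one_ne_zero
    (t - t₁)).hasDerivAt.comp_sub_const t t₁)
  have hderiv := (hasDerivAt_of_contDiff_uncurry hV t x).differentiableAt.hasDerivAt.fun_add
    (hexp.fun_mul (((hstep.add_const (χ x)).const_mul A).const_add c))
  have hmono : 0 ≤ deriv Real.smoothTransition (t - t₁) :=
    Real.smoothTransition.monotone.deriv_nonneg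
  have hnonneg : 0 ≤ Real.exp (κ * t) * (A * deriv Real.smoothTransition (t - t₁)) := by positivity
  unfold barrier
  rw [hderiv.deriv]
  linarith

end Barrier

section Uniqueness

variable {E : Type*} [NormedAddCommGroup E] [InnerProductSpace ℝ E] [MeasurableSpace E]
  {μ : Measure E} {f : ℝ → E → ℝ → ℝ} {w u : ℝ → E → ℝ} {K : ℝ}

lemma IsViscSubsol.exists_exp_mul_sub_le (hw : IsViscSubsol μ f w) {V : ℝ → E → ℝ} {M κ : ℝ}
    (hκ : 0 ≤ κ) (hV : ∀ t x, |V t x| ≤ M) (T : ℝ) :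
    ∃ A ≥ 0, ∀ t ∈ Icc 0 T, ∀ x, Real.exp (-(κ * t)) * (w t x - V t x) ≤ A := by
  obtain ⟨Mw, hMw⟩ := hw.exists_abs_le T
  refine ⟨|Mw + M|, abs_nonneg _, fun t ht x ↦ ?_⟩
  have hexp : Real.exp (-(κ * t)) ≤ 1 := Real.exp_le_one_iff.2 (neg_nonpos.2 (mul_nonneg hκ ht.1))
  have hdiff : w t x - V t x ≤ |Mw + M| := (le_abs_self _).trans' (by
    linarith [(abs_le.1 (hMw t ht x)).2, (abs_le.1 (hV t x)).1])
  exact (mul_le_mul_of_nonneg_left hdiff (Real.exp_pos _).le).trans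
    (mul_le_of_le_one_left (abs_nonneg _) hexp)

variable [BorelSpace E]

lemma IsApproxSol.jumpOp_barrier_add_lt_deriv (hμ : IsSymmLevyMeasure μ) (hK : 0 ≤ K)
    (hlip : ∀ t x v v', |f t x v - f t x v'| ≤ K * |v - v'|) {η M B T : ℝ} (hη : 0 < η)
    {V : ℝ → E → ℝ} (hV : IsApproxSol μ f T η M B V) {χ : E → ℝ} (hχ₀ : ∀ x, 0 ≤ χ x)
    {A t₁ c t : ℝ} {x : E} (hχ : Integrable (secondDiff χ x) μ) (hA : 0 ≤ A)
    (hAχ : A * jumpOp μ χ x ≤ η / 2) (hc : 2 * η ≤ c) (ht : t ∈ Icc 0 T) :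
    jumpOp μ (barrier V χ (K + 1) A t₁ c t) x + f t x (barrier V χ (K + 1) A t₁ c t x) <
      deriv (fun s ↦ barrier V χ (K + 1) A t₁ c s x) t := by
  set E₀ := Real.exp ((K + 1) * t) with hE₀
  have hE₁ : 1 ≤ E₀ := Real.one_le_exp (mul_nonneg (by linarith) ht.1)
  have hgap : E₀ * (2 * η) ≤ barrier V χ (K + 1) A t₁ c t x - V t x := by
    have hnonneg : 0 ≤ A * (Real.smoothTransition (t - t₁) + χ x) :=
      mul_nonneg hA (add_nonneg (Real.smoothTransition.nonneg _) (hχ₀ x))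
    rw [barrier, add_sub_cancel_left]
    gcongr
    linarith
  have hderiv := deriv_add_le_deriv_barrier (χ := χ) hV.contDiff hA (K + 1) t₁ c t x
  have hreaction := (le_abs_self _).trans (hlip t x (barrier V χ (K + 1) A t₁ c t x) (V t x))
  rw [abs_of_nonneg ((by positivity : 0 ≤ E₀ * (2 * η)).trans hgap)] at hreaction
  have herror := (abs_le.1 (hV.abs_error_le t x ht.1 ht.2)).1
  have hjump : E₀ * A * jumpOp μ χ x ≤ E₀ * (η / 2) := by rw [mul_assoc]; gcongr
  rw [jumpOp_barrier (hV.integrable_secondDiff hμ t x) hχ, ← hE₀]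
  nlinarith

variable [FiniteDimensional ℝ E]

lemma IsViscSubsol.le_add_of_isApproxSol (hμ : IsSymmLevyMeasure μ) (hK : 0 ≤ K)
    (hlip : ∀ t x v v', |f t x v - f t x v'| ≤ K * |v - v'|) (hw : IsViscSubsol μ f w)
    {η M B t₁ : ℝ} (ht₁ : 0 ≤ t₁) (hη : 0 < η) {V : ℝ → E → ℝ}
    (hV : IsApproxSol μ f (t₁ + 1) η M B V) (x₁ : E) :
    w t₁ x₁ ≤ V t₁ x₁ + Real.exp ((K + 1) * t₁) * (2 * η) := by
  obtain ⟨A, hA, hgap⟩ := hw.exists_exp_mul_sub_le (by linarith : 0 ≤ K + 1) hV.abs_le (t₁ + 1)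
  obtain ⟨χ, hχ, hχ₀, hχ₁, ⟨R, hχR⟩, hχint⟩ :=
    hμ.exists_cutoff (δ := η / (2 * (A + 1))) (by positivity) ‖x₁‖
  have hAχ : ∀ x, A * jumpOp μ χ x ≤ η / 2 := fun x ↦ calc
    A * jumpOp μ χ x ≤ (A + 1) * (η / (2 * (A + 1))) :=
      (mul_le_mul_of_nonneg_left (hχint x).2 hA).trans (by gcongr; linarith)
    _ = η / 2 := by field_simp
  by_contra! hlt
  have hinit : ∀ x, w 0 x ≤ V 0 x + 2 * η := fun x ↦ by
    linarith [hw.initial_le x, (abs_le.1 (hV.abs_zero_le x)).1]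
  have hlt' : barrier V χ (K + 1) A t₁ (2 * η) t₁ x₁ < w t₁ x₁ := by
    simpa [barrier, hχ₁ x₁ le_rfl] using hlt
  obtain ⟨c, hc, hle, t₀, ht₀, x₀, heq⟩ := exists_touching_barrier
    (hw.continuousOn.mono (prod_mono_left Icc_subset_Ici_self)) hV.contDiff.continuous
    hχ.continuous hχ₀ hχR hA ht₁ (by positivity) hinit hgap hlt'
  have hint := integrable_secondDiff_barrier (hV.integrable_secondDiff hμ t₀ x₀) (hχint x₀).1
    (K + 1) A t₁ c
  exact (hw.deriv_le_jumpOp hμ (contDiff_barrier hV.contDiff hχ _ _ _ _) hint ht₀ hle heq).not_gt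
    (hV.jumpOp_barrier_add_lt_deriv hμ hK hlip hη hχ₀ (hχint x₀).1 hA (hAχ x₀) hc
      (Ioo_subset_Icc_self ht₀))

lemma IsViscSubsol.le_of_isApproxLimit (hμ : IsSymmLevyMeasure μ) (hK : 0 ≤ K)
    (hlip : ∀ t x v v', |f t x v - f t x v'| ≤ K * |v - v'|) (hw : IsViscSubsol μ f w)
    (hu : IsApproxLimit μ f u) {t : ℝ} (ht : 0 ≤ t) (x : E) : w t x ≤ u t x := by
  obtain ⟨M, hM⟩ := hu (t + 1) (by linarith)
  refine le_of_forall_pos_le_add fun ε hε ↦ ?_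
  set C := 2 * Real.exp ((K + 1) * t) + 1 with hC
  obtain ⟨B, V, hV, hVu⟩ := hM (ε / C) (by positivity)
  have hcomparison := hw.le_add_of_isApproxSol hμ hK hlip ht (by positivity) hV x
  have hclose := (abs_le.1 (hVu t ⟨ht, by linarith⟩ x)).2
  have hsum : Real.exp ((K + 1) * t) * (2 * (ε / C)) + ε / C = ε := by
    rw [hC]
    field_simp
  linarith

end Uniqueness

/-! ### The measure of the anisotropic Lévy operator -/

lemma integrableOn_Ioi_pow_mul_min_one_sq_mul_rpow {d : ℕ} (hd : 1 ≤ d) {s : ℝ}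
    (hs : s ∈ Ioo (0 : ℝ) 1) :
    IntegrableOn (fun r : ℝ ↦ r ^ (d - 1) * (min 1 (r ^ 2) * r ^ (-(d : ℝ) - 2 * s)))
      (Ioi 0) := by
  have hpow {r : ℝ} (hr : 0 < r) : r ^ (d - 1) * r ^ (-(d : ℝ) - 2 * s) = r ^ (-1 - 2 * s) := by
    rw [← Real.rpow_natCast, ← Real.rpow_add hr, Nat.cast_sub hd]
    push_cast
    ring_nf
  rw [← Ioc_union_Ioi_eq_Ioi zero_le_one]
  refine IntegrableOn.union ?_ ?_
  · have hint : IntegrableOn (fun r : ℝ ↦ r ^ (1 - 2 * s)) (Ioc 0 1) :=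
      (intervalIntegrable_iff_integrableOn_Ioc_of_le zero_le_one).1
        (intervalIntegral.intervalIntegrable_rpow' (by linarith [hs.2]))
    refine hint.congr_fun (fun r hr ↦ ?_) measurableSet_Ioc
    have hmin : min 1 (r ^ 2) = r ^ 2 := min_eq_right (by nlinarith [hr.1, hr.2])
    simp only [hmin]
    rw [mul_left_comm, hpow hr.1, ← Real.rpow_natCast, ← Real.rpow_add hr.1]
    push_cast
    ring_nf
  · refine (integrableOn_Ioi_rpow_of_lt (a := -1 - 2 * s) (by linarith [hs.1])
      one_pos).congr_fun (fun r (hr : 1 < r) ↦ ?_) measurableSet_Ioi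
    have hmin : min 1 (r ^ 2) = 1 := min_eq_left (by nlinarith)
    simp only [hmin, one_mul, hpow (one_pos.trans hr)]

lemma integrable_min_one_sq_mul_norm_rpow {E : Type*} [NormedAddCommGroup E] [NormedSpace ℝ E]
    [FiniteDimensional ℝ E] [Nontrivial E] [MeasurableSpace E] [BorelSpace E] (ν : Measure E)
    [ν.IsAddHaarMeasure] {s : ℝ} (hs : s ∈ Ioo (0 : ℝ) 1) :
    Integrable (fun z : E ↦ min 1 (‖z‖ ^ 2) * ‖z‖ ^ (-(Module.finrank ℝ E : ℝ) - 2 * s)) ν :=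
  (integrable_fun_norm_addHaar ν
    (f := fun r ↦ min 1 (r ^ 2) * r ^ (-(Module.finrank ℝ E : ℝ) - 2 * s))).2
    (integrableOn_Ioi_pow_mul_min_one_sq_mul_rpow Module.finrank_pos hs)

section LevyKernel

variable {N : ℕ} {s : ℝ} {g : EN N → ℝ}

lemma H1.exists_bounds (hN : 1 ≤ N) (hg : H1 N g) :
    ∃ a > 0, ∃ b, ∀ z : EN N, z ≠ 0 → a ≤ g (‖z‖⁻¹ • z) ∧ g (‖z‖⁻¹ • z) ≤ b := by
  have : Nonempty (Fin N) := ⟨⟨0, hN⟩⟩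
  have hne : (sphere (0 : EN N) 1).Nonempty := NormedSpace.sphere_nonempty.2 zero_le_one
  obtain ⟨x, hx, hmin⟩ := (isCompact_sphere 0 1).exists_isMinOn hne hg.1.continuousOn
  obtain ⟨y, -, hmax⟩ := (isCompact_sphere 0 1).exists_isMaxOn hne hg.1.continuousOn
  have hsphere {z : EN N} (hz : z ≠ 0) : ‖z‖⁻¹ • z ∈ sphere (0 : EN N) 1 := by
    simp [norm_smul, hz]
  exact ⟨g x, hg.2.1 x (by simpa using hx), g y, fun z hz ↦
    ⟨hmin (hsphere hz), hmax (hsphere hz)⟩⟩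

lemma levyKernel_zero (hN : 1 ≤ N) (hs : 0 < s) : levyKernel N s g 0 = 0 := by
  have : (1 : ℝ) ≤ N := mod_cast hN
  rw [levyKernel, norm_zero, Real.zero_rpow (by linarith), mul_zero]

lemma levyKernel_nonneg (hN : 1 ≤ N) (hs : 0 < s) (hg : H1 N g) (z : EN N) :
    0 ≤ levyKernel N s g z := by
  rcases eq_or_ne z 0 with rfl | hz
  · exact (levyKernel_zero hN hs).ge
  · exact mul_nonneg (hg.2.1 _ (by simp [norm_smul, hz])).le (by positivity)

lemma levyKernel_neg (hg : H1 N g) (z : EN N) : levyKernel N s g (-z) = levyKernel N s g z := by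
  simp [levyKernel, hg.2.2]

lemma measurable_levyKernel (hg : H1 N g) : Measurable (levyKernel N s g) := by
  unfold levyKernel
  exact (hg.1.measurable.comp (by fun_prop)).mul (measurable_norm.pow_const _)

/-- The Lévy measure `g(z/|z|) |z|^{-N-2s} dz` of the operator `I_s`. -/
noncomputable def levyMeasure (N : ℕ) (s : ℝ) (g : EN N → ℝ) : Measure (EN N) :=
  volume.withDensity fun z ↦ ENNReal.ofReal (levyKernel N s g z)

lemma setIntegral_levyMeasure (hN : 1 ≤ N) (hs : 0 < s) (hg : H1 N g) {A : Set (EN N)}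
    (hA : MeasurableSet A) (F : EN N → ℝ) :
    ∫ z in A, F z ∂levyMeasure N s g = ∫ z in A, F z * levyKernel N s g z := by
  rw [levyMeasure, setIntegral_withDensity_eq_setIntegral_toReal_smul
    (measurable_levyKernel hg).ennreal_ofReal (by simp) _ hA]
  simp only [ENNReal.toReal_ofReal (levyKernel_nonneg hN hs hg _), smul_eq_mul, mul_comm]

lemma integrable_min_one_sq_levyMeasure (hN : 1 ≤ N) (hs : s ∈ Ioo (0 : ℝ) 1) (hg : H1 N g) :
    Integrable (fun z : EN N ↦ min 1 (‖z‖ ^ 2)) (levyMeasure N s g) := by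
  have : Nonempty (Fin N) := ⟨⟨0, hN⟩⟩
  obtain ⟨a, -, b, hb⟩ := hg.exists_bounds hN
  rw [levyMeasure, integrable_withDensity_iff_integrable_smul'
    (measurable_levyKernel hg).ennreal_ofReal (by simp)]
  simp only [ENNReal.toReal_ofReal (levyKernel_nonneg hN hs.1 hg _), smul_eq_mul]
  refine ((integrable_min_one_sq_mul_norm_rpow volume hs).const_mul b).mono'
    ((measurable_levyKernel hg).mul (by fun_prop)).aestronglyMeasurable (.of_forall fun z ↦ ?_)
  rw [Real.norm_of_nonneg (mul_nonneg (levyKernel_nonneg hN hs.1 hg z) (by positivity))]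
  rcases eq_or_ne z 0 with rfl | hz
  · simp
  · calc levyKernel N s g z * min 1 (‖z‖ ^ 2)
        = g (‖z‖⁻¹ • z) * (min 1 (‖z‖ ^ 2) * ‖z‖ ^ (-(N : ℝ) - 2 * s)) := by
          rw [levyKernel, mul_assoc, mul_comm (‖z‖ ^ _)]
      _ ≤ b * (min 1 (‖z‖ ^ 2) * ‖z‖ ^ (-(N : ℝ) - 2 * s)) :=
          mul_le_mul_of_nonneg_right (hb z hz).2 (by positivity)
      _ = _ := by rw [finrank_euclideanSpace_fin]

lemma isNegInvariant_levyMeasure (hg : H1 N g) : (levyMeasure N s g).IsNegInvariant := by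
  refine ⟨?_⟩
  ext A hA
  rw [Measure.neg, Measure.map_apply measurable_neg hA, levyMeasure,
    withDensity_apply _ (measurable_neg hA), withDensity_apply _ hA,
    ← (Measure.measurePreserving_neg (volume : Measure (EN N))).setLIntegral_comp_preimage hA
      (measurable_levyKernel hg).ennreal_ofReal]
  simp only [levyKernel_neg hg]

theorem isSymmLevyMeasure_levyMeasure (hN : 1 ≤ N) (hs : s ∈ Ioo (0 : ℝ) 1) (hg : H1 N g) :
    IsSymmLevyMeasure (levyMeasure N s g) :=
  ⟨integrable_min_one_sq_levyMeasure hN hs hg, isNegInvariant_levyMeasure hg⟩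

theorem chargesAnnuli_levyMeasure (hN : 1 ≤ N) (hs : 0 < s) (hg : H1 N g) :
    ChargesAnnuli (levyMeasure N s g) := by
  intro R
  obtain ⟨a, ha, b, hb⟩ := hg.exists_bounds hN
  refine ⟨a * max R 1 ^ (-(N : ℝ) - 2 * s), by positivity, ?_⟩
  have hA : MeasurableSet {z : EN N | 1 < ‖z‖ ∧ ‖z‖ ≤ R} :=
    (measurableSet_lt measurable_const measurable_norm).inter
      (measurableSet_le measurable_norm measurable_const)
  rw [← withDensity_const, levyMeasure]
  calc (volume.restrict {z : EN N | 1 < ‖z‖ ∧ ‖z‖ ≤ R}).withDensity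
        (fun _ ↦ ENNReal.ofReal (a * max R 1 ^ (-(N : ℝ) - 2 * s)))
      ≤ (volume.restrict {z : EN N | 1 < ‖z‖ ∧ ‖z‖ ≤ R}).withDensity
        (fun z ↦ ENNReal.ofReal (levyKernel N s g z)) := by
        refine withDensity_mono ((ae_restrict_iff' hA).2 (.of_forall fun z hz ↦ ?_))
        have hz₀ : z ≠ 0 := norm_pos_iff.1 (one_pos.trans hz.1)
        refine ENNReal.ofReal_le_ofReal (mul_le_mul (hb z hz₀).1 ?_ (by positivity)
          (ha.le.trans (hb z hz₀).1))
        exact Real.rpow_le_rpow_of_nonpos (norm_pos_iff.2 hz₀) (hz.2.trans (le_max_left R 1))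
          (by linarith [(N.cast_nonneg : (0 : ℝ) ≤ N)])
    _ ≤ _ := by
        rw [← restrict_withDensity hA]
        exact Measure.restrict_le_self

theorem exists_couplesLargeJumps_levyMeasure (hN : 1 ≤ N) (hs : s ∈ Ioo (0 : ℝ) 1) (hg : H1 N g)
    (R : ℝ) : ∃ κ > 0, CouplesLargeJumps (levyMeasure N s g) R κ := by
  have : Nonempty (Fin N) := ⟨⟨0, hN⟩⟩
  exact (chargesAnnuli_levyMeasure hN hs.1 hg).exists_couplesLargeJumps
    ((isSymmLevyMeasure_levyMeasure hN hs hg).measure_norm_gt_lt_top one_pos) R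

end LevyKernel

/-! ### Viscosity solutions for the anisotropic Lévy operator -/

lemma setIntegral_eq_setIntegral_symmetrization {E : Type*} [AddGroup E] [TopologicalSpace E]
    [ContinuousNeg E] [MeasurableSpace E] [BorelSpace E] {μ : Measure E} [μ.IsNegInvariant]
    {A : Set E} (hA : -A = A) {F : E → ℝ} (hF : IntegrableOn F A μ) :
    ∫ z in A, F z ∂μ = ∫ z in A, (F z + F (-z)) / 2 ∂μ := by
  have hneg := Measure.measurePreserving_neg μ
  have hemb : MeasurableEmbedding (Neg.neg : E → E) := (Homeomorph.neg E).measurableEmbedding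
  have hpre : Neg.neg ⁻¹' A = A := hA
  have hint : ∫ z in A, F (-z) ∂μ = ∫ z in A, F z ∂μ := by
    simpa only [hpre] using hneg.setIntegral_preimage_emb hemb F A
  have hF' : IntegrableOn (fun z ↦ F (-z)) A μ := by
    simpa only [hpre, Function.comp_def] using
      (hneg.integrableOn_comp_preimage hemb (f := F) (s := A)).2 hF
  rw [integral_div, integral_add hF hF', hint, add_self_div_two]

lemma IsReaction.reflectedReaction {E : Type*} [NormedAddCommGroup E] {f : ℝ → E → ℝ → ℝ}
    {C K L : ℝ} (hf : IsReaction f C K L) : IsReaction (reflectedReaction f) C K L where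
  bound t x v := by simpa [_root_.reflectedReaction] using hf.bound t x (-v)
  lip_value t x v v' := by
    simpa [_root_.reflectedReaction, neg_add_eq_sub, abs_sub_comm] using hf.lip_value t x (-v) (-v')
  lip_base t₁ t₂ x₁ x₂ v := by
    simpa [_root_.reflectedReaction, neg_add_eq_sub, abs_sub_comm] using
      hf.lip_base t₁ t₂ x₁ x₂ (-v)

section LevyOperator

variable {N : ℕ} {s : ℝ} {g : EN N → ℝ}

lemma levyI1_eq_setIntegral_secondDiff (hN : 1 ≤ N) (hs : s ∈ Ioo (0 : ℝ) 1) (hg : H1 N g)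
    {φ : EN N → ℝ} (hφ : ContDiff ℝ 2 φ) {r : ℝ} (hr : 0 ≤ r) (x : EN N) :
    levyI1 N s g φ r x = ∫ z in {z | ‖z‖ ≤ r}, secondDiff φ x z ∂levyMeasure N s g := by
  have hμ := isSymmLevyMeasure_levyMeasure hN hs hg
  have := hμ.isNegInvariant
  obtain ⟨C, hC⟩ := (isCompact_closedBall x r).exists_bound_of_continuousOn
    ((hφ.fderiv_right (m := 1) (by norm_num)).continuous_fderiv (by norm_num)).continuousOn
  have hint : IntegrableOn (fun z ↦ φ (x + z) - φ x - fderiv ℝ φ x z) {z | ‖z‖ ≤ r}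
      (levyMeasure N s g) := by
    have hcont := hφ.continuous
    refine ((hμ.integrable_norm_sq_of_le r).const_mul C).mono'
      (by fun_prop : Continuous fun z ↦ φ (x + z) - φ x - fderiv ℝ φ x z).aestronglyMeasurable ?_
    filter_upwards [ae_restrict_mem (measurableSet_norm_le r)] with z hz
    exact abs_sub_sub_fderiv_le (convex_closedBall x r) hφ hC (mem_closedBall_self hr)
      (by simpa [dist_eq_norm] using hz)
  rw [levyI1, ← setIntegral_levyMeasure hN hs.1 hg (measurableSet_norm_le r),
    setIntegral_eq_setIntegral_symmetrization (by ext; simp) hint]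
  refine integral_congr_ae (.of_forall fun z ↦ ?_)
  simp only [secondDiff, map_neg, ← sub_eq_add_neg]
  ring

lemma levyI2_eq_setIntegral_secondDiff (hN : 1 ≤ N) (hs : s ∈ Ioo (0 : ℝ) 1) (hg : H1 N g)
    {u : EN N → ℝ} (hu : BddCont u) {r : ℝ} (hr : 0 < r) (x : EN N) :
    levyI2 N s g u r x = ∫ z in {z | r < ‖z‖}, secondDiff u x z ∂levyMeasure N s g := by
  have hμ := isSymmLevyMeasure_levyMeasure hN hs hg
  have := hμ.isNegInvariant
  have hfin := hμ.isFiniteMeasure_restrict_norm_gt hr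
  obtain ⟨M, hM⟩ := hu.bdd
  have hint : IntegrableOn (fun z ↦ u (x + z) - u x) {z | r < ‖z‖} (levyMeasure N s g) := by
    have hcont := hu.cont
    exact Integrable.of_bound
      (by fun_prop : Continuous fun z ↦ u (x + z) - u x).aestronglyMeasurable (M + M)
      (.of_forall fun z ↦ (norm_sub_le _ _).trans (add_le_add (hM _) (hM _)))
  rw [levyI2, ← setIntegral_levyMeasure hN hs.1 hg
    (measurableSet_lt measurable_const measurable_norm),
    setIntegral_eq_setIntegral_symmetrization (by ext; simp) hint]
  refine integral_congr_ae (.of_forall fun z ↦ ?_)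
  simp only [secondDiff, ← sub_eq_add_neg]
  ring

lemma levyI1_add_levyI2 (hN : 1 ≤ N) (hs : s ∈ Ioo (0 : ℝ) 1) (hg : H1 N g) {φ u : EN N → ℝ}
    (hφ : ContDiff ℝ 2 φ) (hu : BddCont u) {r : ℝ} (hr : 0 < r) (x : EN N) :
    levyI1 N s g φ r x + levyI2 N s g u r x = splitJumpOp (levyMeasure N s g) r φ u x := by
  rw [levyI1_eq_setIntegral_secondDiff hN hs hg hφ hr.le,
    levyI2_eq_setIntegral_secondDiff hN hs hg hu hr, splitJumpOp]

lemma levyI1_neg (φ : EN N → ℝ) (r : ℝ) (x : EN N) :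
    levyI1 N s g (fun y ↦ -φ y) r x = -levyI1 N s g φ r x := by
  simp only [levyI1, fderiv_fun_neg, ← integral_neg, neg_apply]
  congr 1 with z
  ring

lemma levyI2_neg (u : EN N → ℝ) (r : ℝ) (x : EN N) :
    levyI2 N s g (fun y ↦ -u y) r x = -levyI2 N s g u r x := by
  simp only [levyI2, ← integral_neg]
  congr 1 with z
  ring

/-- The nonlinearity `F(t, x, v, ∇v, I) = I + f(t, x, v)`. -/
def jumpReaction (f : ℝ → EN N → ℝ → ℝ) : ℝ → EN N → ℝ → (EN N →L[ℝ] ℝ) → ℝ → ℝ :=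
  fun t x v _ I ↦ I + f t x v

variable {f : ℝ → EN N → ℝ → ℝ} {w : ℝ → EN N → ℝ}

lemma LocBddPos.exists_abs_le (hw : LocBddPos N w)
    (hcont : ContinuousOn (fun q : ℝ × EN N ↦ w q.1 q.2) (Ici 0 ×ˢ univ)) (T : ℝ) :
    ∃ M, ∀ t ∈ Icc 0 T, ∀ x, |w t x| ≤ M := by
  obtain ⟨M, hM⟩ := hw (max T 1) (by positivity)
  have hne : 0 ≠ max T 1 := (by positivity : 0 < max T 1).ne
  refine ⟨M, fun t ht x ↦ ?_⟩
  have hslice : ContinuousOn (fun t ↦ |w t x|) (Ici 0) :=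
    (hcont.comp (Continuous.prodMk_left x).continuousOn fun _ h ↦ ⟨h, trivial⟩).abs
  refine le_on_closure (fun t ht ↦ hM t ht x) (hslice.mono ?_) continuousOn_const ?_
  all_goals rw [closure_Ioc hne]
  · exact Icc_subset_Ici_self
  · exact ⟨ht.1, ht.2.trans (le_max_left _ _)⟩

theorem isSubsol_jumpReaction_iff (hN : 1 ≤ N) (hs : s ∈ Ioo (0 : ℝ) 1) (hg : H1 N g)
    (hcont : ContinuousOn (fun q : ℝ × EN N ↦ w q.1 q.2) (Ici 0 ×ˢ univ)) :
    IsSubsol N s g (jumpReaction f) (fun _ ↦ 0) w ↔ IsViscSubsol (levyMeasure N s g) f w := by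
  have hslice {T t : ℝ} (hb : ∃ M, ∀ t ∈ Icc 0 T, ∀ x, |w t x| ≤ M) (ht : t ∈ Icc 0 T) :
      BddCont (w t) :=
    ⟨continuous_slice_of_continuousOn hcont ht.1, hb.imp fun M hM ↦ hM t ht⟩
  refine ⟨fun ⟨_, hbdd, h₀, hw⟩ ↦ ⟨hcont, hbdd.exists_abs_le hcont, h₀, ?_⟩,
    fun hw ↦ ⟨hcont.upperSemicontinuousOn, fun T _ ↦ ?_, hw.initial_le, ?_⟩⟩
  · intro t₀ x₀ φ hφ τ r hτ hτt₀ hr hmax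
    have ht₀ := hτ.trans hτt₀
    have h := hw t₀ x₀ ht₀ φ hφ τ r hτ hτt₀ hr hmax
    rw [levyI1_add_levyI2 hN hs hg (contDiff_slice hφ t₀)
      (hslice (hbdd.exists_abs_le hcont t₀) ⟨ht₀.le, le_rfl⟩) hr] at h
    exact sub_nonpos.1 h
  · exact (hw.exists_abs_le T).imp fun M hM t ht ↦ hM t (Ioc_subset_Icc_self ht)
  · intro t₀ x₀ ht₀ φ hφ τ r hτ hτt₀ hr hmax
    rw [levyI1_add_levyI2 hN hs hg (contDiff_slice hφ t₀)
      (hslice (hw.exists_abs_le t₀) ⟨ht₀.le, le_rfl⟩) hr]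
    exact sub_nonpos.2 (hw.deriv_le t₀ x₀ φ hφ τ r hτ hτt₀ hr hmax)

lemma isSupersol_jumpReaction_iff_isSubsol_neg
    (hcont : ContinuousOn (fun q : ℝ × EN N ↦ w q.1 q.2) (Ici 0 ×ˢ univ)) :
    IsSupersol N s g (jumpReaction f) (fun _ ↦ 0) w ↔
      IsSubsol N s g (jumpReaction (reflectedReaction f)) (fun _ ↦ 0) fun t x ↦ -w t x := by
  refine ⟨fun ⟨_, hbdd, h₀, hw⟩ ↦ ⟨hcont.neg.upperSemicontinuousOn, ?_, ?_, ?_⟩,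
    fun ⟨_, hbdd, h₀, hw⟩ ↦ ⟨hcont.lowerSemicontinuousOn, ?_, ?_, ?_⟩⟩
  · simpa only [LocBddPos, abs_neg] using hbdd
  · simpa using h₀
  · intro t₀ x₀ ht₀ φ hφ τ r hτ hτt₀ hr hmax
    have h := hw t₀ x₀ ht₀ (fun t x ↦ -φ t x) hφ.neg τ r hτ hτt₀ hr
      fun t x ht hx ↦ by linarith [hmax t x ht hx]
    simp only [jumpReaction, reflectedReaction, levyI1_neg, levyI2_neg, deriv.fun_neg,
      neg_neg] at h ⊢
    linarith
  · simpa only [LocBddPos, abs_neg] using hbdd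
  · simpa using h₀
  · intro t₀ x₀ ht₀ φ hφ τ r hτ hτt₀ hr hmin
    have h := hw t₀ x₀ ht₀ (fun t x ↦ -φ t x) hφ.neg τ r hτ hτt₀ hr
      fun t x ht hx ↦ by linarith [hmin t x ht hx]
    simp only [jumpReaction, reflectedReaction, levyI1_neg, levyI2_neg, deriv.fun_neg,
      neg_neg] at h ⊢
    linarith

theorem isSol_jumpReaction_iff (hN : 1 ≤ N) (hs : s ∈ Ioo (0 : ℝ) 1) (hg : H1 N g) :
    IsSol N s g (jumpReaction f) (fun _ ↦ 0) w ↔ IsViscSubsol (levyMeasure N s g) f w ∧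
      IsViscSubsol (levyMeasure N s g) (reflectedReaction f) fun t x ↦ -w t x := by
  refine ⟨fun ⟨hcont, hsub, hsuper⟩ ↦ ⟨?_, ?_⟩, fun ⟨hsub, hsuper⟩ ↦ ?_⟩
  · exact (isSubsol_jumpReaction_iff hN hs hg hcont).1 hsub
  · exact (isSubsol_jumpReaction_iff hN hs hg hcont.neg).1
      ((isSupersol_jumpReaction_iff_isSubsol_neg hcont).1 hsuper)
  · have hcont := hsub.continuousOn
    exact ⟨hcont, (isSubsol_jumpReaction_iff hN hs hg hcont).2 hsub,
      (isSupersol_jumpReaction_iff_isSubsol_neg hcont).2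
        ((isSubsol_jumpReaction_iff hN hs hg hcont.neg).2 hsuper)⟩

variable {C K L : ℝ}

theorem IsReaction.isSol_limitSol (hN : 1 ≤ N) (hs : s ∈ Ioo (0 : ℝ) 1) (hg : H1 N g)
    (hf : IsReaction f C K L) :
    IsSol N s g (jumpReaction f) (fun _ ↦ 0) (limitSol (levyMeasure N s g) K f) := by
  have hμ := isSymmLevyMeasure_levyMeasure hN hs hg
  have hlim := hμ.isApproxLimit_limitSol hf
  exact (isSol_jumpReaction_iff hN hs hg).2 ⟨hlim.isViscSubsol hμ hf.continuous,
    hlim.neg.isViscSubsol hμ hf.reflectedReaction.continuous⟩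

theorem IsReaction.eq_limitSol_of_isSol (hN : 1 ≤ N) (hs : s ∈ Ioo (0 : ℝ) 1) (hg : H1 N g)
    (hf : IsReaction f C K L) (hw : IsSol N s g (jumpReaction f) (fun _ ↦ 0) w) {t : ℝ}
    (ht : 0 ≤ t) (x : EN N) : w t x = limitSol (levyMeasure N s g) K f t x := by
  have hμ := isSymmLevyMeasure_levyMeasure hN hs hg
  have hlim := hμ.isApproxLimit_limitSol hf
  have hK := hf.lip_value_nonneg
  obtain ⟨hsub, hsuper⟩ := (isSol_jumpReaction_iff hN hs hg).1 hw
  exact le_antisymm (hsub.le_of_isApproxLimit hμ hK hf.lip_value hlim ht x)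
    (neg_le_neg_iff.1 (hsuper.le_of_isApproxLimit hμ hK hf.reflectedReaction.lip_value hlim.neg
      ht x))

end LevyOperator

/-! ### Oscillation of the explicit schemes -/

lemma isNegInvariant_restrict {E : Type*} [AddGroup E] [TopologicalSpace E] [ContinuousNeg E]
    [MeasurableSpace E] [BorelSpace E] {μ : Measure E} [μ.IsNegInvariant] {A : Set E}
    (hA : -A = A) : (μ.restrict A).IsNegInvariant where
  neg_eq_self := by
    have hneg := (Homeomorph.neg E).measurableEmbedding.restrict_map μ A
    have hpre : Homeomorph.neg E ⁻¹' A = A := hA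
    rw [hpre] at hneg
    exact hneg.symm.trans (congrArg (Measure.restrict · A) (Measure.neg_eq_self μ))

section Coupling

variable {E : Type*} [NormedAddCommGroup E] [MeasurableSpace E] {μ : Measure E} {R κ : ℝ}

lemma truncatedMeasure_restrict_one_lt_norm (μ : Measure E) (j : ℕ) :
    (truncatedMeasure μ j).restrict {z | 1 < ‖z‖} = μ.restrict {z | 1 < ‖z‖} := by
  have hj : 1 / ((j : ℝ) + 1) ≤ 1 :=
    (div_le_one (by positivity)).2 (by linarith [j.cast_nonneg (α := ℝ)])
  have hsub : {z : E | 1 < ‖z‖} ⊆ {z | 1 / ((j : ℝ) + 1) < ‖z‖} := fun z hz ↦ hj.trans_lt hz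
  rw [truncatedMeasure, Measure.restrict_restrict_of_subset hsub]

lemma truncatedMeasure_real_one_lt_norm (μ : Measure E) (j : ℕ) :
    (truncatedMeasure μ j).real {z | 1 < ‖z‖} = μ.real {z | 1 < ‖z‖} := by
  rw [← measureReal_restrict_apply_univ, truncatedMeasure_restrict_one_lt_norm,
    measureReal_restrict_apply_univ]

lemma CouplesLargeJumps.truncatedMeasure (hκ : CouplesLargeJumps μ R κ) (j : ℕ) :
    CouplesLargeJumps (truncatedMeasure μ j) R κ := by
  intro x y hxy u D hu hD
  simpa only [truncatedMeasure_restrict_one_lt_norm, truncatedMeasure_real_one_lt_norm]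
    using hκ x y hxy u D hu hD

end Coupling

lemma IsSymmLevyMeasure.isNegInvariant_truncatedMeasure {E : Type*} [NormedAddCommGroup E]
    [MeasurableSpace E] [BorelSpace E] {μ : Measure E} (hμ : IsSymmLevyMeasure μ) (j : ℕ) :
    (truncatedMeasure μ j).IsNegInvariant := by
  have := hμ.isNegInvariant
  exact isNegInvariant_restrict (by ext; simp)

section Contraction

variable {E : Type*} [NormedAddCommGroup E] [MeasurableSpace E] [BorelSpace E] {μ : Measure E}
  [IsFiniteMeasure μ] [μ.IsNegInvariant] {R κ D O : ℝ} {u : E → ℝ}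

-- Small jumps from the two points are coupled by taking the same displacement.
lemma CouplesLargeJumps.integral_avg_sub_le (hκ : CouplesLargeJumps μ R κ) (hu : BddCont u)
    (hD : ∀ a b, u a - u b ≤ D) (hO : ∀ a b, ‖a - b‖ ≤ R → u a - u b ≤ O) {x y : E}
    (hxy : ‖x - y‖ ≤ R) :
    (∫ z, (u (x + z) + u (x - z)) / 2 ∂μ) - ∫ z, (u (y + z) + u (y - z)) / 2 ∂μ ≤
      (μ.real {z | 1 < ‖z‖} - κ) * D + μ.real {z | 1 < ‖z‖}ᶜ * O := by
  have hmeas : MeasurableSet {z : E | 1 < ‖z‖} := measurableSet_lt measurable_const measurable_norm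
  have hlarge (a : E) : ∫ z in {z | 1 < ‖z‖}, (u (a + z) + u (a - z)) / 2 ∂μ =
      ∫ z in {z | 1 < ‖z‖}, u (a + z) ∂μ := by
    obtain ⟨B, hB⟩ := hu.bdd
    have hint : Integrable (fun z ↦ u (a + z)) μ := .of_bound
      (hu.cont.comp (continuous_const_add a)).aestronglyMeasurable B (.of_forall fun z ↦ hB _)
    rw [setIntegral_eq_setIntegral_symmetrization (by ext; simp) hint.integrableOn]
    simp only [← sub_eq_add_neg]
  have hsmall : (∫ z in {z | 1 < ‖z‖}ᶜ, (u (x + z) + u (x - z)) / 2 ∂μ) -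
      ∫ z in {z | 1 < ‖z‖}ᶜ, (u (y + z) + u (y - z)) / 2 ∂μ ≤ μ.real {z | 1 < ‖z‖}ᶜ * O := by
    have hx := (hu.integrable_avg (μ := μ) x).integrableOn (s := {z | 1 < ‖z‖}ᶜ)
    have hy := (hu.integrable_avg (μ := μ) y).integrableOn (s := {z | 1 < ‖z‖}ᶜ)
    rw [← integral_sub hx hy, ← smul_eq_mul, ← setIntegral_const]
    refine integral_mono (hx.sub hy) (integrable_const _) fun z ↦ ?_
    have hadd := hO (x + z) (y + z) (by rwa [add_sub_add_right_eq_sub])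
    have hsub := hO (x - z) (y - z) (by rwa [sub_sub_sub_cancel_right])
    dsimp only
    linarith
  rw [← integral_add_compl hmeas (hu.integrable_avg x),
    ← integral_add_compl hmeas (hu.integrable_avg y), hlarge, hlarge]
  linarith [hκ x y hxy u D hu.cont hD]

lemma CouplesLargeJumps.eulerStep_sub_le (hκ : CouplesLargeJumps μ R κ) {h C a b : ℝ} (hh : 0 ≤ h)
    (hcfl : h * μ.real univ ≤ 1) (hC : μ.real {z | 1 < ‖z‖} * (D - O) + 2 * C ≤ κ * D)
    (hu : BddCont u) (hD : ∀ a b, u a - u b ≤ D) (hO : ∀ a b, ‖a - b‖ ≤ R → u a - u b ≤ O)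
    (ha : |a| ≤ C) (hb : |b| ≤ C) {x y : E} (hxy : ‖x - y‖ ≤ R) :
    u x + h * (jumpOp μ u x + a) - (u y + h * (jumpOp μ u y + b)) ≤ O := by
  have hmeas : MeasurableSet {z : E | 1 < ‖z‖} := measurableSet_lt measurable_const measurable_norm
  have hdrift : jumpOp μ u x + a - (jumpOp μ u y + b) ≤ μ.real univ * (O - (u x - u y)) := by
    rw [hu.jumpOp_eq, hu.jumpOp_eq]
    have := hκ.integral_avg_sub_le hu hD hO hxy
    linear_combination this + hC + (abs_le.1 ha).2 + (abs_le.1 hb).1 +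
      O * measureReal_add_measureReal_compl (μ := μ) hmeas
  calc u x + h * (jumpOp μ u x + a) - (u y + h * (jumpOp μ u y + b))
      = u x - u y + h * (jumpOp μ u x + a - (jumpOp μ u y + b)) := by ring
    _ ≤ u x - u y + h * (μ.real univ * (O - (u x - u y))) := by gcongr
    _ ≤ O := by nlinarith [mul_nonneg (sub_nonneg.2 hcfl) (sub_nonneg.2 (hO x y hxy))]

end Contraction

section CellPeriodic

variable {N : ℕ} {f : ℝ → EN N → ℝ → ℝ} {p : EN N} {C K L h : ℝ}

/-- An integer vector, seen in `ℝ^N`. -/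
noncomputable def intVec (k : Fin N → ℤ) : EN N :=
  (WithLp.equiv 2 (Fin N → ℝ)).symm fun j ↦ (k j : ℝ)

/-- The periodicity of the reaction term of a cell problem with slope `p`: it is `1`-periodic in
time and in the value, and translating space by an integer vector `k` amounts to adding `p · k` to
the value. -/
structure IsCellPeriodic (f : ℝ → EN N → ℝ → ℝ) (p : EN N) : Prop where
  value : ∀ t x v, f t x (v + 1) = f t x v
  time : ∀ t x v, f (t + 1) x v = f t x v
  space : ∀ k t x v, f t (x + intVec k) v = f t x (v + ⟪p, intVec k⟫)

namespace IsCellPeriodic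

lemma add_intCast (hp : IsCellPeriodic f p) (t : ℝ) (x : EN N) (v : ℝ) (m : ℤ) :
    f t x (v + m) = f t x v := by
  have hper : Function.Periodic (f t x) 1 := hp.value t x
  simpa using hper.int_mul m v

lemma natCast_add (hp : IsCellPeriodic f p) (t : ℝ) (x : EN N) (v : ℝ) (m : ℕ) :
    f (t + m) x v = f t x v := by
  have hper : Function.Periodic (fun t ↦ f t x v) 1 := fun t ↦ hp.time t x v
  simpa using hper.nat_mul m t

lemma isEulerSeq_eulerScheme_add_intCast (hp : IsCellPeriodic f p) (μ : Measure (EN N)) (h : ℝ)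
    (m : ℤ) : IsEulerSeq μ h (fun n x ↦ f (n * h) x (eulerScheme μ h f n x + m))
      fun n x ↦ eulerScheme μ h f n x + m := fun n x ↦ by
  dsimp only
  rw [jumpOp_add_const, hp.add_intCast, isEulerSeq_eulerScheme]
  ring

lemma isEulerSeq_eulerScheme_add_nat (hp : IsCellPeriodic f p) (μ : Measure (EN N)) {m l : ℕ}
    (hm : m * h = l) : IsEulerSeq μ h (fun n x ↦ f (n * h) x (eulerScheme μ h f (n + m) x))
      fun n ↦ eulerScheme μ h f (n + m) := fun n x ↦ by
  have := isEulerSeq_eulerScheme μ h f (n + m) x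
  dsimp only at this ⊢
  rwa [Nat.cast_add, add_mul, hm, hp.natCast_add, add_right_comm n m 1] at this

end IsCellPeriodic

lemma exists_norm_add_intVec_sub_le (x y : EN N) : ∃ k, ‖x + intVec k - y‖ ≤ N := by
  refine ⟨fun j ↦ -⌊x j - y j⌋, ?_⟩
  have hcoord (j : Fin N) : (x + intVec (fun j ↦ -⌊x j - y j⌋) - y) j = Int.fract (x j - y j) := by
    simp only [intVec, Int.fract, PiLp.sub_apply, PiLp.add_apply, WithLp.equiv_symm_apply,
      Int.cast_neg]
    ring
  rw [EuclideanSpace.norm_eq]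
  refine Real.sqrt_le_iff.2 ⟨N.cast_nonneg, ?_⟩
  calc ∑ j, ‖(x + intVec (fun j ↦ -⌊x j - y j⌋) - y) j‖ ^ 2
      ≤ ∑ _j : Fin N, (1 : ℝ) := Finset.sum_le_sum fun j _ ↦ by
        rw [hcoord, Real.norm_of_nonneg (Int.fract_nonneg _)]
        exact pow_le_one₀ (Int.fract_nonneg _) (Int.fract_lt_one _).le
    _ = N := by simp
    _ ≤ (N : ℝ) ^ 2 := by exact_mod_cast Nat.le_self_pow two_ne_zero N

variable {μ : Measure (EN N)} [IsFiniteMeasure μ]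

-- `(n, x) ↦ u n (x + k) + c` solves the same scheme when `c ∈ [0, 1)` is the fractional part of
-- `p · k`.
lemma IsReaction.eulerScheme_le_eulerScheme_add_intVec (hf : IsReaction f C K L)
    (hp : IsCellPeriodic f p) (hh : 0 ≤ h) (hcfl : h * (μ.real univ + K) ≤ 1) (k : Fin N → ℤ)
    (n : ℕ) (x : EN N) : eulerScheme μ h f n x ≤ eulerScheme μ h f n (x + intVec k) + 1 := by
  set c := Int.fract ⟪p, intVec k⟫
  have hu := hf.bddCont_eulerScheme (μ := μ) hh
  have htrans : IsEulerSeq μ h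
      (fun n x ↦ f (n * h) x (eulerScheme μ h f n (x + intVec k) + c))
      fun n x ↦ eulerScheme μ h f n (x + intVec k) + c := fun n x ↦ by
    have hval : f (n * h) x (eulerScheme μ h f n (x + intVec k) + c) =
        f (n * h) (x + intVec k) (eulerScheme μ h f n (x + intVec k)) := by
      rw [hp.space, ← Int.fract_add_floor ⟪p, intVec k⟫, ← add_assoc, hp.add_intCast]
    dsimp only
    rw [jumpOp_add_const fun x ↦ eulerScheme μ h f n (x + intVec k), jumpOp_translate, hval,
      isEulerSeq_eulerScheme]
    ring
  have hle := (isEulerSeq_eulerScheme μ h f).le_of_le htrans hu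
    (fun n ↦ ((hu n).translate _).add_const _) hh hf.lip_value_nonneg hcfl
    (by simp [c, Int.fract_nonneg])
    (fun n x ↦ hf.le_add_mul_abs_sub _ _ _ _) n x
  linarith [Int.fract_lt_one ⟪p, intVec k⟫]

lemma IsReaction.eulerScheme_sub_le [μ.IsNegInvariant] (hf : IsReaction f C K L)
    (hp : IsCellPeriodic f p) (hh : 0 ≤ h) (hcfl : h * (μ.real univ + K) ≤ 1) {κ O : ℝ}
    (hκ : CouplesLargeJumps μ N κ) (hO : 0 ≤ O)
    (hC : μ.real {z | 1 < ‖z‖} + 2 * C ≤ κ * (O + 1)) (n : ℕ) (x y : EN N) :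
    eulerScheme μ h f n x - eulerScheme μ h f n y ≤ O + 1 := by
  have hglobal (n : ℕ)
      (hloc : ∀ x y, ‖x - y‖ ≤ N → eulerScheme μ h f n x - eulerScheme μ h f n y ≤ O) (x y : EN N) :
      eulerScheme μ h f n x - eulerScheme μ h f n y ≤ O + 1 := by
    obtain ⟨k, hk⟩ := exists_norm_add_intVec_sub_le x y
    linarith [hloc _ _ hk, hf.eulerScheme_le_eulerScheme_add_intVec hp hh hcfl k n x]
  refine hglobal n ?_ x y
  induction n with
  | zero => simpa using fun _ _ _ ↦ hO
  | succ n ih =>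
    intro x y hxy
    have hcfl' : h * μ.real univ ≤ 1 := by linarith [mul_nonneg hh hf.lip_value_nonneg]
    exact hκ.eulerStep_sub_le hh hcfl' (by linarith) (hf.bddCont_eulerScheme hh n) (hglobal n ih) ih
      (hf.bound _ _ _) (hf.bound _ _ _) hxy

lemma IsReaction.abs_eulerScheme_add_sub_sub_le (hf : IsReaction f C K L) (hp : IsCellPeriodic f p)
    (hh : 0 ≤ h) (hcfl : h * (μ.real univ + K) ≤ 1) {m l : ℕ} (hm : m * h = l) {D : ℝ}
    (hosc : ∀ x y, eulerScheme μ h f m x - eulerScheme μ h f m y ≤ D) (n : ℕ) (x : EN N) :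
    |eulerScheme μ h f (n + m) x - eulerScheme μ h f n x - eulerScheme μ h f m 0| ≤ D + 1 := by
  set u := eulerScheme μ h f
  have hu (n : ℕ) : BddCont (u n) := hf.bddCont_eulerScheme hh n
  have htime := hp.isEulerSeq_eulerScheme_add_nat μ hm
  have hvalue := hp.isEulerSeq_eulerScheme_add_intCast μ h
  have hupper := htime.le_of_le (hvalue ⌈u m 0 + D⌉) (fun n ↦ hu _) (fun n ↦ (hu n).add_const _)
    hh hf.lip_value_nonneg hcfl
    (fun y ↦ by
      rw [zero_add]
      linarith [hosc y 0, Int.le_ceil (u m 0 + D), eulerScheme_zero μ h f y])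
    (fun n y ↦ hf.le_add_mul_abs_sub _ _ _ _) n x
  have hlower := (hvalue ⌊u m 0 - D⌋).le_of_le htime (fun n ↦ (hu n).add_const _) (fun n ↦ hu _)
    hh hf.lip_value_nonneg hcfl
    (fun y ↦ by
      rw [zero_add]
      linarith [hosc 0 y, Int.floor_le (u m 0 - D), eulerScheme_zero μ h f y])
    (fun n y ↦ hf.le_add_mul_abs_sub _ _ _ _) n x
  rw [abs_le]
  constructor <;> linarith [Int.ceil_lt_add_one (u m 0 + D), Int.lt_floor_add_one (u m 0 - D)]

end CellPeriodic

/-! ### Asymptotic slopes of almost additive functions -/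

section AlmostAdditive

lemma bddBelow_range_add_div {a : ℕ → ℝ} {C D : ℝ} (hC : 0 ≤ C) (ha : ∀ n, |a n| ≤ n * D) :
    BddBelow (range fun n : ℕ ↦ (a n + C) / n) := by
  refine ⟨-|D|, forall_mem_range.2 fun n ↦ ?_⟩
  rcases n.eq_zero_or_pos with rfl | hn
  · simp
  · have hn' : (0 : ℝ) < n := Nat.cast_pos.2 hn
    rw [le_div_iff₀ hn']
    linarith [(abs_le.1 (ha n)).1, mul_le_mul_of_nonneg_left (le_abs_self D) hn'.le]

-- Both `a + C` and `-a + C` are subadditive, so Fekete's lemma bounds `a n - n * lam` on both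
-- sides.
lemma exists_abs_sub_mul_le_of_abs_add_sub_sub_le {a : ℕ → ℝ} {C D : ℝ}
    (hadd : ∀ m n, |a (m + n) - a m - a n| ≤ C) (ha : ∀ n, |a n| ≤ n * D) :
    ∃ lam, ∀ n : ℕ, |a n - n * lam| ≤ C := by
  have hC : 0 ≤ C := (abs_nonneg _).trans (hadd 0 0)
  have hupper : Subadditive fun n ↦ a n + C := fun m n ↦ by linarith [(abs_le.1 (hadd m n)).2]
  have hlower : Subadditive fun n ↦ -a n + C := fun m n ↦ by linarith [(abs_le.1 (hadd m n)).1]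
  have hbddU := bddBelow_range_add_div hC ha
  have hbddL : BddBelow (range fun n : ℕ ↦ (-a n + C) / n) :=
    bddBelow_range_add_div hC fun n ↦ by rw [abs_neg]; exact ha n
  have hlim : hupper.lim + hlower.lim = 0 := by
    refine tendsto_nhds_unique ((hupper.tendsto_lim hbddU).add (hlower.tendsto_lim hbddL))
      ((tendsto_const_div_atTop_nhds_zero_nat (2 * C)).congr fun n ↦ ?_)
    ring
  refine ⟨hupper.lim, fun n ↦ ?_⟩
  rcases n.eq_zero_or_pos with rfl | hn
  · have : a 0 = 0 := by simpa using ha 0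
    simpa [this] using hC
  · have hleU := hupper.lim_le_div hbddU hn.ne'
    have hleL := hlower.lim_le_div hbddL hn.ne'
    rw [eq_neg_of_add_eq_zero_right hlim] at hleL
    rw [le_div_iff₀ (Nat.cast_pos.2 hn)] at hleU hleL
    rw [abs_le]
    constructor <;> linarith

lemma abs_div_sub_le_of_abs_sub_mul_le {a t lam D : ℝ} (ht : 0 < t) (h : |a - t * lam| ≤ D) :
    |a / t - lam| ≤ D / t := by
  rw [div_sub' ht.ne', abs_div, abs_of_pos ht]
  gcongr

lemma tendsto_div_of_abs_sub_mul_le {a : ℕ → ℝ} {C lam : ℝ} (h : ∀ n : ℕ, |a n - n * lam| ≤ C) :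
    Tendsto (fun n : ℕ ↦ a n / n) atTop (𝓝 lam) := by
  rw [tendsto_iff_norm_sub_tendsto_zero]
  refine squeeze_zero' (.of_forall fun _ ↦ norm_nonneg _) ?_
    (tendsto_const_div_atTop_nhds_zero_nat C)
  filter_upwards [eventually_gt_atTop 0] with n hn
  exact abs_div_sub_le_of_abs_sub_mul_le (Nat.cast_pos.2 hn) (h n)

variable {E : Type*} [Zero E] {w w' : ℝ → E → ℝ} {C C' D D' : ℝ}

/-- A function `w` of time `t ≥ 0` and space which grows at most linearly in time and is additive
in time up to an error `C`, uniformly in space, when the second time is an integer. -/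
structure IsAlmostAdditive (w : ℝ → E → ℝ) (C D : ℝ) : Prop where
  abs_add_sub_sub_le : ∀ t, 0 ≤ t → ∀ (l : ℕ) (x : E), |w (t + l) x - w t x - w l 0| ≤ C
  abs_le : ∀ t, 0 ≤ t → ∀ x, |w t x| ≤ t * D

/-- The limit of `w t x / t` as `t → ∞`, computed at integer times and at the origin. -/
noncomputable def asymptoticSlope (w : ℝ → E → ℝ) : ℝ := limUnder atTop fun l : ℕ ↦ w l 0 / l

namespace IsAlmostAdditive

lemma growth_nonneg (hw : IsAlmostAdditive w C D) : 0 ≤ D := by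
  simpa using (abs_nonneg _).trans (hw.abs_le 1 zero_le_one 0)

lemma abs_natCast_sub_mul_asymptoticSlope_le (hw : IsAlmostAdditive w C D) (n : ℕ) :
    |w n 0 - n * asymptoticSlope w| ≤ C := by
  obtain ⟨lam, hlam⟩ := exists_abs_sub_mul_le_of_abs_add_sub_sub_le (a := fun n : ℕ ↦ w n 0)
    (fun m n ↦ by simpa using hw.abs_add_sub_sub_le m m.cast_nonneg n 0)
    fun n ↦ hw.abs_le n n.cast_nonneg 0
  rw [asymptoticSlope, (tendsto_div_of_abs_sub_mul_le hlam).limUnder_eq]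
  exact hlam n

lemma tendsto_div_asymptoticSlope (hw : IsAlmostAdditive w C D) :
    Tendsto (fun l : ℕ ↦ w l 0 / l) atTop (𝓝 (asymptoticSlope w)) :=
  tendsto_div_of_abs_sub_mul_le hw.abs_natCast_sub_mul_asymptoticSlope_le

lemma abs_sub_mul_asymptoticSlope_le (hw : IsAlmostAdditive w C D) {t : ℝ} (ht : 0 ≤ t) (x : E) :
    |w t x - t * asymptoticSlope w| ≤ 2 * C + D + |asymptoticSlope w| := by
  set lam := asymptoticSlope w
  have hfract : Int.fract t + (⌊t⌋₊ : ℝ) = t := by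
    rw [natCast_floor_eq_intCast_floor ht, Int.fract_add_floor]
  have hadd := hw.abs_add_sub_sub_le _ (Int.fract_nonneg t) ⌊t⌋₊ x
  have hint := hw.abs_natCast_sub_mul_asymptoticSlope_le ⌊t⌋₊
  have hsmall : |w (Int.fract t) x| ≤ D := (hw.abs_le _ (Int.fract_nonneg t) x).trans
    (mul_le_of_le_one_left hw.growth_nonneg (Int.fract_lt_one t).le)
  have hslope : |Int.fract t * lam| ≤ |lam| := by
    rw [abs_mul, abs_of_nonneg (Int.fract_nonneg t)]
    exact mul_le_of_le_one_left (abs_nonneg _) (Int.fract_lt_one t).le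
  rw [hfract] at hadd
  calc |w t x - t * lam|
      = |(w t x - w (Int.fract t) x - w ⌊t⌋₊ 0) + (w ⌊t⌋₊ 0 - ⌊t⌋₊ * lam) + w (Int.fract t) x -
          Int.fract t * lam| := by
        congr 1
        linear_combination lam * hfract
    _ ≤ C + C + D + |lam| :=
        (abs_sub _ _).trans (add_le_add (abs_add_three _ _ _ |>.trans (by gcongr)) hslope)
    _ = 2 * C + D + |lam| := by ring

lemma asymptoticSlope_le_asymptoticSlope (hw : IsAlmostAdditive w C D)
    (hw' : IsAlmostAdditive w' C' D') (hle : ∀ l : ℕ, w l 0 ≤ w' l 0) :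
    asymptoticSlope w ≤ asymptoticSlope w' :=
  le_of_tendsto_of_tendsto' hw.tendsto_div_asymptoticSlope hw'.tendsto_div_asymptoticSlope
    fun l ↦ div_le_div_of_nonneg_right (hle l) l.cast_nonneg

end IsAlmostAdditive

lemma continuous_asymptoticSlope {P : Type*} [TopologicalSpace P] {w : P → ℝ → E → ℝ}
    {C D : P → ℝ} (hw : ∀ q, IsAlmostAdditive (w q) (C q) (D q)) (hC : Continuous C)
    (hcont : ∀ l : ℕ, Continuous fun q ↦ w q l 0) : Continuous fun q ↦ asymptoticSlope (w q) := by
  have hlim : TendstoLocallyUniformly (fun (l : ℕ) q ↦ w q l 0 / l)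
      (fun q ↦ asymptoticSlope (w q)) atTop := by
    refine Metric.tendstoLocallyUniformly_iff.2 fun ε hε q₀ ↦
      ⟨{q | C q < C q₀ + 1}, hC.continuousAt.eventually_lt_const (lt_add_one _), ?_⟩
    filter_upwards [eventually_gt_atTop 0,
      (tendsto_const_div_atTop_nhds_zero_nat (C q₀ + 1)).eventually_lt_const hε] with l hl hlε q hq
    have hl' : (0 : ℝ) < l := Nat.cast_pos.2 hl
    rw [dist_comm]
    exact ((abs_div_sub_le_of_abs_sub_mul_le hl'
      ((hw q).abs_natCast_sub_mul_asymptoticSlope_le l)).trans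
        (div_le_div_of_nonneg_right (le_of_lt hq) hl'.le)).trans_lt hlε
  exact hlim.continuous (.of_forall fun l ↦ (hcont l).div_const _)

end AlmostAdditive

section SlopeLim

variable {N : ℕ} {w w' : ℝ → EN N → ℝ} {a b : ℝ}

lemma IsAlmostAdditive.slopeLim_asymptoticSlope {C D : ℝ} (hw : IsAlmostAdditive w C D) :
    SlopeLim N w (asymptoticSlope w) := by
  intro ε hε R _
  set B := 2 * C + D + |asymptoticSlope w|
  refine ⟨max 1 (B / ε), fun t ht x _ ↦ ?_⟩
  have hpos : 0 < t := zero_lt_one.trans_le ((le_max_left _ _).trans ht)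
  refine (abs_div_sub_le_of_abs_sub_mul_le hpos
    (hw.abs_sub_mul_asymptoticSlope_le hpos.le x)).trans ?_
  exact (div_le_comm₀ hpos hε).2 ((le_max_right _ _).trans ht)

lemma SlopeLim.tendsto (h : SlopeLim N w a) (x : EN N) :
    Tendsto (fun t ↦ w t x / t) atTop (𝓝 a) := by
  refine Metric.tendsto_atTop.2 fun ε hε ↦ ?_
  obtain ⟨T, hT⟩ := h (ε / 2) (half_pos hε) (‖x‖ + 1) (by positivity)
  exact ⟨T, fun t ht ↦ (hT t ht x (by linarith)).trans_lt (half_lt_self hε)⟩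

lemma SlopeLim.eq_of_eqOn (ha : SlopeLim N w a) (hb : SlopeLim N w' b)
    (hww' : ∀ t, 0 ≤ t → ∀ x, w t x = w' t x) : a = b :=
  tendsto_nhds_unique_of_eventuallyEq (ha.tendsto 0) (hb.tendsto 0) <| by
    filter_upwards [eventually_ge_atTop 0] with t ht
    rw [hww' t ht]

end SlopeLim

section LimitSol

variable {E : Type*} [NormedAddCommGroup E] [NormedSpace ℝ E] [FiniteDimensional ℝ E]
  [MeasurableSpace E] [BorelSpace E] {μ : Measure E} {K : ℝ}

namespace IsSymmLevyMeasure

lemma limitSol_le_limitSol (hμ : IsSymmLevyMeasure μ) {f f' : ℝ → E → ℝ → ℝ} {C C' L L' : ℝ}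
    (hf : IsReaction f C K L) (hf' : IsReaction f' C' K L')
    (hle : ∀ t x v, f t x v ≤ f' t x v) {t : ℝ} (ht : 0 ≤ t) (x : E) :
    limitSol μ K f t x ≤ limitSol μ K f' t x := by
  refine le_of_tendsto_of_tendsto' (hμ.tendsto_levelApprox hf ht x)
    (hμ.tendsto_levelApprox hf' ht x) fun j ↦ ?_
  have := hμ.isFiniteMeasure_truncatedMeasure j
  have hh : 0 ≤ timeStep μ K j := (timeStep_pos j).le
  exact (isEulerSeq_eulerScheme _ _ f).le_of_le (isEulerSeq_eulerScheme _ _ f')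
    (hf.bddCont_eulerScheme hh) (hf'.bddCont_eulerScheme hh) hh hf.lip_value_nonneg
    (timeStep_mul_le_one j) (fun _ ↦ by simp)
    (fun n x ↦ (hle _ _ _).trans (hf'.le_add_mul_abs_sub _ _ _ _)) _ x

lemma continuous_limitSol_of_param (hμ : IsSymmLevyMeasure μ) {P : Type*} [TopologicalSpace P]
    [FirstCountableTopology P] {f : P → ℝ → E → ℝ → ℝ} {C L : P → ℝ}
    (hf : ∀ q, IsReaction (f q) (C q) K (L q)) (hC : Continuous C) (hL : Continuous L)
    (hcont : ∀ t, Continuous fun q : P × E × ℝ ↦ f q.1 t q.2.1 q.2.2) {t : ℝ} (ht : 0 ≤ t)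
    (x : E) : Continuous fun q ↦ limitSol μ K (f q) t x := by
  refine continuous_of_locally_uniform_approx_of_continuousAt fun q₀ U hU ↦ ?_
  obtain ⟨ε, hε, hεU⟩ := Metric.mem_uniformity_dist.1 hU
  obtain ⟨_, J, hJ⟩ := hμ.exists_isApproxSol_abs_sub_limitSol_le (C q₀ + 1) K (L q₀ + 1) ht
    (half_pos hε)
  have hlocal : ∀ᶠ q in 𝓝 q₀, IsReaction (f q) (C q₀ + 1) K (L q₀ + 1) := by
    filter_upwards [hC.continuousAt.eventually_lt_const (lt_add_one (C q₀)),
      hL.continuousAt.eventually_lt_const (lt_add_one (L q₀))] with q hCq hLq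
    exact (hf q).mono hCq.le hLq.le
  refine ⟨_, hlocal, fun q ↦ levelApprox μ K (f q) J t x, ?_, fun q hq ↦ hεU ?_⟩
  · have := hμ.isFiniteMeasure_truncatedMeasure J
    have hscheme := continuous_eulerScheme_of_param (μ := truncatedMeasure μ J)
      (timeStep_pos (μ := μ) (K := K) J).le hC (fun q ↦ (hf q).bound) hcont ⌊t / timeStep μ K J⌋₊
    exact (hscheme.comp (.prodMk_left x)).continuousAt
  · rw [dist_comm, Real.dist_eq]
    exact ((hJ _ hq).2 J le_rfl t ⟨ht, le_rfl⟩ x).trans_lt (half_lt_self hε)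

end IsSymmLevyMeasure

end LimitSol

section CellPeriodicLimit

variable {N : ℕ} {μ : Measure (EN N)} {κ K : ℝ}

lemma IsReaction.abs_levelApprox_add_sub_sub_le {f : ℝ → EN N → ℝ → ℝ} {p : EN N} {C L : ℝ}
    (hf : IsReaction f C K L) (hp : IsCellPeriodic f p) (hμ : IsSymmLevyMeasure μ)
    (hκ : CouplesLargeJumps μ N κ) (hκpos : 0 < κ) (j : ℕ) {t : ℝ} (ht : 0 ≤ t) (l : ℕ)
    (x : EN N) :
    |levelApprox μ K f j (t + l) x - levelApprox μ K f j t x - levelApprox μ K f j l 0| ≤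
      (μ.real {z | 1 < ‖z‖} + 2 * C) / κ + 2 := by
  have := hμ.isFiniteMeasure_truncatedMeasure j
  have := hμ.isNegInvariant_truncatedMeasure j
  have hh := (timeStep_pos (μ := μ) (K := K) j).le
  have hcfl := timeStep_mul_le_one (μ := μ) (K := K) j
  set O := (μ.real {z | 1 < ‖z‖} + 2 * C) / κ with hO
  have hO₀ : 0 ≤ O := div_nonneg (add_nonneg measureReal_nonneg
    (mul_nonneg zero_le_two hf.bound_nonneg)) hκpos.le
  have hthreshold : (truncatedMeasure μ j).real {z | 1 < ‖z‖} + 2 * C ≤ κ * (O + 1) := by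
    rw [truncatedMeasure_real_one_lt_norm, mul_add, hO, mul_div_cancel₀ _ hκpos.ne']
    linarith
  have hsteps : (l * stepsPerUnit μ K j : ℕ) * timeStep μ K j = l := by
    rw [Nat.cast_mul, mul_assoc, stepsPerUnit_mul_timeStep, mul_one]
  have hfloor : ⌊(l : ℝ) / timeStep μ K j⌋₊ = l * stepsPerUnit μ K j := by
    simpa using floor_add_natCast_div_timeStep (μ := μ) (K := K) le_rfl j l
  have hosc := hf.eulerScheme_sub_le hp hh hcfl (hκ.truncatedMeasure j) hO₀ hthreshold
    (l * stepsPerUnit μ K j)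
  have hadd := hf.abs_eulerScheme_add_sub_sub_le hp hh hcfl hsteps hosc ⌊t / timeStep μ K j⌋₊ x
  rwa [← floor_add_natCast_div_timeStep ht, ← hfloor, add_assoc, one_add_one_eq_two] at hadd

theorem IsReaction.isAlmostAdditive_limitSol {f : ℝ → EN N → ℝ → ℝ} {p : EN N} {C L : ℝ}
    (hf : IsReaction f C K L) (hp : IsCellPeriodic f p) (hμ : IsSymmLevyMeasure μ)
    (hκ : CouplesLargeJumps μ N κ) (hκpos : 0 < κ) :
    IsAlmostAdditive (limitSol μ K f) ((μ.real {z | 1 < ‖z‖} + 2 * C) / κ + 2) C where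
  abs_le _ ht x := hμ.abs_limitSol_le hf ht x
  abs_add_sub_sub_le _ ht l x :=
    have hl : (0 : ℝ) ≤ l := l.cast_nonneg
    le_of_tendsto' (((hμ.tendsto_levelApprox hf (add_nonneg ht hl) x).sub
      (hμ.tendsto_levelApprox hf ht x)).sub (hμ.tendsto_levelApprox hf hl 0)).abs
      fun j ↦ hf.abs_levelApprox_add_sub_sub_le hp hμ hκ hκpos j ht l x

theorem continuous_asymptoticSlope_limitSol {P : Type*} [TopologicalSpace P]
    [FirstCountableTopology P] {f : P → ℝ → EN N → ℝ → ℝ} {p : P → EN N} {C L : P → ℝ}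
    (hf : ∀ q, IsReaction (f q) (C q) K (L q)) (hp : ∀ q, IsCellPeriodic (f q) (p q))
    (hμ : IsSymmLevyMeasure μ) (hκ : CouplesLargeJumps μ N κ) (hκpos : 0 < κ) (hC : Continuous C)
    (hL : Continuous L) (hcont : ∀ t, Continuous fun q : P × EN N × ℝ ↦ f q.1 t q.2.1 q.2.2) :
    Continuous fun q ↦ asymptoticSlope (limitSol μ K (f q)) :=
  continuous_asymptoticSlope (fun q ↦ (hf q).isAlmostAdditive_limitSol (hp q) hμ hκ hκpos)
    (by fun_prop) fun l ↦ hμ.continuous_limitSol_of_param hf hC hL hcont l.cast_nonneg 0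

end CellPeriodicLimit

/-! ### The cell problem -/

section CellProblem

variable {N : ℕ} {W : ℝ → ℝ} {σ : ℝ → EN N → ℝ}

/-- The reaction term `L - W'(v + p · y) + σ(τ, y)` of the cell problem. -/
noncomputable def cellReaction (W : ℝ → ℝ) (σ : ℝ → EN N → ℝ) (p : EN N) (L : ℝ) :
    ℝ → EN N → ℝ → ℝ :=
  fun τ y v ↦ L - deriv W (v + ⟪p, y⟫) + σ τ y

lemma jumpReaction_cellReaction (W : ℝ → ℝ) (σ : ℝ → EN N → ℝ) (p : EN N) (L : ℝ) :
    jumpReaction (cellReaction W σ p L) = cellF N W σ p L := by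
  ext τ y v q I
  simp only [jumpReaction, cellReaction, cellF]
  ring

namespace H2

lemma continuous_deriv (hW : H2 W) : Continuous (deriv W) := hW.1.continuous_deriv le_rfl

lemma periodic_deriv (hW : H2 W) : Function.Periodic (deriv W) 1 := fun v ↦ by
  rw [← deriv_comp_add_const, funext hW.2.2]

lemma exists_abs_deriv_le (hW : H2 W) : ∃ C, ∀ v, |deriv W v| ≤ C := by
  obtain ⟨C, hC⟩ := (hW.periodic_deriv.isBounded_of_continuous one_ne_zero
    hW.continuous_deriv).exists_norm_le
  exact ⟨C, fun v ↦ hC _ (mem_range_self v)⟩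

end H2

namespace H3

lemma continuous (hσ : H3 N σ) : Continuous fun q : ℝ × EN N ↦ σ q.1 q.2 :=
  hσ.1.elim fun _ h ↦ h.continuous

lemma exists_abs_le (hσ : H3 N σ) : ∃ C, ∀ t x, |σ t x| ≤ C := by
  obtain ⟨C, hC⟩ := ((isCompact_Icc (a := (0 : ℝ)) (b := 1)).prod
    (isCompact_closedBall (0 : EN N) N)).exists_bound_of_continuousOn hσ.continuous.continuousOn
  refine ⟨C, fun t x ↦ ?_⟩
  obtain ⟨k, hk⟩ := exists_norm_add_intVec_sub_le x 0
  have hper : Function.Periodic (fun t ↦ σ t x) 1 := fun t ↦ hσ.2.1 t x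
  have hcell : σ (Int.fract t) (x + intVec k) = σ t x :=
    (hσ.2.2 k (Int.fract t) x).trans (by simpa using hper.sub_int_mul_eq (x := t) ⌊t⌋)
  rw [← hcell]
  exact hC (Int.fract t, x + intVec k)
    ⟨⟨Int.fract_nonneg t, (Int.fract_lt_one t).le⟩, mem_closedBall_iff_norm.2 hk⟩

lemma exists_abs_sub_le (hσ : H3 N σ) :
    ∃ L, ∀ t₁ t₂ x₁ x₂, |σ t₁ x₁ - σ t₂ x₂| ≤ L * (|t₁ - t₂| + ‖x₁ - x₂‖) := by
  obtain ⟨L, hL⟩ := hσ.1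
  refine ⟨L, fun t₁ t₂ x₁ x₂ ↦ (hL.dist_le_mul (t₁, x₁) (t₂, x₂)).trans ?_⟩
  rw [Prod.dist_eq, Real.dist_eq, dist_eq_norm]
  gcongr
  exact max_le_add_of_nonneg (abs_nonneg _) (norm_nonneg _)

end H3

lemma abs_apply_add_inner_sub_le {E : Type*} [NormedAddCommGroup E] [InnerProductSpace ℝ E]
    {φ : ℝ → ℝ} {K : NNReal} (hφ : LipschitzWith K φ) (p x₁ x₂ : E) (v : ℝ) :
    |φ (v + ⟪p, x₁⟫) - φ (v + ⟪p, x₂⟫)| ≤ K * ‖p‖ * ‖x₁ - x₂‖ := by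
  refine (hφ.dist_le_mul _ _).trans ?_
  rw [Real.dist_eq, add_sub_add_left_eq_sub, ← inner_sub_right, mul_assoc]
  gcongr
  exact abs_real_inner_le_norm p _

lemma exists_isReaction_cellReaction (hW : H2 W) (hσ : H3 N σ) :
    ∃ C K B : ℝ, ∀ p L, IsReaction (cellReaction W σ p L) (C + |L|) K (K * ‖p‖ + B) := by
  obtain ⟨K, hK⟩ := hW.2.1
  obtain ⟨CW, hCW⟩ := hW.exists_abs_deriv_le
  obtain ⟨Cσ, hCσ⟩ := hσ.exists_abs_le
  obtain ⟨B, hB⟩ := hσ.exists_abs_sub_le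
  refine ⟨CW + Cσ, K, B, fun p L ↦ ⟨fun t x v ↦ ?_, fun t x v v' ↦ ?_, fun t₁ t₂ x₁ x₂ v ↦ ?_⟩⟩
  · calc |L - deriv W (v + ⟪p, x⟫) + σ t x|
        ≤ |L| + |deriv W (v + ⟪p, x⟫)| + |σ t x| :=
          (abs_add_le _ _).trans (by gcongr; exact abs_sub _ _)
      _ ≤ CW + Cσ + |L| := by linarith [hCW (v + ⟪p, x⟫), hCσ t x]
  · have h := hK.dist_le_mul (v' + ⟪p, x⟫) (v + ⟪p, x⟫)
    rw [dist_add_right, Real.dist_eq, Real.dist_eq, abs_sub_comm v'] at h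
    convert h using 2
    simp only [cellReaction]
    ring
  · calc |cellReaction W σ p L t₁ x₁ v - cellReaction W σ p L t₂ x₂ v|
        = |(σ t₁ x₁ - σ t₂ x₂) - (deriv W (v + ⟪p, x₁⟫) - deriv W (v + ⟪p, x₂⟫))| := by
          simp only [cellReaction]
          ring_nf
      _ ≤ B * (|t₁ - t₂| + ‖x₁ - x₂‖) + K * ‖p‖ * ‖x₁ - x₂‖ :=
          (abs_sub _ _).trans
            (add_le_add (hB _ _ _ _) (abs_apply_add_inner_sub_le hK p x₁ x₂ v))
      _ ≤ (K * ‖p‖ + B) * (|t₁ - t₂| + ‖x₁ - x₂‖) := by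
          have : 0 ≤ K * ‖p‖ * |t₁ - t₂| := by positivity
          linarith

lemma isCellPeriodic_cellReaction (hW : H2 W) (hσ : H3 N σ) (p : EN N) (L : ℝ) :
    IsCellPeriodic (cellReaction W σ p L) p where
  value t x v := by rw [cellReaction, add_right_comm, hW.periodic_deriv, cellReaction]
  time t x v := by rw [cellReaction, hσ.2.1, cellReaction]
  space k t x v := by
    have hper : σ t (x + intVec k) = σ t x := hσ.2.2 k t x
    rw [cellReaction, hper, inner_add_right, add_comm ⟪p, x⟫, ← add_assoc, cellReaction]

lemma continuous_cellReaction (hW : H2 W) (hσ : H3 N σ) (t : ℝ) :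
    Continuous fun q : (EN N × ℝ) × EN N × ℝ ↦ cellReaction W σ q.1.1 q.1.2 t q.2.1 q.2.2 := by
  have := hW.continuous_deriv
  have hσt : Continuous (σ t) := hσ.continuous.comp (.prodMk_right t)
  unfold cellReaction
  fun_prop

lemma cellReaction_le_cellReaction (W : ℝ → ℝ) (σ : ℝ → EN N → ℝ) (p : EN N) {L L' : ℝ}
    (h : L ≤ L') (t : ℝ) (x : EN N) (v : ℝ) :
    cellReaction W σ p L t x v ≤ cellReaction W σ p L' t x v := by
  unfold cellReaction
  gcongr

end CellProblem

/-- **Ergodicity (Theorem 1.1).** Under (H1)–(H4), for every `L ∈ ℝ` and `p ∈ ℝ^N` there is a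
unique viscosity solution `w ∈ C_b(ℝ⁺×ℝ^N)` of the cell problem
`∂_τ w = I_s[w(τ,·)] + L − W'(w + p·y) + σ(τ,y)`, `w(0,·) = 0`, and a unique `λ = H̄(p,L)` such
that `w(τ,y)/τ → λ` locally uniformly in `y`; the function `H̄` is continuous and nondecreasing
in `L`. -/
theorem ergodicity
    (N : ℕ) (hN : 1 ≤ N) (s : ℝ) (hs : s ∈ Set.Ioo (0:ℝ) 1)
    (g : EN N → ℝ) (hg : H1 N g)
    (W : ℝ → ℝ) (hW : H2 W)
    (σ : ℝ → EN N → ℝ) (hσ : H3 N σ)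
    (u₀ : EN N → ℝ) (hu₀ : H4 N u₀) :
    ∃ Hbar : EN N → ℝ → ℝ,
      Continuous (fun q : EN N × ℝ => Hbar q.1 q.2) ∧
      (∀ p : EN N, Monotone (Hbar p)) ∧
      ∀ (p : EN N) (L : ℝ),
        (∃ w : ℝ → EN N → ℝ,
          IsSol N s g (cellF N W σ p L) (fun _ => 0) w ∧
          (∀ w' : ℝ → EN N → ℝ, IsSol N s g (cellF N W σ p L) (fun _ => 0) w' →
            ∀ t, 0 ≤ t → ∀ y, w' t y = w t y) ∧
          SlopeLim N w (Hbar p L)) ∧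
        (∀ (w : ℝ → EN N → ℝ) (lam : ℝ),
          IsSol N s g (cellF N W σ p L) (fun _ => 0) w →
          SlopeLim N w lam → lam = Hbar p L) := by
  have hμ := isSymmLevyMeasure_levyMeasure hN hs hg
  obtain ⟨κ, hκpos, hκ⟩ := exists_couplesLargeJumps_levyMeasure hN hs hg N
  obtain ⟨C, K, B, hf⟩ := exists_isReaction_cellReaction hW hσ
  have hp := isCellPeriodic_cellReaction hW hσ
  have hadd (p : EN N) (L : ℝ) := (hf p L).isAlmostAdditive_limitSol (hp p L) hμ hκ hκpos
  simp only [← jumpReaction_cellReaction]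
  refine ⟨fun p L ↦ asymptoticSlope (limitSol (levyMeasure N s g) K (cellReaction W σ p L)),
    ?_, fun p L L' hL ↦ ?_, fun p L ↦ ⟨⟨_, (hf p L).isSol_limitSol hN hs hg, fun w hw t ht y ↦ ?_,
      (hadd p L).slopeLim_asymptoticSlope⟩, fun w lam hw hlam ↦ ?_⟩⟩
  · exact continuous_asymptoticSlope_limitSol (fun q ↦ hf q.1 q.2) (fun q ↦ hp q.1 q.2) hμ hκ hκpos
      (by fun_prop) (by fun_prop) (continuous_cellReaction hW hσ)
  · exact (hadd p L).asymptoticSlope_le_asymptoticSlope (hadd p L') fun l ↦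
      hμ.limitSol_le_limitSol (hf p L) (hf p L') (cellReaction_le_cellReaction W σ p hL)
        l.cast_nonneg 0
  · exact (hf p L).eq_limitSol_of_isSol hN hs hg hw ht y
  · exact hlam.eq_of_eqOn (hadd p L).slopeLim_asymptoticSlope fun t ht y ↦
      (hf p L).eq_limitSol_of_isSol hN hs hg hw ht y
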